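/- arXiv:math/0702749 — 2 statements merged into one kernel-verified Lean document; each statement's English description precedes it below -/
import Mathlib

section
/- Let K be a number field whose ring of integers 𝒪 = 𝓞_K has infinitely many units (i.e. the unit group (𝓞_K)ˣ is infinite). Let T be a simplicial tree and let X be a metric space admitting a quasi-isometry to T. Then every action of SL(2, 𝓞_K) by isometries on X has a bounded orbit; that is, for every such action and every x ∈ X, the set {g·x : g ∈ SL(2,𝓞_K)} is bounded. -/
/-- Gromov product at the identity for a length function. -/
noncomputable def gpr {G : Type*} [Group G] (l : G → ℝ) (g h : G) : ℝ :=
  (l g + l h - l (g⁻¹ * h)) / 2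

/-- A length function which behaves like the orbit length function of an action on a quasi-tree. -/
structure QTLen {G : Type*} [Group G] (l : G → ℝ) (δ C : ℝ) : Prop where
  one : l 1 = 0
  nonneg : ∀ g, 0 ≤ l g
  inv : ∀ g, l g⁻¹ = l g
  mul : ∀ g h, l (g * h) ≤ l g + l h
  hyp : ∀ g h k, min (gpr l g h) (gpr l h k) - δ ≤ gpr l g k
  split : ∀ (L : ℝ) (s : List G), 0 ≤ L → (∀ x ∈ s, l x ≤ L) →
    ∃ s₁ s₂ : List G, s = s₁ ++ s₂ ∧ l s₁.prod ≤ l s.prod / 2 + C + L ∧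
      l s₂.prod ≤ l s.prod / 2 + C + L

namespace QTLen

variable {G : Type*} [Group G] {l : G → ℝ} {δ C : ℝ}

theorem mul3 (H : QTLen l δ C) (a b c : G) : l (a * b * c) ≤ l a + l b + l c := by
  have h1 := H.mul (a * b) c
  have h2 := H.mul a b
  linarith

theorem delta_nonneg (H : QTLen l δ C) : 0 ≤ δ := by
  have := H.hyp 1 1 1
  simp [gpr, H.one] at this
  exact this

/-- Four point inequality. -/
theorem four (H : QTLen l δ C) (g h k : G) :
    l h + l (g⁻¹ * k) ≤ max (l g + l (h⁻¹ * k)) (l k + l (g⁻¹ * h)) + 2 * δ := by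
  have h1 := H.hyp g h k
  unfold gpr at h1
  rcases min_cases ((l g + l h - l (g⁻¹ * h)) / 2) ((l h + l k - l (h⁻¹ * k)) / 2) with h2 | h2
  · rw [h2.1] at h1
    have := le_max_right (l g + l (h⁻¹ * k)) (l k + l (g⁻¹ * h))
    linarith
  · rw [h2.1] at h1
    have := le_max_left (l g + l (h⁻¹ * k)) (l k + l (g⁻¹ * h))
    linarith

/-- If `l (h^2)` is much larger than `l h`, then the length of the powers grows linearly. -/
theorem lox (H : QTLen l δ C) (h : G) (hh : l h + 2 * δ + 1 ≤ l (h ^ 2)) (n : ℕ) :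
    (n : ℝ) ≤ l (h ^ (n + 1)) ∧ l (h ^ n) + 1 ≤ l (h ^ (n + 1)) + (if n = 0 then 1 else 0) := by
  induction n with
  | zero => simp [H.one, H.nonneg]
  | succ n ih =>
    have key := H.four h (h ^ 2) (h ^ (n + 2))
    have e1 : h⁻¹ * h ^ (n + 2) = h ^ (n + 1) := by rw [pow_succ' h (n + 1)]; group
    have e2 : (h ^ 2)⁻¹ * h ^ (n + 2) = h ^ n := by rw [add_comm, pow_add]; group
    have e3 : h⁻¹ * h ^ 2 = h := by rw [pow_two]; group
    rw [e1, e2, e3] at key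
    have hd := H.delta_nonneg
    have main : l (h ^ (n + 1)) + 1 ≤ l (h ^ (n + 1 + 1)) := by
      rcases Nat.eq_zero_or_pos n with rfl | hn
      · simp only [zero_add, pow_one]
        have : (0:ℕ) + 1 + 1 = 2 := rfl
        norm_num
        linarith
      · have hn' : n ≠ 0 := by omega
        simp only [hn', if_false, add_zero] at ih
        rcases max_cases (l h + l (h ^ n)) (l (h ^ (n + 2)) + l h) with h2 | h2
        · rw [h2.1] at key; linarith [ih.2]
        · rw [h2.1] at key
          have : n + 1 + 1 = n + 2 := rfl
          rw [this]; linarith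
    refine ⟨by push_cast; linarith [ih.1], by simpa using main⟩

/-- Non-loxodromic elements. -/
theorem sq_le (H : QTLen l δ C) (h : G) (hh : ∃ n : ℕ, l (h ^ (n + 1)) < n) :
    l (h ^ 2) ≤ l h + (2 * δ + 1) := by
  by_contra hc
  push Not at hc
  obtain ⟨n, hn⟩ := hh
  have := (H.lox h (by linarith) n).1
  linarith

/-- Coarse version of Serre's lemma on groups generated by elliptic elements. -/
theorem serre (H : QTLen l δ C) (S : Set G) (L c : ℝ) (hS : ∀ s ∈ S, l s ≤ L)
    (hsq : ∀ h ∈ Subgroup.closure S, l (h ^ 2) ≤ l h + c) :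
    ∃ B : ℝ, ∀ h ∈ Subgroup.closure S, l h ≤ B := by
  have hd := H.delta_nonneg
  refine ⟨8 * (|C + abs L| + 4 * δ) + 2 * |c| + 8, fun h hh => ?_⟩
  have hlist : ∃ s : List G, (∀ x ∈ s, x ∈ S ∨ x⁻¹ ∈ S) ∧ s.prod = h := by
    have hh' : h ∈ (Subgroup.closure S).toSubmonoid := hh
    rw [Subgroup.closure_toSubmonoid] at hh'
    obtain ⟨s, hs, rfl⟩ := Submonoid.exists_list_of_mem_closure hh'
    exact ⟨s, fun x hx => by simpa using hs x hx, rfl⟩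
  obtain ⟨s, hs, rfl⟩ := hlist
  obtain ⟨s₁, s₂, rfl, h1, h2⟩ := H.split (abs L) s (abs_nonneg L) (fun x hx => (show l x ≤ L by
    rcases hs x hx with h | h
    · exact hS x h
    · rw [← H.inv]; exact hS _ h).trans (le_abs_self L))
  have m1 : s₁.prod ∈ Subgroup.closure S := by
    refine Subgroup.list_prod_mem _ fun x hx => ?_
    rcases hs x (by simp [hx]) with h | h
    · exact Subgroup.subset_closure h
    · exact (Subgroup.inv_mem_iff _).1 (Subgroup.subset_closure h)
  have m2 : s₂.prod ∈ Subgroup.closure S := by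
    refine Subgroup.list_prod_mem _ fun x hx => ?_
    rcases hs x (by simp [hx]) with h | h
    · exact Subgroup.subset_closure h
    · exact (Subgroup.inv_mem_iff _).1 (Subgroup.subset_closure h)
  rw [List.prod_append] at *
  set k := s₁.prod
  set k' := s₂.prod
  set M := l (k * k') with hM
  have q1 := hsq k m1
  have q2 := hsq k' m2
  have q3 := hsq _ hh
  have t1 := H.mul k k'
  set E := |C + abs L| with hE
  have hE0 : C + abs L ≤ E := le_abs_self _
  have hc0 : c ≤ |c| := le_abs_self _
  have hE1 : 0 ≤ E := abs_nonneg _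
  have hc1 : 0 ≤ |c| := abs_nonneg _
  by_contra hcon
  push Not at hcon
  -- Gromov products
  have g1 : gpr l k⁻¹ k' = (l k + l k' - M) / 2 := by simp [gpr, H.inv, hM]
  have g2 : gpr l k⁻¹ k = (2 * l k - l (k ^ 2)) / 2 := by
    simp [gpr, H.inv, pow_two]; ring
  have g3 : gpr l k'⁻¹ k' = (2 * l k' - l (k' ^ 2)) / 2 := by
    simp [gpr, H.inv, pow_two]; ring
  have g4 : gpr l k (k * k') = (l k + M - l k') / 2 := by
    simp [gpr, hM]
  have g5 : gpr l (k * k')⁻¹ k'⁻¹ = (M + l k' - l k) / 2 := by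
    have : ((k * k')⁻¹)⁻¹ * k'⁻¹ = k := by group
    rw [gpr, this, H.inv, H.inv]
  have g6 : gpr l (k * k') (k * k')⁻¹ = (2 * M - l ((k * k') ^ 2)) / 2 := by
    have : (k * k')⁻¹ * (k * k')⁻¹ = ((k * k') ^ 2)⁻¹ := by rw [pow_two]; group
    rw [gpr, this, H.inv, H.inv]; ring
  have symm : ∀ a b : G, gpr l a b = gpr l b a := by
    intro a b
    have : l (a⁻¹ * b) = l (b⁻¹ * a) := by rw [← H.inv]; congr 1; group
    rw [gpr, gpr, this]; ring
  -- (k | k') small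
  have a1 : gpr l k k' ≤ E + δ := by
    have := H.hyp k⁻¹ k k'
    by_contra hh'
    push Not at hh'
    have : E + δ < min (gpr l k⁻¹ k) (gpr l k k') := by
      refine lt_min ?_ hh'
      rw [g2]; linarith
    rw [g1] at *
    linarith
  have a2 : gpr l k k'⁻¹ ≤ E + 2 * δ := by
    have := H.hyp k k'⁻¹ k'
    by_contra hh'
    push Not at hh'
    have : E + 2 * δ < min (gpr l k k'⁻¹) (gpr l k'⁻¹ k') := by
      refine lt_min hh' ?_
      rw [g3]; linarith
    linarith
  have a3 : gpr l k (k * k')⁻¹ ≤ E + 3 * δ := by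
    have := H.hyp k (k * k')⁻¹ k'⁻¹
    by_contra hh'
    push Not at hh'
    have : E + 3 * δ < min (gpr l k (k * k')⁻¹) (gpr l (k * k')⁻¹ k'⁻¹) := by
      refine lt_min hh' ?_
      rw [g5]; linarith
    linarith
  have a4 : gpr l (k * k') (k * k')⁻¹ ≤ E + 4 * δ := by
    have := H.hyp k (k * k') (k * k')⁻¹
    by_contra hh'
    push Not at hh'
    have : E + 4 * δ < min (gpr l k (k * k')) (gpr l (k * k') (k * k')⁻¹) := by
      refine lt_min ?_ hh'
      rw [g4]; linarith
    linarith
  rw [g6] at a4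
  linarith

theorem subadd (H : QTLen l δ C) (h : G) : Subadditive fun n => l (h ^ n) := by
  intro m n
  simp only [pow_add]
  exact H.mul _ _

/-- Translation length. -/
noncomputable def tau (H : QTLen l δ C) (h : G) : ℝ := (H.subadd h).lim

theorem tau_tendsto (H : QTLen l δ C) (h : G) :
    Filter.Tendsto (fun n : ℕ => l (h ^ n) / n) Filter.atTop (nhds (H.tau h)) := by
  refine (H.subadd h).tendsto_lim ⟨0, ?_⟩
  rintro _ ⟨n, rfl⟩
  have := H.nonneg (h ^ n)
  positivity

theorem tau_nonneg (H : QTLen l δ C) (h : G) : 0 ≤ H.tau h := by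
  refine ge_of_tendsto' (H.tau_tendsto h) fun n => ?_
  have := H.nonneg (h ^ n)
  positivity

theorem tau_mul (H : QTLen l δ C) {u v : G} (huv : Commute u v) :
    H.tau (u * v) ≤ H.tau u + H.tau v := by
  refine le_of_tendsto_of_tendsto' (H.tau_tendsto (u * v))
    ((H.tau_tendsto u).add (H.tau_tendsto v)) fun n => ?_
  rw [← add_div, huv.mul_pow]
  gcongr
  exact H.mul _ _

theorem tau_inv (H : QTLen l δ C) (u : G) : H.tau u⁻¹ = H.tau u := by
  refine tendsto_nhds_unique (H.tau_tendsto u⁻¹) ?_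
  have := H.tau_tendsto u
  simpa [inv_pow, H.inv] using this

theorem tau_conj_le (H : QTLen l δ C) (g u : G) : H.tau (g * u * g⁻¹) ≤ H.tau u := by
  have h0 : Filter.Tendsto (fun n : ℕ => 2 * l g / n) Filter.atTop (nhds 0) :=
    tendsto_const_div_atTop_nhds_zero_nat _
  have h1 := h0.add (H.tau_tendsto u)
  rw [zero_add] at h1
  refine le_of_tendsto_of_tendsto' (H.tau_tendsto _) h1 fun n => ?_
  rw [← add_div, conj_pow]
  gcongr
  have := H.mul3 g (u ^ n) g⁻¹
  rw [H.inv] at this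
  linarith

theorem tau_conj (H : QTLen l δ C) (g u : G) : H.tau (g * u * g⁻¹) = H.tau u := by
  refine le_antisymm (H.tau_conj_le g u) ?_
  have := H.tau_conj_le g⁻¹ (g * u * g⁻¹)
  have e : g⁻¹ * (g * u * g⁻¹) * g⁻¹⁻¹ = u := by group
  rwa [e] at this

theorem tau_pow (H : QTLen l δ C) (u : G) {m : ℕ} (hm : m ≠ 0) :
    H.tau (u ^ m) = m * H.tau u := by
  refine tendsto_nhds_unique (H.tau_tendsto _) ?_
  have h1 := (H.tau_tendsto u).comp
    (Filter.tendsto_id.const_mul_atTop' (Nat.pos_of_ne_zero hm) : Filter.Tendsto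
      (fun n : ℕ => m * n) Filter.atTop Filter.atTop)
  have h2 := h1.const_mul (m : ℝ)
  refine h2.congr fun n => ?_
  simp only [Function.comp, pow_mul]
  push_cast
  have : (m : ℝ) ≠ 0 := by exact_mod_cast hm
  rcases eq_or_ne (n : ℝ) 0 with h | h
  · simp [h]
  · field_simp

theorem tau_four (H : QTLen l δ C) {u v : G} (huv : Commute u v) :
    H.tau (u * v) + H.tau (u⁻¹ * v) ≤ 2 * max (H.tau u) (H.tau v) := by
  have h0 : Filter.Tendsto (fun n : ℕ => 2 * δ / n) Filter.atTop (nhds 0) :=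
    tendsto_const_div_atTop_nhds_zero_nat _
  have h1 := (((H.tau_tendsto u).max (H.tau_tendsto v)).const_mul 2).add h0
  rw [add_zero] at h1
  refine le_of_tendsto_of_tendsto' ((H.tau_tendsto (u * v)).add (H.tau_tendsto (u⁻¹ * v)))
    h1 fun n => ?_
  have key := H.four (u ^ n) (u ^ n * v ^ n) (v ^ n)
  have c : Commute (u ^ n) (v ^ n) := huv.pow_pow n n
  have e1 : (u ^ n * v ^ n)⁻¹ * v ^ n = (u ^ n)⁻¹ := by rw [c.eq]; group
  have e2 : (u ^ n)⁻¹ * (u ^ n * v ^ n) = v ^ n := by group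
  rw [e1, e2, H.inv] at key
  rw [huv.mul_pow, huv.inv_left.mul_pow, inv_pow, ← add_div,
    max_div_div_right (by positivity : (0 : ℝ) ≤ n), mul_div_assoc', ← add_div]
  refine div_le_div_of_nonneg_right ?_ (by positivity)
  refine key.trans ?_
  gcongr
  refine max_le ?_ ?_
  · linarith [le_max_left (l (u ^ n)) (l (v ^ n))]
  · linarith [le_max_right (l (u ^ n)) (l (v ^ n))]

theorem tau_alt (H : QTLen l δ C) {u v : G} (huv : Commute u v) (ht : H.tau u = H.tau v) :
    H.tau (u * v) = 0 ∨ H.tau (u⁻¹ * v) = 0 := by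
  have h1 := H.tau_four huv
  have hc : Commute (u * v) (u⁻¹ * v) := by
    have a : Commute u (u⁻¹ * v) := (Commute.refl u).inv_right.mul_right huv
    have b : Commute v (u⁻¹ * v) := huv.symm.inv_right.mul_right (Commute.refl v)
    exact a.mul_left b
  have h2 := H.tau_four hc
  have e1 : u * v * (u⁻¹ * v) = v ^ 2 := by
    rw [huv.eq, pow_two]; group
  have e2 : (u * v)⁻¹ * (u⁻¹ * v) = (u ^ 2)⁻¹ := by
    have : u⁻¹ * v = v * u⁻¹ := huv.inv_left.eq
    rw [huv.eq, this, pow_two]; group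
  rw [e1, e2, H.tau_inv, H.tau_pow _ two_ne_zero, H.tau_pow _ two_ne_zero] at h2
  rw [ht, max_self] at h1
  rw [ht] at h2
  have p1 := H.tau_nonneg (u * v)
  have p2 := H.tau_nonneg (u⁻¹ * v)
  push_cast at h2
  rcases max_cases (H.tau (u * v)) (H.tau (u⁻¹ * v)) with h | h
  · right; linarith
  · left; linarith

theorem sq_le_of_tau (H : QTLen l δ C) {h : G} (hh : H.tau h = 0) :
    l (h ^ 2) ≤ l h + (2 * δ + 1) := by
  refine H.sq_le h ?_
  have h1 := H.tau_tendsto h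
  rw [hh] at h1
  have h2 := (h1.eventually (gt_mem_nhds (show (0 : ℝ) < 1 / 2 by norm_num))).and
    (Filter.eventually_ge_atTop 2)
  obtain ⟨n, h3, h4⟩ := h2.exists
  obtain ⟨k, rfl⟩ : ∃ k, n = k + 1 := ⟨n - 1, by omega⟩
  refine ⟨k, ?_⟩
  have hk : (1 : ℝ) ≤ k := by exact_mod_cast (by omega : 1 ≤ k)
  rw [div_lt_iff₀ (by positivity)] at h3
  push_cast at h3
  linarith

/-- Vanishing of the translation length on a unipotent subgroup normalised by a large unit. -/
theorem tau_unip (H : QTLen l δ C) {O : Type*} [CommRing O] (e : O → G)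
    (he : ∀ x y, e (x + y) = e x * e y) (h : G) (η : O) (hη : ∀ x, h * e x * h⁻¹ = e (η * x))
    (m : ℕ) (hm : m ≠ 0) (hd : η ^ 2 - 1 ∣ (m : O)) (x : O) : H.tau (e x) = 0 := by
  have e0 : e 0 = 1 := by
    have := he 0 0
    rw [add_zero] at this
    exact (mul_eq_left.1 this.symm)
  have eneg : ∀ x, e (-x) = (e x)⁻¹ := by
    intro x
    rw [eq_inv_iff_mul_eq_one, ← he, neg_add_cancel, e0]
  have hcomm : ∀ x y, Commute (e x) (e y) := by
    intro x y
    rw [Commute, SemiconjBy, ← he, ← he, add_comm]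
  have epow : ∀ (k : ℕ) (x : O), e ((k : O) * x) = e x ^ k := by
    intro k x
    induction k with
    | zero => simp [e0]
    | succ k ih => rw [pow_succ, ← ih, ← he]; congr 1; push_cast; ring
  have conj : ∀ x, H.tau (e (η * x)) = H.tau (e x) := by
    intro x; rw [← hη, H.tau_conj]
  have hadd : ∀ x y, H.tau (e x) = 0 → H.tau (e y) = 0 → H.tau (e (x + y)) = 0 := by
    intro x y hx hy
    refine le_antisymm ?_ (H.tau_nonneg _)
    rw [he]
    refine (H.tau_mul (hcomm x y)).trans ?_
    rw [hx, hy, add_zero]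
  have hneg : ∀ x, H.tau (e x) = 0 → H.tau (e (-x)) = 0 := by
    intro x hx; rw [eneg, H.tau_inv, hx]
  have key : ∀ x, H.tau (e ((η ^ 2 - 1) * x)) = 0 := by
    intro x
    rcases H.tau_alt (hcomm x (η * x)) (conj x).symm with h1 | h1
    · rw [← he] at h1
      have := hadd _ _ (by rw [conj, h1] : H.tau (e (η * (x + η * x))) = 0) (hneg _ h1)
      convert this using 3; ring
    · rw [← eneg, ← he] at h1
      have := hadd _ _ (by rw [conj, h1] : H.tau (e (η * (-x + η * x))) = 0) h1
      convert this using 3; ring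
  obtain ⟨y, hy⟩ := hd
  have h1 := key (y * x)
  rw [← mul_assoc, ← hy, epow, H.tau_pow _ hm] at h1
  have : (m : ℝ) ≠ 0 := by exact_mod_cast hm
  exact (mul_eq_zero.1 h1).resolve_left this

end QTLen


namespace QTree

variable {V : Type*} {T : SimpleGraph V}

/-- `c` lies on a geodesic from `a` to `b`. -/
def Bt (T : SimpleGraph V) (a c b : V) : Prop := T.dist a c + T.dist c b = T.dist a b

theorem bt_of_mem (hT : T.Connected) {a b c : V} (p : T.Walk a b) (hp : p.length = T.dist a b)
    (hc : c ∈ p.support) : Bt T a c b := by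
  classical
  have h1 := SimpleGraph.dist_le (p.takeUntil c hc)
  have h2 := SimpleGraph.dist_le (p.dropUntil c hc)
  have h3 : (p.takeUntil c hc).length + (p.dropUntil c hc).length = p.length := by
    conv_rhs => rw [← p.take_spec hc]
    rw [SimpleGraph.Walk.length_append]
  have h4 := hT.dist_triangle (u := a) (v := c) (w := b)
  unfold Bt
  omega

theorem tripod (hT : T.IsTree) {a b c : V} (h : Bt T a c b) (o : V) : Bt T a c o ∨ Bt T o c b := by
  classical
  have hc := hT.connected
  obtain ⟨p, hp⟩ := hc.exists_walk_length_eq_dist a o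
  obtain ⟨r, hr⟩ := hc.exists_walk_length_eq_dist o b
  obtain ⟨p1, hp1⟩ := hc.exists_walk_length_eq_dist a c
  obtain ⟨p2, hp2⟩ := hc.exists_walk_length_eq_dist c b
  have h1 : (p1.append p2).IsPath := by
    apply SimpleGraph.Walk.isPath_of_length_eq_dist
    rw [SimpleGraph.Walk.length_append, hp1, hp2]; exact h
  have h2 : (p.append r).bypass.IsPath := SimpleGraph.Walk.bypass_isPath _
  have h3 : p1.append p2 = (p.append r).bypass := by
    have := (hT.isAcyclic.subsingleton_path _ _).elim ⟨_, h1⟩ ⟨_, h2⟩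
    exact congrArg Subtype.val this
  have h4 : c ∈ (p1.append p2).support := by
    rw [SimpleGraph.Walk.mem_support_append_iff]; left; simp
  rw [h3] at h4
  have h5 := SimpleGraph.Walk.support_bypass_subset_support _ h4
  rw [SimpleGraph.Walk.mem_support_append_iff] at h5
  rcases h5 with h5 | h5
  · exact Or.inl (bt_of_mem hc p hp h5)
  · exact Or.inr (bt_of_mem hc r hr h5)

theorem chain (hT : T.IsTree) (f : ℕ → V) (c : V) (n : ℕ) (h : Bt T (f 0) c (f (n + 1))) :
    ∃ i ≤ n, Bt T (f i) c (f (i + 1)) := by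
  induction n with
  | zero => exact ⟨0, le_rfl, h⟩
  | succ n ih =>
    rcases tripod hT h (f (n + 1)) with h1 | h1
    · obtain ⟨i, hi, h2⟩ := ih h1
      exact ⟨i, by omega, h2⟩
    · exact ⟨n + 1, le_rfl, h1⟩

theorem median (hT : T.IsTree) (a b o : V) :
    ∃ c c' : V, Bt T a c b ∧ Bt T a c o ∧ Bt T o c' b ∧ T.dist c c' ≤ 1 := by
  classical
  have hc := hT.connected
  obtain ⟨p, hp⟩ := hc.exists_walk_length_eq_dist a b
  have hb : ∀ i, Bt T a (p.getVert i) b := fun i =>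
    bt_of_mem hc p hp (SimpleGraph.Walk.getVert_mem_support p i)
  by_cases hall : Bt T a b o
  · exact ⟨b, b, by simp [Bt], hall, by simp [Bt], by simp⟩
  · have hex : ∃ i, ¬ Bt T a (p.getVert i) o := ⟨p.length, by simpa using hall⟩
    obtain ⟨j, hj⟩ : ∃ j, Nat.find hex = j + 1 := by
      refine Nat.exists_eq_succ_of_ne_zero fun h0 => ?_
      have := Nat.find_spec hex
      rw [h0] at this
      simp [Bt] at this
    have h1 := Nat.find_spec hex
    rw [hj] at h1
    have h2 : Bt T a (p.getVert j) o := by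
      by_contra h
      have := Nat.find_min' hex h
      omega
    have h3 : j + 1 ≤ p.length := by
      rw [← hj]; exact Nat.find_min' hex (by simpa using hall)
    refine ⟨p.getVert j, p.getVert (j + 1), hb j, h2, (tripod hT (hb (j + 1)) o).resolve_left h1, ?_⟩
    have := p.adj_getVert_succ (i := j) (by omega)
    exact (SimpleGraph.dist_eq_one_iff_adj.2 this).le

/-- A graph coarsely embedded in a tree. -/
structure QG {X : Type*} (Γ : SimpleGraph X) (T : SimpleGraph V) (q : X → V) (lam : ℕ) : Prop where
  tree : T.IsTree
  conn : Γ.Connected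
  adj : ∀ a b, Γ.Adj a b → T.dist (q a) (q b) ≤ lam
  low : ∀ a b, Γ.dist a b ≤ T.dist (q a) (q b) + 1

variable {X : Type*} {Γ : SimpleGraph X} {q : X → V} {lam : ℕ}

theorem QG.chainpt (H : QG Γ T q lam) {a b : X} {c : V} (h : Bt T (q a) c (q b)) :
    ∃ z, Bt Γ a z b ∧ T.dist (q z) c ≤ lam := by
  obtain ⟨p, hp⟩ := H.conn.exists_walk_length_eq_dist a b
  rcases Nat.eq_zero_or_pos p.length with h0 | h0
  · have hab : a = b := SimpleGraph.Walk.eq_of_length_eq_zero h0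
    subst hab
    refine ⟨a, by simp [Bt], ?_⟩
    simp only [Bt, SimpleGraph.dist_self] at h
    omega
  · obtain ⟨n, hn⟩ : ∃ n, p.length = n + 1 := ⟨p.length - 1, by omega⟩
    obtain ⟨i, hi, h1⟩ := chain H.tree (fun i => q (p.getVert i)) c n (by
      rw [← hn]; simpa using h)
    refine ⟨p.getVert i, bt_of_mem H.conn p hp (SimpleGraph.Walk.getVert_mem_support p i), ?_⟩
    have h2 := H.adj _ _ (p.adj_getVert_succ (i := i) (by omega))
    unfold Bt at h1
    omega

/-- Gromov product (doubled) in the graph. -/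
theorem QG.qtc (H : QG Γ T q lam) (o : X) (f : ℕ → X) (n : ℕ) :
    ∃ i ≤ n, (Γ.dist o (f i) : ℝ) + Γ.dist o (f (i + 1)) - Γ.dist (f i) (f (i + 1)) ≤
      Γ.dist o (f 0) + Γ.dist o (f (n + 1)) - Γ.dist (f 0) (f (n + 1)) + (8 * lam + 12) := by
  obtain ⟨c, c', m1, m2, m3, m4⟩ := median H.tree (q (f 0)) (q (f (n + 1))) (q o)
  obtain ⟨z1, a1, b1⟩ := H.chainpt m1
  obtain ⟨z2, a2, b2⟩ := H.chainpt m2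
  obtain ⟨z3, a3, b3⟩ := H.chainpt m3
  obtain ⟨i, hi, m⟩ := chain H.tree (fun i => q (f i)) c n m1
  obtain ⟨z, a, b⟩ := H.chainpt m
  refine ⟨i, hi, ?_⟩
  have hc := H.conn
  have ht := H.tree.connected
  have b3' : T.dist (q z3) c ≤ lam + 1 := by
    have := ht.dist_triangle (u := q z3) (v := c') (w := c)
    rw [SimpleGraph.dist_comm (u := c')] at this
    omega
  have close : ∀ x y, T.dist (q x) c ≤ lam + 1 → T.dist (q y) c ≤ lam + 1 →
      Γ.dist x y ≤ 2 * lam + 3 := by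
    intro x y hx hy
    have h1 := H.low x y
    have h2 := ht.dist_triangle (u := q x) (v := c) (w := q y)
    rw [SimpleGraph.dist_comm (u := c)] at h2
    omega
  have k1 := close z z2 (by omega) (by omega)
  have k2 := close z z3 (by omega) (by omega)
  have k3 := close z1 z2 (by omega) (by omega)
  have k4 := close z1 z3 (by omega) (by omega)
  unfold Bt at a a1 a2 a3
  have t1 := hc.dist_triangle (u := o) (v := z) (w := f i)
  have t2 := hc.dist_triangle (u := o) (v := z) (w := f (i + 1))
  have t3 := hc.dist_triangle (u := o) (v := z2) (w := z)
  have t4 := hc.dist_triangle (u := o) (v := z3) (w := z)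
  have t5 := hc.dist_triangle (u := f 0) (v := z2) (w := z1)
  have t6 := hc.dist_triangle (u := z1) (v := z3) (w := f (n + 1))
  rw [SimpleGraph.dist_comm (u := z) (v := f i)] at t1
  rw [SimpleGraph.dist_comm (u := z2) (v := z)] at t3
  rw [SimpleGraph.dist_comm (u := z3) (v := z)] at t4
  rw [SimpleGraph.dist_comm (u := z2) (v := z1)] at t5
  rw [SimpleGraph.dist_comm (u := z2) (v := o), SimpleGraph.dist_comm (u := f 0) (v := o)] at a2
  zify at *
  have goal : (Γ.dist o (f i) : ℤ) + Γ.dist o (f (i + 1)) - Γ.dist (f i) (f (i + 1)) ≤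
      Γ.dist o (f 0) + Γ.dist o (f (n + 1)) - Γ.dist (f 0) (f (n + 1)) + (8 * lam + 12) := by
    linarith
  exact_mod_cast goal

theorem QG.qtlen (H : QG Γ T q lam) {G : Type*} [Group G] (act : G → X → X) (x : X)
    (act1 : act 1 x = x) (actm : ∀ g h, act (g * h) x = act g (act h x))
    (iso : ∀ g a b, Γ.dist (act g a) (act g b) = Γ.dist a b) :
    QTLen (fun g => (Γ.dist x (act g x) : ℝ)) (4 * lam + 6) (8 * lam + 13) := by
  have hc := H.conn
  have dgh : ∀ g h, Γ.dist x (act (g⁻¹ * h) x) = Γ.dist (act g x) (act h x) := by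
    intro g h
    rw [← iso g, ← actm]; simp
  refine ⟨by simp [act1], fun g => by positivity, fun g => ?_, fun g h => ?_, fun g h k => ?_, ?_⟩
  · have := dgh g 1
    simp only [mul_one, act1] at this
    rw [this, SimpleGraph.dist_comm]
  · have h1 := hc.dist_triangle (u := x) (v := act g x) (w := act (g * h) x)
    rw [actm g h, iso] at h1
    rw [actm g h]
    exact_mod_cast h1
  · obtain ⟨i, hi, h1⟩ := H.qtc x (fun i => if i = 0 then act g x else if i = 1 then act h x else
      act k x) 1
    simp only [gpr, dgh]
    interval_cases i
    · simp only [if_true, zero_add, one_ne_zero, if_false, Nat.reduceAdd, OfNat.ofNat_ne_zero,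
        OfNat.ofNat_ne_one] at h1
      refine le_trans (sub_le_sub_right (min_le_left _ _) _) ?_
      linarith
    · simp only [if_true, one_ne_zero, if_false, Nat.reduceAdd, OfNat.ofNat_ne_zero,
        OfNat.ofNat_ne_one] at h1
      refine le_trans (sub_le_sub_right (min_le_right _ _) _) ?_
      linarith
  · intro L s hL hs
    rcases s.eq_nil_or_concat with rfl | ⟨s', y, hsy⟩
    · refine ⟨[], [], rfl, ?_, ?_⟩ <;> simp [act1] <;> positivity
    obtain ⟨n, hn⟩ : ∃ n, s.length = n + 1 := ⟨s'.length, by rw [hsy]; simp⟩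
    clear hsy
    set h := s.prod with hh
    obtain ⟨p, hp⟩ := hc.exists_walk_length_eq_dist x (act h x)
    set m := p.getVert (p.length / 2) with hm
    have bm : Bt Γ x m (act h x) := bt_of_mem hc p hp (SimpleGraph.Walk.getVert_mem_support p _)
    have d1 : Γ.dist x m ≤ p.length / 2 := by
      have := SimpleGraph.dist_le (p.take (p.length / 2))
      rw [SimpleGraph.Walk.take_length] at this
      exact this.trans (min_le_left _ _)
    have d2 : Γ.dist m (act h x) ≤ p.length - p.length / 2 := by
      have := SimpleGraph.dist_le (p.drop (p.length / 2))
      rwa [SimpleGraph.Walk.drop_length] at this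
    obtain ⟨i, hi, h1⟩ := H.qtc m (fun i => act (s.take i).prod x) n
    have hil : i < s.length := by omega
    have e1 : (s.take (i + 1)).prod = (s.take i).prod * s[i] := by
      rw [List.prod_take_succ _ _ hil]
    have e2 : Γ.dist (act (s.take i).prod x) (act (s.take (i + 1)).prod x)
        = Γ.dist x (act s[i] x) := by
      rw [e1, actm, iso]
    have e3 := hs s[i] (List.getElem_mem hil)
    have e4 : s.take (n + 1) = s := by rw [← hn]; simp
    simp only [e2, e4, List.take_zero, List.prod_nil, act1, ← hh] at h1
    have t := hc.dist_triangle (u := m) (v := act (s.take (i + 1)).prod x)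
      (w := act (s.take i).prod x)
    rw [SimpleGraph.dist_comm (u := act (s.take (i + 1)).prod x), e2] at t
    unfold Bt at bm
    have d3 : (Γ.dist x m : ℝ) ≤ (Γ.dist x (act h x) : ℝ) / 2 + 1 / 2 := by
      have : 2 * Γ.dist x m ≤ Γ.dist x (act h x) + 1 := by omega
      have : 2 * (Γ.dist x m : ℝ) ≤ Γ.dist x (act h x) + 1 := by exact_mod_cast this
      linarith
    have d4 : (Γ.dist m (act h x) : ℝ) ≤ (Γ.dist x (act h x) : ℝ) / 2 + 1 / 2 := by
      have : 2 * Γ.dist m (act h x) ≤ Γ.dist x (act h x) + 1 := by omega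
      have : 2 * (Γ.dist m (act h x) : ℝ) ≤ Γ.dist x (act h x) + 1 := by exact_mod_cast this
      linarith
    have bm' : (Γ.dist x m : ℝ) + Γ.dist m (act h x) = Γ.dist x (act h x) := by exact_mod_cast bm
    have t' : (Γ.dist m (act (s.take i).prod x) : ℝ) ≤
      Γ.dist m (act (s.take (i + 1)).prod x) + Γ.dist x (act s[i] x) := by exact_mod_cast t
    rw [SimpleGraph.dist_comm (u := m) (v := x)] at h1
    have d5 : (Γ.dist m (act (s.take i).prod x) : ℝ) ≤ L + (4 * lam + 6) := by linarith
    have hl : (0 : ℝ) ≤ lam := by positivity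
    refine ⟨s.take i, s.drop i, (List.take_append_drop i s).symm, ?_, ?_⟩
    · have t2 := hc.dist_triangle (u := x) (v := m) (w := act (s.take i).prod x)
      have t2' : (Γ.dist x (act (s.take i).prod x) : ℝ) ≤ Γ.dist x m +
        Γ.dist m (act (s.take i).prod x) := by exact_mod_cast t2
      linarith
    · have e5 : (s.drop i).prod = (s.take i).prod⁻¹ * h := by
        rw [hh, ← List.prod_take_mul_prod_drop s i]; group
      rw [e5, dgh]
      have t2 := hc.dist_triangle (u := act (s.take i).prod x) (v := m) (w := act h x)
      rw [SimpleGraph.dist_comm (u := act (s.take i).prod x) (v := m)] at t2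
      have t2' : (Γ.dist (act (s.take i).prod x) (act h x) : ℝ) ≤ 
        Γ.dist m (act (s.take i).prod x) + Γ.dist m (act h x) := by exact_mod_cast t2
      linarith

/-- The coarse graph on a metric space. -/
def cgraph (X : Type*) [MetricSpace X] (r : ℝ) : SimpleGraph X where
  Adj a b := a ≠ b ∧ dist a b ≤ r
  symm := ⟨fun a b h => ⟨h.1.symm, by rw [dist_comm]; exact h.2⟩⟩
  loopless := ⟨fun a h => h.1 rfl⟩

theorem cgraph_dist {X : Type*} [MetricSpace X] {r : ℝ} (hc : (cgraph X r).Connected) (a b : X) :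
    dist a b ≤ r * (cgraph X r).dist a b := by
  obtain ⟨p, hp⟩ := hc.exists_walk_length_eq_dist a b
  rw [← hp]
  clear hp
  induction p with
  | nil => simp
  | cons h p ih =>
    rw [SimpleGraph.Walk.length_cons]
    push_cast
    have := dist_triangle _ _ _ |>.trans (add_le_add h.2 ih)
    linarith

theorem cgraph_iso {X : Type*} [MetricSpace X] {r : ℝ} (hc : (cgraph X r).Connected) (f : X ≃ᵢ X)
    (a b : X) : (cgraph X r).dist (f a) (f b) = (cgraph X r).dist a b := by
  have key : ∀ (f : X ≃ᵢ X) (a b : X), (cgraph X r).dist (f a) (f b) ≤ (cgraph X r).dist a b := by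
    intro f a b
    obtain ⟨p, hp⟩ := hc.exists_walk_length_eq_dist a b
    let φ : cgraph X r →g cgraph X r :=
      ⟨f, fun {a b} h => ⟨fun h' => h.1 (f.injective h'), by rw [f.dist_eq]; exact h.2⟩⟩
    have := SimpleGraph.dist_le (p.map φ)
    rw [SimpleGraph.Walk.length_map, hp] at this
    exact this
  refine le_antisymm (key f a b) ?_
  have := key f.symm (f a) (f b)
  simpa using this

theorem cgraph_qg {X : Type*} [MetricSpace X] [Nonempty X] {T : SimpleGraph V} (hT : T.IsTree)
    (q : X → V) (Kq Cq : ℝ) (hKq : 1 ≤ Kq) (hCq : 0 ≤ Cq)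
    (hqi_lower : ∀ x₁ x₂ : X, dist x₁ x₂ / Kq - Cq ≤ (T.dist (q x₁) (q x₂) : ℝ))
    (hqi_upper : ∀ x₁ x₂ : X, (T.dist (q x₁) (q x₂) : ℝ) ≤ Kq * dist x₁ x₂ + Cq)
    (hdense : ∀ v : V, ∃ x : X, (T.dist v (q x) : ℝ) ≤ Cq) :
    ∃ (r : ℝ) (lam : ℕ), QG (cgraph X r) T q lam := by
  set r := Kq * (3 * Cq + 1) with hr
  have step : ∀ a b : X, (T.dist (q a) (q b) : ℝ) ≤ 2 * Cq + 1 → dist a b ≤ r := by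
    intro a b h
    have h1 := hqi_lower a b
    have h2 : dist a b / Kq ≤ 3 * Cq + 1 := by linarith
    rw [div_le_iff₀ (by linarith)] at h2
    linarith
  have stepw : ∀ a b : X, (T.dist (q a) (q b) : ℝ) ≤ 2 * Cq + 1 →
      ∃ p : (cgraph X r).Walk a b, p.length ≤ 1 := by
    intro a b h
    by_cases hab : a = b
    · subst hab; exact ⟨SimpleGraph.Walk.nil, by simp⟩
    · exact ⟨SimpleGraph.Walk.cons (show (cgraph X r).Adj a b from ⟨hab, step a b h⟩)
        SimpleGraph.Walk.nil, by simp⟩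
  have ht := hT.connected
  have main : ∀ (n : ℕ) (a : X) (v : V), T.dist (q a) v = n → ∀ b : X, (T.dist v (q b) : ℝ) ≤ Cq →
      ∃ p : (cgraph X r).Walk a b, p.length ≤ n + 1 := by
    intro n
    induction n with
    | zero =>
      intro a v hv b hb
      have hv' : q a = v := (ht.dist_eq_zero_iff).1 hv
      subst hv'
      exact stepw a b (by linarith)
    | succ n ih =>
      intro a v hv b hb
      obtain ⟨p, hp⟩ := ht.exists_walk_length_eq_dist (q a) v
      have hp' : p.length = n + 1 := by omega
      have hadj := p.adj_getVert_succ (i := n) (by omega)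
      rw [← hp', SimpleGraph.Walk.getVert_length] at hadj
      have h1 := T.dist_eq_one_iff_adj.2 hadj
      have h2 : T.dist (q a) (p.getVert n) = n := by
        have h3 := SimpleGraph.dist_le (p.take n)
        rw [SimpleGraph.Walk.take_length] at h3
        have h4 := ht.dist_triangle (u := q a) (v := p.getVert n) (w := v)
        omega
      obtain ⟨c, hc⟩ := hdense (p.getVert n)
      obtain ⟨w, hw⟩ := ih a _ h2 c hc
      obtain ⟨w', hw'⟩ := stepw c b (by
        have h5 := ht.dist_triangle (u := q c) (v := p.getVert n) (w := q b)
        have h6 := ht.dist_triangle (u := p.getVert n) (v := v) (w := q b)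
        rw [SimpleGraph.dist_comm (u := q c) (v := p.getVert n)] at h5
        have h7 : T.dist (q c) (q b) ≤ T.dist (p.getVert n) (q c) + (1 + T.dist v (q b)) := by omega
        have h8 : (T.dist (q c) (q b) : ℝ) ≤ T.dist (p.getVert n) (q c) + (1 + T.dist v (q b)) := by
          exact_mod_cast h7
        linarith)
      exact ⟨w.append w', by rw [SimpleGraph.Walk.length_append]; omega⟩
  have main' : ∀ a b : X, ∃ p : (cgraph X r).Walk a b, p.length ≤ T.dist (q a) (q b) + 1 :=
    fun a b => main _ a (q b) rfl b (by simpa using hCq)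
  obtain ⟨lam, hlam⟩ := exists_nat_ge (Kq * r + Cq)
  refine ⟨r, lam, hT, ?_, ?_, ?_⟩
  · exact SimpleGraph.Connected.mk fun a b => ⟨(main' a b).choose⟩
  · intro a b hab
    have h1 := hqi_upper a b
    have h2 : Kq * dist a b ≤ Kq * r := by
      have := hab.2
      gcongr
    have : (T.dist (q a) (q b) : ℝ) ≤ lam := by linarith
    exact_mod_cast this
  · intro a b
    obtain ⟨p, hp⟩ := main' a b
    exact (SimpleGraph.dist_le p).trans hp

end QTree


namespace NTL

theorem nat_split (n : ℕ) (M : ℕ) (hM : M ≠ 0) :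
    ∃ A B j : ℕ, M = A * B ∧ A ∣ n ^ j ∧ Nat.Coprime B n := by
  induction M using Nat.strong_induction_on with
  | _ M ih =>
    by_cases hg : Nat.Coprime M n
    · exact ⟨1, M, 0, by simp, by simp, hg⟩
    · obtain ⟨M1, hM1⟩ := Nat.gcd_dvd_left M n
      have hg1 : Nat.gcd M n ≠ 1 := hg
      have hg0 : Nat.gcd M n ≠ 0 := by
        intro h; rw [h] at hM1; simp at hM1; exact hM hM1
      have hM10 : M1 ≠ 0 := by rintro rfl; simp at hM1; exact hM hM1
      have hlt : M1 < M := by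
        conv_rhs => rw [hM1]
        have : 2 ≤ Nat.gcd M n := by omega
        nlinarith [Nat.pos_of_ne_zero hM10]
      obtain ⟨A, B, j, h1, h2, h3⟩ := ih M1 hlt hM10
      refine ⟨Nat.gcd M n * A, B, j + 1, ?_, ?_, h3⟩
      · rw [mul_assoc, ← h1]; exact hM1
      · rw [pow_succ, mul_comm]
        exact mul_dvd_mul h2 (Nat.gcd_dvd_right M n)

variable {O : Type*} [CommRing O]

theorem geo (x : O) (N : ℕ) : ∃ S : O, x ^ N - 1 = (x - 1) * S ∧ (x - 1) ∣ S - N := by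
  refine ⟨∑ i ∈ Finset.range N, x ^ i, (mul_geom_sum x N).symm, ?_⟩
  induction N with
  | zero => simp
  | succ N ih =>
    rw [Finset.sum_range_succ]
    have h : x - 1 ∣ x ^ N - 1 := ⟨_, (mul_geom_sum x N).symm⟩
    have := dvd_add ih h
    convert this using 1
    push_cast; ring

theorem coprime_mod {a b c : O} (h : c ∣ a - b) (hb : IsCoprime b c) : IsCoprime a c := by
  obtain ⟨k, hk⟩ := h
  have : a = b + c * k := by linear_combination hk
  rw [this]
  exact IsCoprime.add_mul_left_left hb k

theorem exists_pow_sub_one [Ring.HasFiniteQuotients O] {x : O} (hx : x ≠ 0) :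
    ∃ M : ℕ, M ≠ 0 ∧ ∀ y, IsCoprime y x → x ∣ y ^ M - 1 := by
  have : Finite (O ⧸ Ideal.span {x}) := Ring.HasFiniteQuotients.finiteQuotient (by simpa using hx)
  refine ⟨Nat.card (O ⧸ Ideal.span {x})ˣ, Nat.card_pos.ne', fun y hy => ?_⟩
  obtain ⟨a, b, hab⟩ := hy
  have hu : IsUnit (Ideal.Quotient.mk (Ideal.span {x}) y) := by
    rw [isUnit_iff_exists_inv']
    refine ⟨Ideal.Quotient.mk _ a, ?_⟩
    rw [← map_mul, ← map_one (Ideal.Quotient.mk (Ideal.span {x})), Ideal.Quotient.eq,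
      Ideal.mem_span_singleton]
    exact ⟨-b, by linear_combination hab⟩
  obtain ⟨w, hw⟩ := hu
  have h1 : w ^ Nat.card (O ⧸ Ideal.span {x})ˣ = 1 := pow_card_eq_one'
  rw [← Ideal.mem_span_singleton, ← Ideal.Quotient.eq, map_pow, ← hw, ← Units.val_pow_eq_pow_val,
    h1]
  simp

theorem exists_nat_dvd [CharZero O] [Ring.HasFiniteQuotients O] {x : O} (hx : x ≠ 0) :
    ∃ M : ℕ, M ≠ 0 ∧ x ∣ (M : O) := by
  have : Finite (O ⧸ Ideal.span {x}) := Ring.HasFiniteQuotients.finiteQuotient (by simpa using hx)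
  refine ⟨Nat.card (O ⧸ Ideal.span {x}), Nat.card_pos.ne', ?_⟩
  rw [← Ideal.mem_span_singleton, ← Ideal.Quotient.eq_zero_iff_mem, map_natCast]
  have := card_nsmul_eq_zero' (x := (1 : O ⧸ Ideal.span {x}))
  simpa using this

theorem unit_tower {u : O} {n : ℕ} (hu : (n : O) ^ 2 ∣ u - 1) (j : ℕ) :
    ∃ w : O, u ^ (2 * n ^ j) = 1 + n ^ j * (u ^ 2 - 1) * w ∧ (n : O) ∣ w - 1 := by
  induction j with
  | zero => exact ⟨1, by simp, by simp⟩
  | succ j ih =>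
    obtain ⟨w, h1, h2⟩ := ih
    obtain ⟨S, h3, h4⟩ := geo (u ^ (2 * n ^ j)) n
    have h5 : u - 1 ∣ u ^ (2 * n ^ j) - 1 := by
      obtain ⟨S', h, -⟩ := geo u (2 * n ^ j); exact ⟨S', h⟩
    obtain ⟨s, hs⟩ := hu.trans (h5.trans h4)
    have hS : S = n * (1 + n * s) := by linear_combination hs
    refine ⟨w * (1 + n * s), ?_, ?_⟩
    · have e : 2 * n ^ (j + 1) = 2 * n ^ j * n := by ring
      rw [e, pow_mul u (2 * n ^ j) n, h1]
      rw [h1, hS] at h3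
      linear_combination h3
    · have := dvd_add h2 (Dvd.intro (w * s) rfl : (n : O) ∣ n * (w * s))
      convert this using 1; ring

theorem unit_lemma [IsDomain O] [CharZero O] [Ring.HasFiniteQuotients O] (h2u : ¬ IsUnit (2 : O))
    (u0 : Oˣ) (hu0 : ∀ m : ℕ, m ≠ 0 → u0 ^ m ≠ 1) {c : O} (hc : c ≠ 0) :
    ∃ F : O, F ≠ 0 ∧ ∀ d b : O, IsCoprime d F → ∃ (e z : O) (v : Oˣ), d ∣ b - c * e ∧ c ∣ e ∧
      (v : O) ^ 2 - 1 = e * z ∧ c ∣ z - 1 := by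
  obtain ⟨n0, hn0, hcn0⟩ := exists_nat_dvd hc
  obtain ⟨n, hn, hcn, h2n⟩ : ∃ n : ℕ, n ≠ 0 ∧ c ∣ (n : O) ∧ (2 : O) ∣ (n : O) :=
    ⟨2 * n0, by omega, by push_cast; exact hcn0.mul_left 2, by push_cast; exact Dvd.intro _ rfl⟩
  have hnO : (n : O) ≠ 0 := by exact_mod_cast hn
  obtain ⟨m, hm0, hm⟩ := exists_pow_sub_one (pow_ne_zero 2 hnO)
  set U := u0 ^ m with hU
  set u : O := (U : O) with hu
  have hu1 : (n : O) ^ 2 ∣ u - 1 := by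
    rw [hu, hU, Units.val_pow_eq_pow_val]
    exact hm _ ((isCoprime_one_left).of_isCoprime_of_dvd_left u0.isUnit.dvd)
  have hf0 : u ^ 2 - 1 ≠ 0 := by
    intro h
    have h1 : U ^ 2 = 1 := by
      ext; push_cast; linear_combination h
    rw [hU, ← pow_mul] at h1
    exact hu0 _ (by omega) h1
  have hcf : c ∣ u ^ 2 - 1 := by
    have h1 : u - 1 ∣ u ^ 2 - 1 := ⟨u + 1, by ring⟩
    exact (hcn.trans (Dvd.intro _ (pow_two (n : O)).symm)).trans (hu1.trans h1)
  refine ⟨n * (u ^ 2 - 1), mul_ne_zero hnO hf0, fun d b hd => ?_⟩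
  have hdn : IsCoprime d (n : O) := hd.of_mul_right_left
  have hdf : IsCoprime d (u ^ 2 - 1) := hd.of_mul_right_right
  have hnu : ¬ IsUnit (n : O) := fun h => h2u (isUnit_of_dvd_unit h2n h)
  have hd0 : d ≠ 0 := by
    rintro rfl
    exact hnu (isCoprime_zero_left.1 hdn)
  have hdc : IsCoprime d c := hdn.of_isCoprime_of_dvd_right hcn
  obtain ⟨e2, he2b, he2n⟩ : ∃ e2 : O, d ∣ b - c * (u ^ 2 - 1) * e2 ∧ (n : O) ∣ e2 - 1 := by
    obtain ⟨p, s, hps⟩ := hdc.mul_right hdf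
    obtain ⟨α, β, hab⟩ := hdn
    refine ⟨s * b * (β * n) + α * d, ⟨p * b + s * (c * (u ^ 2 - 1)) * b * α
      - c * (u ^ 2 - 1) * α, ?_⟩, ⟨s * b * β - β, ?_⟩⟩
    · linear_combination (-b) * hps - b * s * (c * (u ^ 2 - 1)) * hab
    · linear_combination hab
  have he20 : e2 ≠ 0 := by
    rintro rfl
    apply hnu
    rw [← dvd_neg, neg_sub, sub_zero] at he2n
    exact isUnit_of_dvd_one he2n
  have he2c : IsCoprime e2 (n : O) := coprime_mod he2n isCoprime_one_left
  obtain ⟨M, hM0, hM⟩ := exists_pow_sub_one he20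
  obtain ⟨A, M', j0, hMA, hAj, hM'⟩ := nat_split n M hM0
  obtain ⟨r0, hr0, her0⟩ := exists_nat_dvd he20
  obtain ⟨A', r, j1, hrA, hAj', hr⟩ := nat_split n r0 hr0
  have her : e2 ∣ (r : O) := by
    rw [hrA] at her0
    push_cast at her0
    refine IsCoprime.dvd_of_dvd_mul_left ?_ her0
    refine (he2c.pow_right (n := j1)).of_isCoprime_of_dvd_right ?_
    exact_mod_cast (Nat.cast_dvd_cast hAj' : ((A' : ℕ) : O) ∣ ((n ^ j1 : ℕ) : O))
  obtain ⟨φ, hφ0, hφ⟩ := exists_pow_sub_one hd0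
  obtain ⟨j, hj0, hjd⟩ : ∃ j, j0 ≤ j ∧ d ∣ (n : O) ^ j - 1 := by
    refine ⟨φ * j0, Nat.le_mul_of_pos_left _ (by omega), ?_⟩
    obtain ⟨S, h, -⟩ := geo ((n : O) ^ φ) j0
    rw [pow_mul, h]
    exact (hφ _ hdn.symm).mul_right _
  obtain ⟨w, hw, hw1⟩ := unit_tower hu1 j
  obtain ⟨k, hk⟩ : ∃ k : ℕ, (n : O) ∣ ((M' * r * k : ℕ) : O) - 1 := by
    have hco : Nat.Coprime (M' * r) n := Nat.Coprime.mul_left hM' hr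
    have hn1 : 1 < n := by
      rcases Nat.lt_or_ge 1 n with h | h
      · exact h
      · exact absurd (by rw [show n = 1 by omega]; simp) hnu
    obtain ⟨k, -, hk⟩ := Nat.exists_mul_mod_eq_one_of_coprime hco hn1
    refine ⟨k, ((M' * r * k / n : ℕ) : O), ?_⟩
    have h := Nat.div_add_mod (M' * r * k) n
    rw [hk] at h
    conv_lhs => rw [← h]
    push_cast; ring
  set g := u ^ (2 * n ^ j) with hg
  obtain ⟨S1, h1, h1'⟩ := geo g M'
  obtain ⟨S2, h2, h2'⟩ := geo (g ^ M') r
  obtain ⟨S3, h3, h3'⟩ := geo ((g ^ M') ^ r) k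
  have hng : (n : O) ∣ g - 1 := by
    obtain ⟨S', h, -⟩ := geo u (2 * n ^ j)
    rw [hg, h]
    exact ((Dvd.intro _ (pow_two (n : O)).symm).trans hu1).mul_right _
  have hng1 : (n : O) ∣ g ^ M' - 1 := by rw [h1]; exact hng.mul_right _
  have hng2 : (n : O) ∣ (g ^ M') ^ r - 1 := by rw [h2]; exact hng1.mul_right _
  have heg : e2 ∣ g ^ M' - 1 := by
    obtain ⟨t, ht⟩ : M ∣ n ^ j * M' := by
      rw [hMA]; exact mul_dvd_mul (hAj.trans (pow_dvd_pow n hj0)) dvd_rfl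
    have : g ^ M' = (u ^ M) ^ (2 * t) := by
      rw [hg, ← pow_mul, ← pow_mul]; congr 1
      linear_combination 2 * ht
    rw [this]
    obtain ⟨S', h, -⟩ := geo (u ^ M) (2 * t)
    rw [h]
    exact (hM u ((isCoprime_one_left).of_isCoprime_of_dvd_left U.isUnit.dvd)).mul_right _
  have heS2 : e2 ∣ S2 := by
    have := dvd_add (heg.trans h2') her
    simpa using this
  obtain ⟨s2, hs2⟩ := heS2
  refine ⟨n ^ j * (u ^ 2 - 1) * e2, w * S1 * s2 * S3, U ^ (n ^ j * (M' * r * k)), ?_, ?_, ?_, ?_⟩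
  · have h5 := dvd_sub he2b (hjd.mul_right (c * (u ^ 2 - 1) * e2))
    convert h5 using 1; ring
  · exact (hcf.mul_left _).mul_right _
  · have e1 : ((U ^ (n ^ j * (M' * r * k)) : Oˣ) : O) ^ 2 = ((g ^ M') ^ r) ^ k := by
      rw [hg]; push_cast
      rw [← hu]
      simp only [← pow_mul]
      congr 1; ring
    rw [e1, h3, h2, h1, hw, hs2]
    ring
  · refine hcn.trans ?_
    have q1 : (n : O) ∣ S1 - M' := hng.trans h1'
    have q2 : (n : O) ∣ S2 - r := hng1.trans h2'
    have q3 : (n : O) ∣ S3 - k := hng2.trans h3'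
    obtain ⟨a1, b1⟩ := q1
    obtain ⟨a2, b2⟩ := q2
    obtain ⟨a3, b3⟩ := q3
    obtain ⟨a4, b4⟩ := hk
    obtain ⟨a5, b5⟩ := hw1
    obtain ⟨a6, b6⟩ := he2n
    push_cast at b4
    rw [hs2] at b2
    set W := w * S1 * s2 * S3
    have : (n : O) ∣ w * S1 * (e2 * s2) * S3 - 1 := by
      rw [sub_eq_iff_eq_add] at b1 b2 b3 b5
      rw [b1, b2, b3, b5]
      have e4 : (M' : O) * r * k = n * a4 + 1 := by linear_combination b4
      have : (n * a5 + 1) * (n * a1 + M') * (n * a2 + r) * (n * a3 + k) - 1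
        = n * (a5 * ((n * a1 + M') * (n * a2 + r) * (n * a3 + k)) +
          (a1 * (n * a2 + r) * (n * a3 + k)) + M' * (a2 * (n * a3 + k)) + M' * r * a3 + a4) := by
        linear_combination e4
      exact ⟨_, this⟩
    obtain ⟨a7, b7⟩ := this
    refine ⟨a7 - a6 * (w * S1 * s2 * S3), ?_⟩
    linear_combination b7 - (w * S1 * s2 * S3) * b6

theorem coprime_iff_prime [IsDedekindDomain O] {a M : O}
    (h : ∀ I : Ideal O, I.IsPrime → M ∈ I → a ∉ I) : IsCoprime a M := by
  rw [← Ideal.isCoprime_span_singleton_iff, Ideal.isCoprime_iff_sup_eq]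
  by_contra hne
  obtain ⟨I, hI, hle⟩ := Ideal.exists_le_maximal _ hne
  refine h I hI.isPrime (hle ?_) (hle ?_)
  · exact Ideal.mem_sup_right (Ideal.mem_span_singleton_self M)
  · exact Ideal.mem_sup_left (Ideal.mem_span_singleton_self a)

theorem crt [IsDedekindDomain O] {M : O} (hM : M ≠ 0) (f : Ideal O → O) :
    ∃ y : O, ∀ I : Ideal O, I.IsPrime → M ∈ I → y - f I ∈ I := by
  classical
  have hM' : Ideal.span {M} ≠ ⊥ := by simpa using hM
  set s := (UniqueFactorizationMonoid.normalizedFactors (Ideal.span {M})).toFinset with hs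
  obtain ⟨y, hy⟩ := IsDedekindDomain.exists_forall_sub_mem_ideal (s := s) (fun I : Ideal O => I)
    (fun _ => 1) (fun i hi => by
      rw [hs, Multiset.mem_toFinset] at hi
      exact UniqueFactorizationMonoid.prime_of_normalized_factor _ hi)
    (fun i _ j _ h => h) (fun i => f i)
  refine ⟨y, fun I hI hMI => ?_⟩
  have hI0 : I ≠ ⊥ := by rintro rfl; exact hM (by simpa using hMI)
  have := hy I (by
    rw [hs, Multiset.mem_toFinset, Ideal.mem_normalizedFactors_iff hM']
    exact ⟨hI, by rwa [Ideal.span_singleton_le_iff_mem]⟩)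
  simpa using this

theorem sr [IsDedekindDomain O] {M a b : O} (hM : M ≠ 0)
    (h : ∀ I : Ideal O, I.IsPrime → M ∈ I → a ∈ I → b ∉ I) : ∃ t : O, IsCoprime (a + t * b) M := by
  classical
  obtain ⟨t, ht⟩ := crt hM (fun I => if a ∈ I then 1 else 0)
  refine ⟨t, coprime_iff_prime fun I hI hMI hm => ?_⟩
  have h1 := ht I hI hMI
  by_cases ha : a ∈ I
  · rw [if_pos ha] at h1
    apply h I hI hMI ha
    have : b = (a + t * b) - a - (t - 1) * b := by ring
    rw [this]
    exact I.sub_mem (I.sub_mem hm ha) (I.mul_mem_right _ h1)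
  · rw [if_neg ha] at h1
    apply ha
    have : a = (a + t * b) - (t - 0) * b := by ring
    rw [this]
    exact I.sub_mem hm (I.mul_mem_right _ h1)

theorem sr' [IsDedekindDomain O] {M a b : O} (hM : M ≠ 0) (h : IsCoprime a b) :
    ∃ t : O, IsCoprime (a + t * b) M := by
  refine sr hM fun I hI _ ha hb => hI.ne_top ?_
  obtain ⟨x, y, hxy⟩ := h
  rw [Ideal.eq_top_iff_one, ← hxy]
  exact I.add_mem (I.mul_mem_left _ ha) (I.mul_mem_left _ hb)

theorem sqrt_nilp {B : Type*} [CommRing B] (h2 : IsUnit (2 : B)) (N : ℕ) :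
    ∀ r : B, r ^ (2 ^ N) = 0 → ∃ y : B, IsUnit y ∧ y ^ 2 = 1 + r := by
  obtain ⟨i, hi⟩ := h2.exists_right_inv
  induction N with
  | zero => intro r hr; exact ⟨1, isUnit_one, by simp at hr; simp [hr]⟩
  | succ N ih =>
    intro r hr
    have hnil : IsNilpotent (i * r) := ⟨2 ^ (N + 1), by rw [mul_pow, hr, mul_zero]⟩
    have hw : IsUnit (1 + i * r) := hnil.isUnit_one_add
    obtain ⟨v, hv⟩ := hw.exists_right_inv
    obtain ⟨y, hy, hy2⟩ := ih (-(i * v * r) ^ 2) (by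
      rw [neg_pow, ← pow_mul, ← pow_succ', mul_pow, hr, mul_zero, mul_zero])
    refine ⟨(1 + i * r) * y, hw.mul hy, ?_⟩
    rw [mul_pow, hy2]
    have : ((1 + i * r) * (i * v * r)) ^ 2 = (i * r) ^ 2 := by
      have : (1 + i * r) * (i * v * r) = i * r := by linear_combination (i * r) * hv
      rw [this]
    linear_combination -this + r * hi

theorem conic_field {k : Type*} [Field k] [Finite k] (h2 : (2 : k) ≠ 0) {α : k} (hα : α ≠ 0)
    (Q : k) : ∃ p q : k, p ^ 2 + α * q ^ 2 = Q := by
  have := Fintype.ofFinite k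
  have hodd : Fintype.card k % 2 = 1 := by
    refine FiniteField.odd_card_of_char_ne_two fun h => h2 ?_
    have := ringChar.Nat.cast_ringChar (R := k)
    rw [h] at this
    exact_mod_cast this
  obtain ⟨a, b, h⟩ := FiniteField.exists_root_sum_quadratic (R := k)
    (f := Polynomial.X ^ 2 - Polynomial.C Q) (g := Polynomial.C α * Polynomial.X ^ 2)
    (Polynomial.degree_X_pow_sub_C (by norm_num) _)
    (Polynomial.degree_C_mul_X_pow 2 hα) hodd
  refine ⟨a, b, ?_⟩
  simp at h
  linear_combination h

theorem not_mem_of_coprime {a b : O} (h : IsCoprime a b) {I : Ideal O} (hI : I.IsPrime)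
    (ha : a ∈ I) : b ∉ I := by
  intro hb
  obtain ⟨x, y, hxy⟩ := h
  apply hI.ne_top
  rw [Ideal.eq_top_iff_one, ← hxy]
  exact I.add_mem (I.mul_mem_left _ ha) (I.mul_mem_left _ hb)

theorem isUnit_mk_of_coprime {a b : O} (h : IsCoprime a b) :
    IsUnit (Ideal.Quotient.mk (Ideal.span {a}) b) := by
  obtain ⟨x, y, hxy⟩ := h
  rw [isUnit_iff_exists_inv']
  refine ⟨Ideal.Quotient.mk _ y, ?_⟩
  rw [← map_mul, ← map_one (Ideal.Quotient.mk (Ideal.span {a})), Ideal.Quotient.eq,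
    Ideal.mem_span_singleton]
  exact ⟨-x, by linear_combination hxy⟩

theorem conic [IsDedekindDomain O] [Ring.HasFiniteQuotients O] {A α Q : O} (hA : A ≠ 0)
    (h2 : IsCoprime A 2) (hα : IsCoprime A α) (hQ : IsCoprime A Q) :
    ∃ p q : O, IsCoprime p q ∧ A ∣ p ^ 2 + α * q ^ 2 - Q := by
  classical
  have loc : ∀ I : Ideal O, ∃ pq : O × O, I.IsPrime → A ∈ I →
      pq.1 ^ 2 + α * pq.2 ^ 2 - Q ∈ I := by
    intro I
    by_cases hI : I.IsPrime ∧ A ∈ I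
    · obtain ⟨hI, hAI⟩ := hI
      have hI0 : I ≠ ⊥ := by rintro rfl; exact hA (by simpa using hAI)
      have hmax : I.IsMaximal := hI.isMaximal hI0
      have : Finite (O ⧸ I) := Ring.HasFiniteQuotients.finiteQuotient hI0
      letI := Ideal.Quotient.field I
      obtain ⟨p, q, hpq⟩ := conic_field (k := O ⧸ I) (by
        have := not_mem_of_coprime h2 hI hAI
        rw [← Ideal.Quotient.eq_zero_iff_mem] at this
        exact_mod_cast this) (α := Ideal.Quotient.mk I α) (by
        have := not_mem_of_coprime hα hI hAI
        rwa [← Ideal.Quotient.eq_zero_iff_mem] at this) (Ideal.Quotient.mk I Q)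
      obtain ⟨p, rfl⟩ := Ideal.Quotient.mk_surjective p
      obtain ⟨q, rfl⟩ := Ideal.Quotient.mk_surjective q
      refine ⟨(p, q), fun _ _ => ?_⟩
      rw [← Ideal.Quotient.eq]
      simpa using hpq
    · exact ⟨(0, 0), fun h1 h2 => absurd ⟨h1, h2⟩ hI⟩
  choose pq hpq using loc
  obtain ⟨p, hp⟩ := crt hA (fun I => (pq I).1)
  obtain ⟨q, hq⟩ := crt hA (fun I => (pq I).2)
  have hrad : ∀ I : Ideal O, I.IsPrime → A ∈ I → p ^ 2 + α * q ^ 2 - Q ∈ I := by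
    intro I hI hAI
    have h1 := hp I hI hAI
    have h2 := hq I hI hAI
    have h3 := hpq I hI hAI
    have : p ^ 2 + α * q ^ 2 - Q = (p - (pq I).1) * (p + (pq I).1) +
      (q - (pq I).2) * (α * (q + (pq I).2)) + ((pq I).1 ^ 2 + α * (pq I).2 ^ 2 - Q) := by ring
    rw [this]
    exact I.add_mem (I.add_mem (I.mul_mem_right _ h1) (I.mul_mem_right _ h2)) h3
  set π := Ideal.Quotient.mk (Ideal.span {A}) with hπ
  have hnil : IsNilpotent (π (p ^ 2 + α * q ^ 2 - Q)) := by
    rw [nilpotent_iff_mem_prime]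
    intro J hJ
    have hcJ : (J.comap π).IsPrime := Ideal.comap_isPrime π J
    refine hrad (J.comap π) hcJ ?_
    rw [Ideal.mem_comap, (Ideal.Quotient.eq_zero_iff_mem).2 (Ideal.mem_span_singleton_self A)]
    exact J.zero_mem
  obtain ⟨Qi, hQi⟩ := (isUnit_mk_of_coprime hQ).exists_right_inv
  have hnil2 : IsNilpotent (Qi * π (p ^ 2 + α * q ^ 2 - Q)) :=
    (Commute.all _ _).isNilpotent_mul_left hnil
  obtain ⟨N, hN⟩ := hnil2
  obtain ⟨y, hyu, hy⟩ := sqrt_nilp (by exact_mod_cast isUnit_mk_of_coprime h2) N _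
    (pow_eq_zero_of_le (Nat.lt_two_pow_self).le hN)
  obtain ⟨yi, hyi⟩ := hyu.exists_right_inv
  obtain ⟨p1, hp1⟩ := Ideal.Quotient.mk_surjective (yi * π p)
  obtain ⟨q1, hq1⟩ := Ideal.Quotient.mk_surjective (yi * π q)
  obtain ⟨q2, hq2, hq20⟩ : ∃ q2 : O, π q2 = yi * π q ∧ q2 ≠ 0 := by
    by_cases h0 : q1 = 0
    · refine ⟨A, ?_, hA⟩
      rw [← hq1, h0, map_zero]
      exact (Ideal.Quotient.eq_zero_iff_mem).2 (Ideal.mem_span_singleton_self A)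
    · exact ⟨q1, hq1, h0⟩
  have hsol : A ∣ p1 ^ 2 + α * q2 ^ 2 - Q := by
    rw [← Ideal.mem_span_singleton, ← Ideal.Quotient.eq]
    change π _ = π _
    rw [map_add, map_mul, map_pow, map_pow, hq2, hp1]
    have e1 : π (p ^ 2 + α * q ^ 2 - Q) = π p ^ 2 + π α * π q ^ 2 - π Q := by simp
    rw [e1] at hy
    have e2 : y ^ 2 * π Q = π p ^ 2 + π α * π q ^ 2 := by
      rw [hy]; linear_combination (π p ^ 2 + π α * π q ^ 2 - π Q) * hQi
    have e3 : yi ^ 2 * y ^ 2 = 1 := by rw [← mul_pow, mul_comm yi, hyi, one_pow]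
    linear_combination -yi ^ 2 * e2 + π Q * e3
  obtain ⟨t, ht⟩ := sr (M := q2) (a := p1) (b := A) hq20 (by
    intro I hI hqI hpI hAI
    refine not_mem_of_coprime hQ hI hAI ?_
    obtain ⟨k, hk⟩ := hsol
    have : Q = p1 * p1 + q2 * (α * q2) - A * k := by linear_combination -hk
    rw [this]
    exact I.sub_mem (I.add_mem (I.mul_mem_left _ hpI) (I.mul_mem_right _ hqI))
      (I.mul_mem_right _ hAI))
  refine ⟨p1 + t * A, q2, ht, ?_⟩
  obtain ⟨k, hk⟩ := hsol
  exact ⟨k + 2 * p1 * t + t ^ 2 * A, by linear_combination hk⟩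

end NTL


namespace SLT

open Matrix

variable {O : Type*} [CommRing O]

/-- Explicit element of SL2. -/
def mk2 (a b c d : O) (h : a * d - b * c = 1) : SpecialLinearGroup (Fin 2) O :=
  ⟨!![a, b; c, d], by rw [Matrix.det_fin_two_of]; exact h⟩

/-- Upper elementary matrix. -/
def E12 (x : O) : SpecialLinearGroup (Fin 2) O := mk2 1 x 0 1 (by ring)

/-- Lower elementary matrix. -/
def E21 (x : O) : SpecialLinearGroup (Fin 2) O := mk2 1 0 x 1 (by ring)

@[simp] theorem mk2_00 (a b c d : O) (h) : (mk2 a b c d h).1 0 0 = a := rfl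
@[simp] theorem mk2_01 (a b c d : O) (h) : (mk2 a b c d h).1 0 1 = b := rfl
@[simp] theorem mk2_10 (a b c d : O) (h) : (mk2 a b c d h).1 1 0 = c := rfl
@[simp] theorem mk2_11 (a b c d : O) (h) : (mk2 a b c d h).1 1 1 = d := rfl
@[simp] theorem E12_00 (x : O) : (E12 x).1 0 0 = 1 := rfl
@[simp] theorem E12_01 (x : O) : (E12 x).1 0 1 = x := rfl
@[simp] theorem E12_10 (x : O) : (E12 x).1 1 0 = 0 := rfl
@[simp] theorem E12_11 (x : O) : (E12 x).1 1 1 = 1 := rfl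
@[simp] theorem E21_00 (x : O) : (E21 x).1 0 0 = 1 := rfl
@[simp] theorem E21_01 (x : O) : (E21 x).1 0 1 = 0 := rfl
@[simp] theorem E21_10 (x : O) : (E21 x).1 1 0 = x := rfl
@[simp] theorem E21_11 (x : O) : (E21 x).1 1 1 = 1 := rfl
@[simp] theorem mul_e (g h : SpecialLinearGroup (Fin 2) O) (i j : Fin 2) :
    (g * h).1 i j = g.1 i 0 * h.1 0 j + g.1 i 1 * h.1 1 j := by
  change (g.1 * h.1) i j = _
  rw [Matrix.mul_apply, Fin.sum_univ_two]
@[simp] theorem one_00 : (1 : SpecialLinearGroup (Fin 2) O).1 0 0 = 1 := rfl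
@[simp] theorem one_01 : (1 : SpecialLinearGroup (Fin 2) O).1 0 1 = 0 := rfl
@[simp] theorem one_10 : (1 : SpecialLinearGroup (Fin 2) O).1 1 0 = 0 := rfl
@[simp] theorem one_11 : (1 : SpecialLinearGroup (Fin 2) O).1 1 1 = 1 := rfl

theorem det_e (g : SpecialLinearGroup (Fin 2) O) :
    g.1 0 0 * g.1 1 1 - g.1 0 1 * g.1 1 0 = 1 := by
  have := g.2
  rwa [Matrix.det_fin_two] at this

theorem sl_ext {g h : SpecialLinearGroup (Fin 2) O} (h00 : g.1 0 0 = h.1 0 0)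
    (h01 : g.1 0 1 = h.1 0 1) (h10 : g.1 1 0 = h.1 1 0) (h11 : g.1 1 1 = h.1 1 1) : g = h := by
  apply Subtype.ext
  ext i j
  fin_cases i <;> fin_cases j <;> assumption

theorem row_coprime (g : SpecialLinearGroup (Fin 2) O) : IsCoprime (g.1 0 0) (g.1 0 1) :=
  ⟨g.1 1 1, -g.1 1 0, by linear_combination det_e g⟩

theorem exists_row {a b : O} (h : IsCoprime a b) :
    ∃ g : SpecialLinearGroup (Fin 2) O, g.1 0 0 = a ∧ g.1 0 1 = b := by
  obtain ⟨x, y, hxy⟩ := h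
  exact ⟨mk2 a b (-y) x (by linear_combination hxy), rfl, rfl⟩

theorem same_row {g h : SpecialLinearGroup (Fin 2) O} (h0 : g.1 0 0 = h.1 0 0)
    (h1 : g.1 0 1 = h.1 0 1) : ∃ x, g = E21 x * h := by
  have dg := det_e g
  have dh := det_e h
  refine ⟨g.1 1 0 * h.1 1 1 - g.1 1 1 * h.1 1 0, sl_ext ?_ ?_ ?_ ?_⟩
  · simp [h0]
  · simp [h1]
  · simp only [mul_e, E21_10, E21_11]
    rw [h0, h1] at dg
    linear_combination (-g.1 1 0) * dh + h.1 1 0 * dg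
  · simp only [mul_e, E21_10, E21_11]
    rw [h0, h1] at dg
    linear_combination (-g.1 1 1) * dh + h.1 1 1 * dg

/-- A length function bounded on elementary matrices. -/
structure BL (l : SpecialLinearGroup (Fin 2) O → ℝ) (R : ℝ) : Prop where
  nonneg : ∀ g, 0 ≤ l g
  inv : ∀ g, l g⁻¹ = l g
  mul : ∀ g h, l (g * h) ≤ l g + l h
  e12 : ∀ x, l (E12 x) ≤ R
  e21 : ∀ x, l (E21 x) ≤ R

namespace BL

variable {l : SpecialLinearGroup (Fin 2) O → ℝ} {R : ℝ} (H : BL l R)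

include H

theorem Rnn : 0 ≤ R := (H.nonneg _).trans (H.e12 0)

theorem row {g h : SpecialLinearGroup (Fin 2) O} (h0 : g.1 0 0 = h.1 0 0)
    (h1 : g.1 0 1 = h.1 0 1) : l g ≤ l h + R := by
  obtain ⟨x, rfl⟩ := same_row h0 h1
  have := H.mul (E21 x) h
  have := H.e21 x
  linarith

theorem W_le : l (mk2 0 (-1) 1 0 (by ring)) ≤ 3 * R := by
  have e : (mk2 0 (-1) 1 0 (by ring) : SpecialLinearGroup (Fin 2) O)
      = E12 (-1) * E21 1 * E12 (-1) := by
    apply sl_ext <;> simp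
  rw [e]
  have h1 := H.mul (E12 (-1) * E21 1) (E12 (-1))
  have h2 := H.mul (E12 (-1)) (E21 1)
  have h3 := H.e12 (-1)
  have h4 := H.e21 1
  linarith

theorem diag_le (v : Oˣ) : l (mk2 (v : O) 0 0 ((v⁻¹ : Oˣ) : O) (by simp)) ≤ 6 * R := by
  have e : (mk2 (v : O) 0 0 ((v⁻¹ : Oˣ) : O) (by simp) : SpecialLinearGroup (Fin 2) O)
      = E12 (v : O) * E21 (-((v⁻¹ : Oˣ) : O)) * E12 (v : O) * mk2 0 (-1) 1 0 (by ring) := by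
    apply sl_ext <;> simp
  rw [e]
  have h1 := H.mul (E12 (v : O) * E21 (-((v⁻¹ : Oˣ) : O)) * E12 (v : O)) (mk2 0 (-1) 1 0 (by ring))
  have h2 := H.mul (E12 (v : O) * E21 (-((v⁻¹ : Oˣ) : O))) (E12 (v : O))
  have h3 := H.mul (E12 (v : O)) (E21 (-((v⁻¹ : Oˣ) : O)))
  have h4 := H.e12 (v : O)
  have h5 := H.e21 (-((v⁻¹ : Oˣ) : O))
  have h6 := H.W_le
  linarith

theorem mulE12 (g : SpecialLinearGroup (Fin 2) O) (x : O) :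
    l g ≤ l (g * E12 x) + R ∧ l (g * E12 x) ≤ l g + R := by
  have h1 := H.mul g (E12 x)
  have h2 := H.mul (g * E12 x) (E12 x)⁻¹
  rw [mul_inv_cancel_right, H.inv] at h2
  have := H.e12 x
  constructor <;> linarith

theorem mulE21 (g : SpecialLinearGroup (Fin 2) O) (x : O) :
    l g ≤ l (g * E21 x) + R ∧ l (g * E21 x) ≤ l g + R := by
  have h1 := H.mul g (E21 x)
  have h2 := H.mul (g * E21 x) (E21 x)⁻¹
  rw [mul_inv_cancel_right, H.inv] at h2
  have := H.e21 x
  constructor <;> linarith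

theorem conj_le (V g : SpecialLinearGroup (Fin 2) O) : l g ≤ l (V * g * V⁻¹) + 2 * l V := by
  have h1 := H.mul V⁻¹ (V * g * V⁻¹ * V)
  have h2 := H.mul (V * g * V⁻¹) V
  have e : V⁻¹ * (V * g * V⁻¹ * V) = g := by group
  rw [e, H.inv] at h1
  linarith

theorem unit_le {g : SpecialLinearGroup (Fin 2) O} (hg : IsUnit (g.1 0 0)) : l g ≤ 8 * R := by
  obtain ⟨v, hv⟩ := hg
  have h1 := (H.mulE12 g (-((v⁻¹ : Oˣ) : O) * g.1 0 1)).1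
  have h2 := H.row (g := g * E12 (-((v⁻¹ : Oˣ) : O) * g.1 0 1))
    (h := mk2 (v : O) 0 0 ((v⁻¹ : Oˣ) : O) (by simp)) (by simp [hv])
    (by simp [← hv])
  have := H.diag_le v
  linarith

variable [IsDedekindDomain O] [CharZero O] [Ring.HasFiniteQuotients O]

/-- Square factors can be removed. -/
theorem stepR (h2u : ¬ IsUnit (2 : O)) (u0 : Oˣ) (hu0 : ∀ m : ℕ, m ≠ 0 → u0 ^ m ≠ 1)
    {c P β : O} (hc : c ≠ 0) (hcP : c ∣ P - 1) (g' g : SpecialLinearGroup (Fin 2) O)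
    (hg'0 : g'.1 0 0 = P) (hg'1 : g'.1 0 1 = β) (hg0 : g.1 0 0 = P) (hg1 : g.1 0 1 = c ^ 2 * β) :
    l g' ≤ l g + 28 * R := by
  obtain ⟨F, hF0, hF⟩ := NTL.unit_lemma h2u u0 hu0 hc
  have hcop : IsCoprime (P + c * β) (c ^ 2 * β) := by
    have hPβ : IsCoprime P β := by
      have := row_coprime g'
      rwa [hg'0, hg'1] at this
    have hPc : IsCoprime P c := NTL.coprime_mod hcP isCoprime_one_left
    have h1 : IsCoprime (P + c * β) c := IsCoprime.add_mul_left_left hPc β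
    have h2 : IsCoprime (P + c * β) β := IsCoprime.add_mul_right_left hPβ c
    exact (h1.pow_right).mul_right h2
  obtain ⟨t, ht⟩ := NTL.sr' hF0 hcop
  obtain ⟨P1, hP1⟩ : ∃ P1, P1 = P + t * (c ^ 2 * β) := ⟨_, rfl⟩
  have hcP1 : c ∣ P1 - 1 := by
    obtain ⟨k, hk⟩ := hcP
    exact ⟨k + t * c * β, by rw [hP1]; linear_combination hk⟩
  have r1 := (H.mulE21 g' (t * c ^ 2)).1
  have r2 := (H.mulE21 g t).2
  set g'1 := g' * E21 (t * c ^ 2) with hg'1d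
  set g1 := g * E21 t with hg1d
  have a1 : g'1.1 0 0 = P1 := by simp [hg'1d, hg'0, hg'1, hP1]; ring
  have a2 : g'1.1 0 1 = β := by simp [hg'1d, hg'1]
  have a3 : g1.1 0 0 = P1 := by simp [hg1d, hg0, hg1, hP1]; ring
  have a4 : g1.1 0 1 = c ^ 2 * β := by simp [hg1d, hg1]
  obtain ⟨m0, hm0⟩ : ∃ m0, m0 = g'1.1 1 0 := ⟨_, rfl⟩
  obtain ⟨δ0, hδ0⟩ : ∃ δ0, δ0 = g'1.1 1 1 := ⟨_, rfl⟩
  have hdet := det_e g'1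
  rw [a1, a2, ← hm0, ← hδ0] at hdet
  obtain ⟨e, z, v, ⟨τ, hτ⟩, ⟨e', he'⟩, hvz, ⟨z', hz'⟩⟩ := hF (P1 + c * β)
    (-m0 + c * (P1 - δ0) + c ^ 2 * β) (by convert ht using 1; rw [hP1]; ring)
  obtain ⟨k1, hk1⟩ := hcP1
  obtain ⟨m, hm⟩ : ∃ m, m = m0 + τ * P1 := ⟨_, rfl⟩
  obtain ⟨δ, hδ⟩ : ∃ δ, δ = δ0 + τ * β := ⟨_, rfl⟩
  have hdT : P1 * δ - β * m = 1 := by rw [hm, hδ]; linear_combination hdet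
  have hce : -m + c * (P1 - δ) + c ^ 2 * β = c * e := by rw [hm, hδ]; linear_combination hτ
  obtain ⟨k2, hk2⟩ : c ∣ m := ⟨P1 - δ + c * β - e, by linear_combination -hce⟩
  obtain ⟨k3, hk3⟩ : c ∣ δ - 1 := ⟨β * k2 - k1 * δ, by
    linear_combination hdT + β * hk2 - δ * hk1⟩
  obtain ⟨m', hm'⟩ : ∃ m', m = c ^ 2 * m' := ⟨k1 - k3 + β - e', by
    linear_combination -hce + c * hk1 - c * hk3 - c * he'⟩
  have hem : e = -c * m' + P1 - δ + c * β := by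
    apply mul_left_cancel₀ hc
    linear_combination -hce - hm'
  let T : SpecialLinearGroup (Fin 2) O := mk2 P1 β m δ (by linear_combination hdT)
  let T4 : SpecialLinearGroup (Fin 2) O := mk2 P1 (c ^ 2 * β) m' δ (by
    linear_combination hdT + β * hm')
  have hdT2 : (δ - c * β) * (P1 + c * β) - (c * e) * (-β) = 1 := by
    linear_combination hdT - β * hce
  let T2 : SpecialLinearGroup (Fin 2) O := mk2 (δ - c * β) (c * e) (-β) (P1 + c * β) hdT2
  let V : SpecialLinearGroup (Fin 2) O := E12 c * mk2 0 (-1) 1 0 (by ring)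
  let D : SpecialLinearGroup (Fin 2) O := mk2 (v : O) 0 0 ((v⁻¹ : Oˣ) : O) (by simp)
  have s1 : l g'1 ≤ l T + R := H.row (by simp [T, a1]) (by simp [T, a2])
  have s2 : l T4 ≤ l g1 + R := H.row (by simp [T4, a3]) (by simp [T4, a4])
  have s3 : V * T * V⁻¹ = T2 := by
    rw [mul_inv_eq_iff_eq_mul]
    apply sl_ext
    · simp [V, T, T2]; linear_combination hce
    · simp [V, T, T2]; ring
    · simp [V, T, T2]; ring
    · simp [V, T, T2]
  have s4 := H.conj_le V T
  rw [s3] at s4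
  have s5 : l V ≤ 4 * R := by
    have := H.mul (E12 c) (mk2 0 (-1) 1 0 (by ring))
    have := H.e12 c
    have := H.W_le
    linarith
  let T3 : SpecialLinearGroup (Fin 2) O := E12 (-c) * T4 * E12 c
  have s6 : l T3 ≤ l T4 + 2 * R := by
    have h1 := H.mul (E12 (-c) * T4) (E12 c)
    have h2 := H.mul (E12 (-c)) T4
    have h3 := H.e12 c
    have h4 := H.e12 (-c)
    simp only [T3]
    linarith
  obtain ⟨k, hk⟩ : c ∣ z * (δ - c * β) - 1 :=
    ⟨z' * (δ - c * β) + k3 - β, by linear_combination (δ - c * β) * hz' + hk3⟩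
  have s7 : l (D * T2 * D * E21 (-k)) ≤ l T3 + R := by
    refine H.row ?_ ?_
    · simp [D, T2, T3, T4]
      linear_combination (δ - c * β) * hvz + e * hk + hem - (c * e * k) * v.mul_inv
    · simp [D, T2, T3, T4]
      linear_combination (v.mul_inv) * (c * e) + c * hem
  have s8 := (H.mulE21 (D * T2 * D) (-k)).1
  have s9 : l T2 ≤ l (D * T2 * D) + 12 * R := by
    have h1 := H.mul D⁻¹ (D * T2 * D * D⁻¹)
    have h2 := H.mul (D * T2 * D) D⁻¹
    have e : D⁻¹ * (D * T2 * D * D⁻¹) = T2 := by group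
    rw [e] at h1
    rw [H.inv] at h1 h2
    have := H.diag_le v
    simp only [D] at *
    linarith
  linarith

/-- Removing a factor `κ` from the entry `01` when the entry `00` is one modulo `κ`. -/
theorem step2 (h2u : ¬ IsUnit (2 : O)) (u0 : Oˣ) (hu0 : ∀ m : ℕ, m ≠ 0 → u0 ^ m ≠ 1)
    {κ A Q : O} (hκ : κ ∣ A - 1) (g g' : SpecialLinearGroup (Fin 2) O)
    (hg0 : g.1 0 0 = A) (hg1 : g.1 0 1 = κ * Q) (hg'0 : g'.1 0 0 = A) (hg'1 : g'.1 0 1 = Q) :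
    l g ≤ l g' + 40 * R := by
  have hR := H.Rnn
  obtain ⟨s, hs⟩ := NTL.sr' (M := (2 : O)) two_ne_zero (row_coprime g)
  rw [hg0, hg1] at hs
  have r1 := (H.mulE21 g s).1
  have r2 := (H.mulE21 g' (s * κ)).2
  obtain ⟨f, hf⟩ : ∃ f, f = g * E21 s := ⟨_, rfl⟩
  obtain ⟨f', hf'⟩ : ∃ f', f' = g' * E21 (s * κ) := ⟨_, rfl⟩
  rw [← hf] at r1
  rw [← hf'] at r2
  obtain ⟨B, hB⟩ : ∃ B, B = A + s * (κ * Q) := ⟨_, rfl⟩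
  rw [← hB] at hs
  have hf0 : f.1 0 0 = B := by rw [hf, hB]; simp [hg0, hg1]; ring
  have hf1 : f.1 0 1 = κ * Q := by rw [hf]; simp [hg1]
  have hf'0 : f'.1 0 0 = B := by rw [hf', hB]; simp [hg'0, hg'1]; ring
  have hf'1 : f'.1 0 1 = Q := by rw [hf']; simp [hg'1]
  obtain ⟨α, hα⟩ : κ ∣ B - 1 := by
    obtain ⟨k, hk⟩ := hκ
    exact ⟨k + s * Q, by rw [hB]; linear_combination hk⟩
  by_cases hBu : IsUnit B
  · have h1 := H.unit_le (g := f) (by rw [hf0]; exact hBu)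
    have h2 := H.nonneg g'
    linarith
  have hB0 : B ≠ 0 := by
    rintro rfl
    exact h2u (isCoprime_zero_left.1 hs)
  have hBQ : IsCoprime B Q := by
    have := row_coprime f'
    rwa [hf'0, hf'1] at this
  obtain ⟨p, q, hpq, r, hr⟩ := NTL.conic hB0 hs (α := α)
    ⟨1, -κ, by linear_combination hα⟩ hBQ
  obtain ⟨Q', hQ'⟩ : ∃ Q', Q' = p ^ 2 + α * q ^ 2 := ⟨_, rfl⟩
  have hQ'r : Q' = Q + r * B := by rw [hQ']; linear_combination hr
  have hqQ' : IsCoprime q Q' := by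
    have : IsCoprime (p ^ 2 + q * (α * q)) q := IsCoprime.add_mul_left_left (hpq.pow_left) _
    rw [hQ']
    convert this.symm using 1; ring
  have hQ'0 : Q' ≠ 0 := by
    intro h0
    apply hBu
    rw [h0] at hQ'r
    refine isCoprime_self.1 (hBQ.of_isCoprime_of_dvd_right ⟨-r, ?_⟩)
    linear_combination -hQ'r
  obtain ⟨c, hc0, x, hc⟩ : ∃ c, c ≠ 0 ∧ Q' ∣ c * q - p := by
    obtain ⟨a, b, hab⟩ := hqQ'
    by_cases hc : a * p = 0
    · refine ⟨Q', hQ'0, q - p * b, ?_⟩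
      have : p = a * p * q + p * (b * Q') := by linear_combination -p * hab
      rw [hc] at this
      linear_combination -this
    · exact ⟨a * p, hc, -b * p, by linear_combination p * hab⟩
  obtain ⟨L, hL⟩ : Q' ∣ c ^ 2 + α := by
    have : Q' ∣ q ^ 2 * (c ^ 2 + α) := ⟨1 + x * (c * q + p), by
      linear_combination (c * q + p) * hc - hQ'⟩
    exact (hqQ'.symm.pow_right).dvd_of_dvd_mul_left this
  have key := H.stepR h2u u0 hu0 (c := c) (P := 1 - κ * c ^ 2) (β := κ * Q') hc0
    ⟨-κ * c, by ring⟩ (f * E12 (κ * r) * E21 (-L))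
    (f' * E12 r * E21 (-(κ * L)) * E12 (-Q'))
    (by simp [hf0, hf1]; linear_combination hα + κ * hL + L * κ * hQ'r)
    (by simp [hf0, hf1]; linear_combination -κ * hQ'r)
    (by simp [hf'0, hf'1]; linear_combination hα + κ * hL + L * κ * hQ'r)
    (by
      simp [hf'0, hf'1]
      linear_combination (-1 + L * κ * (-Q') ) * hQ'r - Q' * hα - κ * Q' * hL)
  have k1 := (H.mulE12 f (κ * r)).1
  have k2 := (H.mulE21 (f * E12 (κ * r)) (-L)).1
  have k3 := (H.mulE12 f' r).2
  have k4 := (H.mulE21 (f' * E12 r) (-(κ * L))).2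
  have k5 := (H.mulE12 (f' * E12 r * E21 (-(κ * L))) (-Q')).2
  linarith

theorem step2neg (h2u : ¬ IsUnit (2 : O)) (u0 : Oˣ) (hu0 : ∀ m : ℕ, m ≠ 0 → u0 ^ m ≠ 1)
    {κ A Q : O} (hκ : κ ∣ A + 1) (g g' : SpecialLinearGroup (Fin 2) O)
    (hg0 : g.1 0 0 = A) (hg1 : g.1 0 1 = κ * Q) (hg'0 : g'.1 0 0 = A) (hg'1 : g'.1 0 1 = Q) :
    l g ≤ l g' + 52 * R := by
  let N : SpecialLinearGroup (Fin 2) O := mk2 ((-1 : Oˣ) : O) 0 0 (((-1 : Oˣ)⁻¹ : Oˣ) : O) (by simp)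
  have hN : l N ≤ 6 * R := H.diag_le (-1)
  have hNN : N * N = 1 := by apply sl_ext <;> simp [N]
  have key := H.step2 h2u u0 hu0 (κ := κ) (A := -A) (Q := -Q)
    (by rw [← dvd_neg]; convert hκ using 1; ring) (N * g) (N * g')
    (by simp [N, hg0]) (by simp [N, hg1]) (by simp [N, hg'0]) (by simp [N, hg'1])
  have h1 := H.mul N g'
  have h2 := H.mul N (N * g)
  rw [← mul_assoc, hNN, one_mul] at h2
  linarith

theorem pow_form (T : SpecialLinearGroup (Fin 2) O) (n : ℕ) : ∃ x y : O,
    (T ^ n).1 0 0 = x * T.1 0 0 + y ∧ (T ^ n).1 0 1 = x * T.1 0 1 ∧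
    (T ^ n).1 1 0 = x * T.1 1 0 ∧ (T ^ n).1 1 1 = x * T.1 1 1 + y := by
  have hd := det_e T
  induction n with
  | zero => exact ⟨0, 1, by simp⟩
  | succ n ih =>
    obtain ⟨x, y, h1, h2, h3, h4⟩ := ih
    refine ⟨x * (T.1 0 0 + T.1 1 1) + y, -x, ?_, ?_, ?_, ?_⟩ <;>
      rw [pow_succ, mul_e] <;> simp only [h1, h2, h3, h4]
    · linear_combination -x * hd
    · ring
    · ring
    · linear_combination -x * hd

/-- Every element has a power of bounded length. -/
theorem power (h2u : ¬ IsUnit (2 : O)) (u0 : Oˣ) (hu0 : ∀ m : ℕ, m ≠ 0 → u0 ^ m ≠ 1)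
    (T : SpecialLinearGroup (Fin 2) O) : ∃ k : ℕ, k ≠ 0 ∧ l (T ^ k) ≤ 102 * R := by
  have hR := H.Rnn
  have hd := det_e T
  by_cases hb : T.1 0 1 = 0
  · refine ⟨1, one_ne_zero, ?_⟩
    rw [hb, zero_mul, sub_zero] at hd
    have := H.unit_le (g := T) (IsUnit.of_mul_eq_one _ hd)
    rw [pow_one]; linarith
  obtain ⟨k, hk0, hk⟩ := NTL.exists_pow_sub_one hb
  have hak := hk _ (row_coprime T)
  refine ⟨k * 2, by omega, ?_⟩
  rw [pow_mul]
  have hform := fun n => H.pow_form T n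
  have hcong : ∀ n, T.1 0 1 ∣ (T ^ n).1 0 0 - T.1 0 0 ^ n := by
    intro n
    induction n with
    | zero => simp
    | succ n ih =>
      obtain ⟨s, hs⟩ := ih
      obtain ⟨x, y, -, h2, -, -⟩ := hform n
      refine ⟨T.1 0 0 * s + x * T.1 1 0, ?_⟩
      rw [pow_succ, mul_e, h2]
      linear_combination T.1 0 0 * hs
  obtain ⟨x, y, h00, h01, h10, h11⟩ := hform k
  have hαb : T.1 0 1 ∣ (T ^ k).1 0 0 - 1 := by
    have := dvd_add (hcong k) hak
    simpa using this
  set h := T ^ k with hh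
  obtain ⟨s, hs⟩ := hαb
  have hdh := det_e h
  obtain ⟨b, hb'⟩ : ∃ b, b = T.1 0 1 := ⟨_, rfl⟩
  obtain ⟨α, hα⟩ : ∃ α, α = h.1 0 0 := ⟨_, rfl⟩
  obtain ⟨ω, hω⟩ : ∃ ω, ω = h.1 1 1 := ⟨_, rfl⟩
  obtain ⟨γ, hγ⟩ : ∃ γ, γ = h.1 1 0 := ⟨_, rfl⟩
  rw [← hb'] at h01 hs
  rw [← hα, ← hω, ← hγ, h01] at hdh
  rw [← hα] at h00 hs
  have cop1 : IsCoprime α b := by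
    have := NTL.coprime_mod (a := α) (b := 1) (c := b) ⟨s, hs⟩ isCoprime_one_left
    exact this
  have cop2 : IsCoprime α (x * b) := ⟨ω, -γ, by linear_combination hdh⟩
  obtain ⟨g1, g10, g11⟩ := exists_row (a := α ^ 2) (b := b) cop1.pow_left
  obtain ⟨g2, g20, g21⟩ := exists_row (a := α ^ 2) (b := x * b) cop2.pow_left
  have t1 : l g1 ≤ 9 * R := by
    have h1 := (H.mulE21 g1 (-(s * (α + 1)))).1
    have h2 := H.unit_le (g := g1 * E21 (-(s * (α + 1)))) (by
      have : (g1 * E21 (-(s * (α + 1)))).1 0 0 = 1 := by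
        simp [g10, g11]; linear_combination (α + 1) * hs
      rw [this]; exact isUnit_one)
    linarith
  have t2 : l g2 ≤ l g1 + 40 * R := by
    refine H.step2 h2u u0 hu0 (κ := x) (A := α ^ 2) (Q := b) ?_ g2 g1 g20 g21 g10 g11
    rw [← hω] at h11
    have e1 : (x * T.1 0 0 + y) * (x * T.1 1 1 + y) - x * b * γ = 1 := by
      rw [← h00, ← h11]; exact hdh
    rw [h00]
    refine ⟨x * T.1 0 0 ^ 2 + 2 * T.1 0 0 * y - (x * T.1 0 0 * T.1 1 1 + T.1 0 0 * y
      + T.1 1 1 * y - b * γ), ?_⟩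
    linear_combination e1
  have t3 := (H.mulE21 g2 γ).2
  have t4 := H.step2neg h2u u0 hu0 (κ := α + ω) (A := α ^ 2 + γ * (x * b)) (Q := x * b)
    ⟨α, by linear_combination -hdh⟩ (h ^ 2) (g2 * E21 γ)
    (by rw [pow_two, mul_e, ← hα, h01, ← hγ]; ring)
    (by rw [pow_two, mul_e, ← hα, h01, ← hω]; ring)
    (by simp [g20, g21]; ring) (by simp [g21])
  linarith

end BL

end SLT


namespace SLT

open Matrix

section Combo

variable {O : Type*} [CommRing O]

theorem fam_bound {G : Type*} [Group G] {l : G → ℝ} {δ C : ℝ} (H : QTLen l δ C)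
    [Module.Finite ℤ O] (e : O → G)
    (he : ∀ x y, e (x + y) = e x * e y) (c : ℝ) (hsq : ∀ x, l ((e x) ^ 2) ≤ l (e x) + c) :
    ∃ B : ℝ, ∀ x, l (e x) ≤ B := by
  classical
  have e0 : e 0 = 1 := by
    have := he 0 0
    rw [add_zero] at this
    exact (mul_eq_left.1 this.symm)
  have en : ∀ x, e (-x) = (e x)⁻¹ := by
    intro x
    have := he (-x) x
    rw [neg_add_cancel, e0] at this
    exact eq_inv_of_mul_eq_one_left this.symm
  let f : Multiplicative O →* G :=
    { toFun := fun x => e x.toAdd, map_one' := e0, map_mul' := fun x y => he _ _ }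
  have ez : ∀ (n : ℤ) x, e (n • x) = (e x) ^ n := by
    intro n x
    exact map_zpow f (Multiplicative.ofAdd x) n
  obtain ⟨S, hS⟩ := (Module.Finite.fg_top : (⊤ : Submodule ℤ O).FG)
  have hcl : ∀ x, e x ∈ Subgroup.closure (e '' (S : Set O)) := by
    intro x
    have hx : x ∈ Submodule.span ℤ (S : Set O) := by rw [hS]; trivial
    induction hx using Submodule.span_induction with
    | mem x h => exact Subgroup.subset_closure ⟨x, h, rfl⟩
    | zero => rw [e0]; exact one_mem _
    | add x y _ _ hx hy => rw [he]; exact mul_mem hx hy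
    | smul a x _ hx => rw [ez]; exact zpow_mem hx a
  have hrange : ∀ h ∈ Subgroup.closure (e '' (S : Set O)), ∃ x, h = e x := by
    intro h hh
    induction hh using Subgroup.closure_induction with
    | mem x h => obtain ⟨y, _, rfl⟩ := h; exact ⟨y, rfl⟩
    | one => exact ⟨0, e0.symm⟩
    | mul x y _ _ hx hy =>
      obtain ⟨a, rfl⟩ := hx
      obtain ⟨b, rfl⟩ := hy
      exact ⟨a + b, (he a b).symm⟩
    | inv x _ hx => obtain ⟨a, rfl⟩ := hx; exact ⟨-a, (en a).symm⟩
  have hbd : ∃ L, ∀ s ∈ e '' (S : Set O), l s ≤ L := by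
    have := ((S.finite_toSet.image e).image l).bddAbove
    obtain ⟨L, hL⟩ := this
    exact ⟨L, fun s hs => hL ⟨s, hs, rfl⟩⟩
  obtain ⟨L, hL⟩ := hbd
  obtain ⟨B, hB⟩ := H.serre _ L c hL (by
    intro h hh
    obtain ⟨x, rfl⟩ := hrange h hh
    exact hsq x)
  exact ⟨B, fun x => hB _ (hcl x)⟩

theorem E12_add (x y : O) : E12 (x + y) = E12 x * E12 y := by
  apply sl_ext <;> simp [add_comm]

theorem exists_BL [IsDedekindDomain O] [CharZero O] [Ring.HasFiniteQuotients O]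
    [Module.Finite ℤ O] {l : SpecialLinearGroup (Fin 2) O → ℝ} {δ C : ℝ} (H : QTLen l δ C)
    (u0 : Oˣ) (hu0 : ∀ m : ℕ, m ≠ 0 → u0 ^ m ≠ 1) : ∃ R, BL l R := by
  have hη : ((u0 : O) ^ 2) ^ 2 - 1 ≠ 0 := by
    intro h
    apply hu0 4 (by norm_num)
    ext
    push_cast
    linear_combination h
  obtain ⟨m, hm, hd⟩ := NTL.exists_nat_dvd hη
  have htau : ∀ x : O, H.tau (E12 x) = 0 := by
    intro x
    refine H.tau_unip E12 E12_add (mk2 (u0 : O) 0 0 ((u0⁻¹ : Oˣ) : O) (by simp)) ((u0 : O) ^ 2)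
      ?_ m hm hd x
    intro y
    rw [mul_inv_eq_iff_eq_mul]
    apply sl_ext <;> simp
    linear_combination (-(u0 : O) * y) * u0.mul_inv
  obtain ⟨B, hB⟩ := fam_bound H E12 E12_add (2 * δ + 1) (fun x => H.sq_le_of_tau (htau x))
  let W : SpecialLinearGroup (Fin 2) O := mk2 0 (-1) 1 0 (by ring)
  have hW : ∀ x : O, E21 x = W * E12 (-x) * W⁻¹ := by
    intro x
    rw [eq_mul_inv_iff_mul_eq]
    apply sl_ext <;> simp [W]
  refine ⟨B + 2 * l W, H.nonneg, H.inv, H.mul, ?_, ?_⟩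
  · intro x
    have := hB x
    have := H.nonneg W
    linarith
  · intro x
    rw [hW]
    have h1 := H.mul3 W (E12 (-x)) W⁻¹
    rw [H.inv] at h1
    have := hB (-x)
    linarith

theorem sq_all [IsDedekindDomain O] [CharZero O] [Ring.HasFiniteQuotients O]
    {l : SpecialLinearGroup (Fin 2) O → ℝ} {δ C R : ℝ} (H : QTLen l δ C)
    (h2u : ¬ IsUnit (2 : O)) (u0 : Oˣ) (hu0 : ∀ m : ℕ, m ≠ 0 → u0 ^ m ≠ 1) (HB : BL l R)
    (T : SpecialLinearGroup (Fin 2) O) : l (T ^ 2) ≤ l T + (2 * δ + 1) := by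
  apply H.sq_le
  obtain ⟨N, hN⟩ := exists_nat_gt (102 * R)
  obtain ⟨k, hk, hk2⟩ := HB.power h2u u0 hu0 (T ^ (N + 1))
  refine ⟨(N + 1) * k - 1, ?_⟩
  have h1 : N + 1 ≤ (N + 1) * k := Nat.le_mul_of_pos_right _ (Nat.pos_of_ne_zero hk)
  have h2 : (N + 1) * k - 1 + 1 = (N + 1) * k := by omega
  rw [h2, pow_mul]
  have h3 : N ≤ (N + 1) * k - 1 := by omega
  have h4 : (N : ℝ) ≤ (((N + 1) * k - 1 : ℕ) : ℝ) := by exact_mod_cast h3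
  linarith

end Combo

section Gen

variable {O : Type*} [CommRing O]

/-- Action on column vectors. -/
def av (g : SpecialLinearGroup (Fin 2) O) (p : O × O) : O × O :=
  (g.1 0 0 * p.1 + g.1 0 1 * p.2, g.1 1 0 * p.1 + g.1 1 1 * p.2)

/-- Determinant of a pair of vectors. -/
def dt (p q : O × O) : O := p.1 * q.2 - p.2 * q.1

theorem av_mul (g h : SpecialLinearGroup (Fin 2) O) (p : O × O) :
    av (g * h) p = av g (av h p) := by
  ext <;> simp [av] <;> ring

theorem av_one (p : O × O) : av 1 p = p := by
  ext <;> simp [av]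

theorem dt_av (g : SpecialLinearGroup (Fin 2) O) (p q : O × O) : dt (av g p) (av g q) = dt p q := by
  have := det_e g
  simp only [dt, av]
  linear_combination (p.1 * q.2 - p.2 * q.1) * this

theorem av_smul (g : SpecialLinearGroup (Fin 2) O) (x : O) (p : O × O) :
    av g (x • p) = x • av g p := by
  ext <;> simp [av] <;> ring

theorem dt_smul (x : O) (p q : O × O) : dt p (x • q) = x * dt p q := by
  simp only [dt, Prod.smul_fst, Prod.smul_snd, smul_eq_mul]; ring

/-- The unipotent family fixing `w`. -/
def Uw (w : O × O) (q : O) : SpecialLinearGroup (Fin 2) O :=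
  mk2 (1 - q * w.1 * w.2) (q * w.1 ^ 2) (-(q * w.2 ^ 2)) (1 + q * w.1 * w.2) (by ring)

theorem Uw_add (w : O × O) (x y : O) : Uw w (x + y) = Uw w x * Uw w y := by
  apply sl_ext <;> simp [Uw] <;> ring

theorem av_Uw (w : O × O) (q : O) (p : O × O) : av (Uw w q) p = p + (q * dt w p) • w := by
  ext <;> simp [av, Uw, dt] <;> ring

/-- The content ideal. -/
def cont (p : O × O) : Ideal O := Ideal.span {p.1, p.2}

theorem cont_smul (x : O) (p : O × O) : cont (x • p) = Ideal.span {x} * cont p := by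
  rw [cont, cont, Ideal.span_mul_span']
  congr 1
  ext y
  simp [Set.mem_mul, eq_comm]

theorem cont_ne {p : O × O} (hp : p ≠ 0) : cont p ≠ ⊥ := by
  intro h
  apply hp
  rw [cont, Ideal.span_eq_bot] at h
  ext
  · exact h _ (by simp)
  · exact h _ (by simp)

theorem equiv_of_cont [IsDedekindDomain O] {p q : O × O} (hp : p ≠ 0) (h : cont p = cont q) :
    ∃ s, av s p = q := by
  obtain ⟨d, hd, hd0⟩ := Submodule.exists_mem_ne_zero_of_ne_bot (cont_ne hp)
  obtain ⟨J, hJ⟩ := Ideal.dvd_iff_le.2 ((Ideal.span_singleton_le_iff_mem _).2 hd)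
  have key : ∀ r : O × O, Ideal.span {d} = cont r * J →
      ∃ x ∈ J, ∃ y ∈ J, r.1 * x + r.2 * y = d := by
    intro r hr
    have hdm : d ∈ cont r * J := by rw [← hr]; exact Ideal.mem_span_singleton_self d
    rw [cont, Ideal.span_insert, Ideal.sup_mul, Submodule.mem_sup] at hdm
    obtain ⟨y, hy, z, hz, hyz⟩ := hdm
    obtain ⟨x1, hx1, rfl⟩ := Ideal.mem_span_singleton_mul.1 hy
    obtain ⟨x2, hx2, rfl⟩ := Ideal.mem_span_singleton_mul.1 hz
    exact ⟨x1, hx1, x2, hx2, hyz⟩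
  obtain ⟨x, hx, y, hy, hxy⟩ := key p hJ
  obtain ⟨x', hx', y', hy', hxy'⟩ := key q (h ▸ hJ)
  have m1 : p.1 ∈ cont p := Ideal.subset_span (by simp)
  have m2 : p.2 ∈ cont p := Ideal.subset_span (by simp)
  have m3 : q.1 ∈ cont p := h ▸ Ideal.subset_span (by simp)
  have m4 : q.2 ∈ cont p := h ▸ Ideal.subset_span (by simp)
  have dv : ∀ z, z ∈ cont p * J → ∃ t, z = d * t := by
    intro z hz
    rw [← hJ] at hz
    exact Ideal.mem_span_singleton.1 hz
  obtain ⟨a, ha⟩ := dv (q.1 * x + p.2 * y')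
    (add_mem (Ideal.mul_mem_mul m3 hx) (Ideal.mul_mem_mul m2 hy'))
  obtain ⟨b, hb⟩ := dv (q.1 * y - p.1 * y')
    (sub_mem (Ideal.mul_mem_mul m3 hy) (Ideal.mul_mem_mul m1 hy'))
  obtain ⟨c, hc⟩ := dv (q.2 * x - p.2 * x')
    (sub_mem (Ideal.mul_mem_mul m4 hx) (Ideal.mul_mem_mul m2 hx'))
  obtain ⟨e, he⟩ := dv (q.2 * y + p.1 * x')
    (add_mem (Ideal.mul_mem_mul m4 hy) (Ideal.mul_mem_mul m1 hx'))
  have hdet : a * e - b * c = 1 := by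
    apply mul_left_cancel₀ (mul_ne_zero hd0 hd0)
    have : d * d * (a * e - b * c) = (d * a) * (d * e) - (d * b) * (d * c) := by ring
    rw [this, ← ha, ← hb, ← hc, ← he]
    linear_combination (q.1 * x' + q.2 * y') * hxy + d * hxy'
  refine ⟨mk2 a b c e hdet, ?_⟩
  ext
  · apply mul_left_cancel₀ hd0
    simp only [av, mk2_00, mk2_01]
    linear_combination -p.1 * ha - p.2 * hb + q.1 * hxy
  · apply mul_left_cancel₀ hd0
    simp only [av, mk2_10, mk2_11]
    linear_combination -p.1 * hc - p.2 * he + q.2 * hxy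

variable [IsDedekindDomain O] [Module.Finite ℤ O] [Module.Free ℤ O]

/-- Absolute norm. -/
noncomputable def nm (x : O) : ℕ := Ideal.absNorm (Ideal.span {x})

theorem nm_mul (x y : O) : nm (x * y) = nm x * nm y := by
  rw [nm, ← Ideal.span_singleton_mul_span_singleton, map_mul]; rfl

theorem nm_eq_zero [CharZero O] {x : O} : nm x = 0 ↔ x = 0 := by
  rw [nm, Ideal.absNorm_eq_zero_iff, Ideal.span_singleton_eq_bot]

theorem exists_reps [CharZero O] [Finite (ClassGroup O)] :
    ∃ W : Set (O × O), W.Finite ∧ (∀ w ∈ W, w ≠ 0) ∧ ∀ p : O × O, p ≠ 0 → ∃ w ∈ W, ∃ s, ∃ x y : O,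
      x ≠ 0 ∧ y ≠ 0 ∧ x • p = y • av s w ∧ nm x ≤ nm y := by
  classical
  let cls : {p : O × O // p ≠ 0} → ClassGroup O := fun p =>
    ClassGroup.mk0 ⟨cont p.1, mem_nonZeroDivisors_of_ne_zero (cont_ne p.2)⟩
  have hmin : ∀ c ∈ Set.range cls, ∃ w, cls w = c ∧ ∀ p, cls p = c →
      Ideal.absNorm (cont w.1) ≤ Ideal.absNorm (cont p.1) := by
    rintro c ⟨p0, hp0⟩
    have hne : {p | cls p = c}.Nonempty := ⟨p0, hp0⟩
    obtain ⟨m, hm1, hm2⟩ := WellFounded.has_min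
      (measure (fun p : {p : O × O // p ≠ 0} => Ideal.absNorm (cont p.1))).wf _ hne
    exact ⟨m, hm1, fun p hp => not_lt.1 (hm2 p hp)⟩
  have hne : Nonempty {p : O × O // p ≠ 0} := ⟨⟨(1, 0), by simp⟩⟩
  choose! w hw1 hw2 using hmin
  refine ⟨(fun c => (w c).1) '' Set.range cls, (Set.toFinite _).image _, ?_, ?_⟩
  · rintro _ ⟨c, _, rfl⟩
    exact (w c).2
  intro p hp
  have hc : cls ⟨p, hp⟩ ∈ Set.range cls := ⟨_, rfl⟩
  refine ⟨_, ⟨_, hc, rfl⟩, ?_⟩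
  have h1 := hw1 _ hc
  have h2 := hw2 _ hc ⟨p, hp⟩ rfl
  set v := w (cls ⟨p, hp⟩) with hv
  obtain ⟨y, x, hy, hx, hxy⟩ := ClassGroup.mk0_eq_mk0_iff.1 h1
  change Ideal.span {y} * cont v.1 = Ideal.span {x} * cont p at hxy
  have hcc : cont (y • v.1) = cont (x • p) := by rw [cont_smul, cont_smul, hxy]
  obtain ⟨s, hs⟩ := equiv_of_cont (smul_ne_zero hy v.2) hcc
  refine ⟨s, x, y, hx, hy, by rw [← hs, av_smul], ?_⟩
  have h3 := congrArg Ideal.absNorm hxy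
  rw [map_mul, map_mul] at h3
  change nm y * _ = nm x * _ at h3
  have h4 : 0 < Ideal.absNorm (cont p) := Nat.pos_of_ne_zero (by
    rw [Ne, Ideal.absNorm_eq_zero_iff]; exact cont_ne hp)
  have h5 : nm x * Ideal.absNorm (cont p) ≤ nm y * Ideal.absNorm (cont p) := by
    rw [← h3]; exact Nat.mul_le_mul_left _ h2
  exact Nat.le_of_mul_le_mul_right h5 h4

theorem exists_approx [CharZero O] : ∃ F : Set O, F.Finite ∧ (0 : O) ∉ F ∧ ∀ a b : O, b ≠ 0 →
    ∃ q, ∃ r ∈ F, nm (r * a - q * b) < nm b := by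
  classical
  let bS := Module.Free.chooseBasis ℤ O
  have : Algebra.IsAlgebraic ℤ O := inferInstance
  refine ⟨(fun n : ℤ => (n : O)) '' (ClassGroup.finsetApprox bS AbsoluteValue.absIsAdmissible : Set ℤ),
    (Finset.finite_toSet _).image _, ?_, ?_⟩
  · rintro ⟨n, hn, h0⟩
    have : n = 0 := Int.cast_eq_zero.1 h0
    rw [this] at hn
    exact ClassGroup.finsetApprox.zero_notMem _ _ hn
  · intro a b hb
    obtain ⟨q, r, hr, h⟩ := ClassGroup.exists_mem_finset_approx' bS AbsoluteValue.absIsAdmissible a hb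
    refine ⟨q, r, ⟨r, hr, rfl⟩, ?_⟩
    rw [nm, nm, Ideal.absNorm_span_singleton, Ideal.absNorm_span_singleton]
    rw [zsmul_eq_mul] at h
    have h' : |Algebra.norm ℤ ((r : O) * a - q * b)| < |Algebra.norm ℤ b| := h
    rw [Int.abs_eq_natAbs, Int.abs_eq_natAbs] at h'
    exact_mod_cast h'

theorem gen_bound [CharZero O] [Ring.HasFiniteQuotients O] [Finite (ClassGroup O)]
    {l : SpecialLinearGroup (Fin 2) O → ℝ} {δ C c R : ℝ} (H : QTLen l δ C)
    (HB : BL l R) (hsq : ∀ T, l (T ^ 2) ≤ l T + c) : ∃ B, ∀ g, l g ≤ B := by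
  classical
  obtain ⟨W, hWf, hW0, hW⟩ := exists_reps (O := O)
  obtain ⟨F, hFf, hF0, hF⟩ := exists_approx (O := O)
  -- complementary vectors
  have hz : ∀ w ∈ W, ∃ z, dt w z ≠ 0 := by
    intro w hw
    by_contra! hcon
    apply hW0 w hw
    have h1 := hcon (0, 1)
    have h2 := hcon (1, 0)
    simp [dt] at h1 h2
    exact Prod.ext h1 h2
  choose! z hz using hz
  -- finite sets of representatives
  have hrep : ∀ m : O, m ≠ 0 → ∃ Q : Set O, Q.Finite ∧ ∀ q, ∃ q0 ∈ Q, ∃ q1, q = m * q1 + q0 := by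
    intro m hm
    have : Finite (O ⧸ Ideal.span {m}) := Ring.HasFiniteQuotients.finiteQuotient (by
      rwa [Ne, Ideal.span_singleton_eq_bot])
    refine ⟨Set.range (fun x : O ⧸ Ideal.span {m} => Quotient.out x), Set.finite_range _, ?_⟩
    intro q
    refine ⟨_, ⟨Ideal.Quotient.mk _ q, rfl⟩, ?_⟩
    have h1 : Ideal.Quotient.mk (Ideal.span {m}) q = Ideal.Quotient.mk (Ideal.span {m})
      (Quotient.out (Ideal.Quotient.mk (Ideal.span {m}) q)) :=
        (Ideal.Quotient.mk_out _).symm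
    rw [Ideal.Quotient.mk_eq_mk_iff_sub_mem, Ideal.mem_span_singleton] at h1
    obtain ⟨t, ht⟩ := h1
    exact ⟨t, by rw [← ht]; ring⟩
  choose! Q hQf hQ using hrep
  let T0 : Set (O × O) := ⋃ w ∈ W, ⋃ r ∈ F, (fun q0 => r • z w + q0 • w) '' Q (dt w (z w) * r)
  have hmne : ∀ w ∈ W, ∀ r ∈ F, dt w (z w) * r ≠ 0 := fun w hw r hr =>
    mul_ne_zero (hz w hw) (fun h => hF0 (h ▸ hr))
  have hT0f : T0.Finite := by
    refine hWf.biUnion fun w hw => hFf.biUnion fun r hr => (hQf _ (hmne w hw r hr)).image _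
  have hT00 : ∀ t ∈ T0, t ≠ 0 := by
    intro t ht h0
    simp only [T0, Set.mem_iUnion] at ht
    obtain ⟨w, hw, r, hr, q0, _, rfl⟩ := ht
    apply hmne w hw r hr
    have : dt w (r • z w + q0 • w) = dt w (z w) * r := by
      simp [dt]; ring
    rw [← this]
    simp only at h0
    rw [h0]; simp [dt]
  have hs : ∀ t ∈ T0, ∃ s, ∃ w ∈ W, ∃ x y : O,
      x ≠ 0 ∧ y ≠ 0 ∧ x • t = y • av s w ∧ nm x ≤ nm y := by
    intro t ht
    obtain ⟨w, hw, s, hh⟩ := hW t (hT00 t ht)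
    exact ⟨s, w, hw, hh⟩
  choose! s hs using hs
  have hg0 : ∀ w : O × O, ∃ g0 : SpecialLinearGroup (Fin 2) O,
      (∃ g, dt (av g (1, 0)) w = 0) → dt (av g0 (1, 0)) w = 0 := by
    intro w
    by_cases h : ∃ g, dt (av g (1, 0)) w = 0
    · exact ⟨h.choose, fun _ => h.choose_spec⟩
    · exact ⟨1, fun h' => absurd h' h⟩
  choose g0 hg0 using hg0
  -- generating set
  let S : Set (SpecialLinearGroup (Fin 2) O) :=
    ((⋃ w ∈ W, Set.range (Uw w)) ∪ {g | g.1 1 0 = 0}) ∪ (s '' T0 ∪ g0 '' W)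
  have hSb : BddAbove (l '' S) := by
    simp only [S, Set.image_union]
    refine BddAbove.union (BddAbove.union ?_ ?_) (BddAbove.union ?_ ?_)
    · rw [Set.image_iUnion₂]
      refine (hWf.bddAbove_biUnion).2 fun w hw => ?_
      obtain ⟨B, hB⟩ := fam_bound H (Uw w) (Uw_add w) c (fun x => hsq _)
      refine ⟨B, ?_⟩
      rintro _ ⟨_, ⟨x, rfl⟩, rfl⟩
      exact hB x
    · refine ⟨8 * R, ?_⟩
      rintro _ ⟨g, hg, rfl⟩
      apply HB.unit_le
      have := det_e g
      rw [show g.1 1 0 = 0 from hg] at this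
      exact IsUnit.of_mul_eq_one (g.1 1 1) (by linear_combination this)
    · exact ((hT0f.image _).image _).bddAbove
    · exact ((hWf.image _).image _).bddAbove
  obtain ⟨L, hL⟩ := hSb
  obtain ⟨B, hB⟩ := H.serre S L c (fun s hs => hL ⟨s, hs, rfl⟩) (fun h _ => hsq h)
  refine ⟨B, fun g => hB g ?_⟩
  set K := Subgroup.closure S with hK
  have desc : ∀ n : ℕ, ∀ h ∈ K, ∀ w ∈ W, nm (dt (av g (1, 0)) (av h w)) ≤ n →
      ∃ h ∈ K, ∃ w ∈ W, dt (av g (1, 0)) (av h w) = 0 := by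
    intro n
    induction n with
    | zero =>
      intro h hh w hw hn
      exact ⟨h, hh, w, hw, nm_eq_zero.1 (Nat.le_zero.1 hn)⟩
    | succ n ih =>
      intro h hh w hw hn
      by_cases h0 : dt (av g (1, 0)) (av h w) = 0
      · exact ⟨h, hh, w, hw, h0⟩
      set v := av h⁻¹ (av g (1, 0)) with hv
      have hvh : ∀ p, dt (av g (1, 0)) (av h p) = dt v p := by
        intro p
        rw [← dt_av h v p, hv, ← av_mul, mul_inv_cancel, av_one]
      rw [hvh] at h0 hn
      obtain ⟨q, r, hr, hlt⟩ := hF (dt v (z w)) (dt v w) h0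
      obtain ⟨q0, hq0, q1, hq1⟩ := hQ _ (hmne w hw r hr) (-q)
      have htm : r • z w + q0 • w ∈ T0 := by
        simp only [T0, Set.mem_iUnion]
        exact ⟨w, hw, r, hr, q0, hq0, rfl⟩
      set t := r • z w + q0 • w with ht
      obtain ⟨w', hw', x, y, hx, hy, hxy, hnm⟩ := hs t htm
      have hmem : h * Uw w q1 * s t ∈ K := by
        refine mul_mem (mul_mem hh (Subgroup.subset_closure (Or.inl (Or.inl ?_))))
          (Subgroup.subset_closure (Or.inr (Or.inl ⟨t, htm, rfl⟩)))
        simp only [Set.mem_iUnion]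
        exact ⟨w, hw, q1, rfl⟩
      refine ih _ hmem w' hw' ?_
      rw [av_mul, av_mul, hvh]
      have e1 : dt v (av (Uw w q1) t) = r * dt v (z w) - q * dt v w := by
        rw [av_Uw, ht]
        simp only [dt, Prod.smul_fst, Prod.smul_snd, smul_eq_mul, Prod.fst_add, Prod.snd_add] at hq1 ⊢
        linear_combination (-(v.1 * w.2 - v.2 * w.1)) * hq1
      have e2 : x * dt v (av (Uw w q1) t) = y * dt v (av (Uw w q1) (av (s t) w')) := by
        rw [← dt_smul, ← dt_smul, ← av_smul, ← av_smul, hxy]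
      have e3 := congrArg nm e2
      rw [nm_mul, nm_mul, e1] at e3
      have hy' : 0 < nm y := Nat.pos_of_ne_zero (fun h => hy (nm_eq_zero.1 h))
      have e4 : nm (dt v (av (Uw w q1) (av (s t) w'))) ≤ nm (r * dt v (z w) - q * dt v w) := by
        refine Nat.le_of_mul_le_mul_left ?_ hy'
        rw [← e3]
        exact Nat.mul_le_mul_right _ hnm
      omega
  obtain ⟨w, hw, -⟩ := hW (1, 0) (by simp)
  obtain ⟨h, hh, w, hw, hz0⟩ := desc _ 1 (one_mem _) w hw le_rfl
  -- final step
  have h1 : dt (av (h⁻¹ * g) (1, 0)) w = 0 := by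
    rw [← dt_av h, ← av_mul, mul_inv_cancel_left]; exact hz0
  have h2 := hg0 w ⟨_, h1⟩
  have h3 : dt (av (h⁻¹ * g) (1, 0)) (av (g0 w) (1, 0)) = 0 := by
    have hw0 := hW0 w hw
    simp only [dt] at h1 h2 ⊢
    set p := av (h⁻¹ * g) (1, 0)
    set p' := av (g0 w) (1, 0)
    by_cases hw1 : w.1 = 0
    · have hw2 : w.2 ≠ 0 := fun h => hw0 (Prod.ext hw1 h)
      apply mul_left_cancel₀ hw2
      linear_combination p'.2 * h1 - p.2 * h2
    · apply mul_left_cancel₀ hw1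
      linear_combination p'.1 * h1 - p.1 * h2
  have h4 : (g0 w)⁻¹ * (h⁻¹ * g) ∈ S := by
    refine Or.inl (Or.inr ?_)
    have h5 : dt (av ((g0 w)⁻¹ * (h⁻¹ * g)) (1, 0)) (1, 0) = 0 := by
      rw [← dt_av (g0 w), ← av_mul, mul_inv_cancel_left]; exact h3
    simp only [dt, av, mul_zero, mul_one, zero_sub, add_zero, neg_eq_zero] at h5
    exact h5
  have h5 : g = h * (g0 w * ((g0 w)⁻¹ * (h⁻¹ * g))) := by group
  rw [h5]
  exact mul_mem hh (mul_mem (Subgroup.subset_closure (Or.inr (Or.inr ⟨w, hw, rfl⟩)))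
    (Subgroup.subset_closure h4))

end Gen

end SLT

open NumberField

/-- If the ring of integers `𝓞 K` of a number field `K` has infinitely many
units, then every isometric action of `SL(2, 𝓞 K)` on a metric space `X` admitting a
quasi-isometry to a simplicial tree `T` has bounded orbits. -/
theorem sl2_action_on_quasitree_bounded_orbit
    (K : Type*) [Field K] [NumberField K]
    (hunits : Infinite (𝓞 K)ˣ)
    (X : Type*) [MetricSpace X]
    -- a simplicial tree `T` on vertex set `V`, with its graph metric
    (V : Type*) (T : SimpleGraph V) (hT : T.IsTree)
    -- a quasi-isometry from `X` to the tree
    (q : X → V) (Kq Cq : ℝ) (hKq : 1 ≤ Kq) (hCq : 0 ≤ Cq)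
    (hqi_lower : ∀ x₁ x₂ : X, dist x₁ x₂ / Kq - Cq ≤ (T.dist (q x₁) (q x₂) : ℝ))
    (hqi_upper : ∀ x₁ x₂ : X, (T.dist (q x₁) (q x₂) : ℝ) ≤ Kq * dist x₁ x₂ + Cq)
    (hdense : ∀ v : V, ∃ x : X, (T.dist v (q x) : ℝ) ≤ Cq)
    -- an action of `SL(2, 𝓞 K)` on `X` by isometries
    (ρ : Matrix.SpecialLinearGroup (Fin 2) (𝓞 K) →* (X ≃ᵢ X))
    (x : X) :
    Bornology.IsBounded (Set.range fun g : Matrix.SpecialLinearGroup (Fin 2) (𝓞 K) => ρ g x) := by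
  classical
  have hne : Nonempty X := ⟨x⟩
  -- a unit of infinite order
  obtain ⟨u0, hu0⟩ : ∃ u0 : (𝓞 K)ˣ, ∀ m : ℕ, m ≠ 0 → u0 ^ m ≠ 1 := by
    by_contra! hcon
    have htop : ∀ u : (𝓞 K)ˣ, u ∈ NumberField.Units.torsion K := by
      intro u
      obtain ⟨m, hm, h⟩ := hcon u
      exact (CommGroup.mem_torsion u).2 (isOfFinOrder_iff_pow_eq_one.2 ⟨m, Nat.pos_of_ne_zero hm, h⟩)
    have hfin : Finite (NumberField.Units.torsion K) := inferInstance
    have : Finite (𝓞 K)ˣ := Finite.of_injective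
      (fun u => (⟨u, htop u⟩ : NumberField.Units.torsion K))
      (fun a b h => congrArg Subtype.val h)
    exact not_finite (𝓞 K)ˣ
  have h2u : ¬ IsUnit (2 : 𝓞 K) := by
    intro h
    have h1 := (Ideal.absNorm_span_natCast (S := 𝓞 K) 2)
    have h3 : Ideal.span {((2 : ℕ) : 𝓞 K)} = ⊤ := by
      rw [Ideal.span_singleton_eq_top]; exact_mod_cast h
    rw [h3, Ideal.absNorm_top] at h1
    have h4 : 0 < Module.finrank ℤ (𝓞 K) := Module.finrank_pos
    have h5 : 1 < 2 ^ Module.finrank ℤ (𝓞 K) := Nat.one_lt_two_pow h4.ne'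
    omega
  obtain ⟨r, lam, HQ⟩ := QTree.cgraph_qg hT q Kq Cq hKq hCq hqi_lower hqi_upper hdense
  have HL := HQ.qtlen (fun (g : Matrix.SpecialLinearGroup (Fin 2) (𝓞 K)) y => ρ g y) x
    (by simp) (fun g h => by simp) (fun g a b => QTree.cgraph_iso HQ.conn (ρ g) a b)
  obtain ⟨R, HB⟩ := SLT.exists_BL HL u0 hu0
  obtain ⟨B, hB⟩ := SLT.gen_bound HL HB (SLT.sq_all HL h2u u0 hu0 HB)
  rw [Metric.isBounded_iff_subset_closedBall x]
  refine ⟨|r| * B, ?_⟩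
  rintro _ ⟨g, rfl⟩
  rw [Metric.mem_closedBall, dist_comm]
  refine (QTree.cgraph_dist HQ.conn _ _).trans ?_
  have h1 := hB g
  have h2 : (0 : ℝ) ≤ ((QTree.cgraph X r).dist x (ρ g x) : ℝ) := by positivity
  calc r * ((QTree.cgraph X r).dist x (ρ g x) : ℝ)
      ≤ |r| * ((QTree.cgraph X r).dist x (ρ g x) : ℝ) :=
        mul_le_mul_of_nonneg_right (le_abs_self r) h2
    _ ≤ |r| * B := mul_le_mul_of_nonneg_left h1 (abs_nonneg r)
end

section
/- Let 𝒪 = 𝓞_K be the ring of integers of a number field K and let n ≥ 3. For every action of SL(n, 𝓞_K) by isometries on a geodesic metric space X that is δ-hyperbolic (four-point condition) for some δ ≥ 0, no element of SL(n,𝓞_K) acts hyperbolically: for every g ∈ SL(n,𝓞_K) and every x ∈ X, the map ℤ → X, k ↦ gᵏ·x, is not a quasi-isometric embedding. -/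
open NumberField

namespace HypRig

open Filter Topology

section Metric

variable {G : Type*} [Group G] {X : Type*} [MetricSpace X]

/-- Four-point hyperbolicity. -/
def Hyp (X : Type*) [MetricSpace X] (δ : ℝ) : Prop :=
  ∀ p₁ p₂ p₃ p₄ : X, dist p₁ p₄ + dist p₂ p₃ ≤
    max (dist p₁ p₂ + dist p₃ p₄) (dist p₁ p₃ + dist p₂ p₄) + 2 * δ

/-- Twice the Gromov product. -/
def gp (x y z : X) : ℝ := dist x y + dist x z - dist y z

/-- Sequences converging to the same point at infinity. -/
def Eqv (x : X) (y z : ℕ → X) : Prop := Tendsto (fun m => gp x (y m) (z m)) atTop atTop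

theorem Eqv.symm {x : X} {y z : ℕ → X} (h : Eqv x y z) : Eqv x z y := by
  unfold Eqv at *
  convert h using 2 with m
  unfold gp
  rw [dist_comm (z m) (y m)]; ring

theorem Eqv.trans {δ : ℝ} (hX : Hyp X δ) {x : X} {y z w : ℕ → X}
    (h : Eqv x y z) (h' : Eqv x z w) : Eqv x y w := by
  unfold Eqv at *
  rw [tendsto_atTop] at *
  intro b
  filter_upwards [h (b + 2 * δ), h' (b + 2 * δ)] with m h1 h2
  unfold gp at *
  have h3 := hX (y m) (z m) x (w m)
  rw [dist_comm (z m) x, dist_comm (y m) x] at h3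
  rcases le_total (dist (y m) (z m) + dist x (w m)) (dist x (y m) + dist (z m) (w m)) with h4 | h4
  · rw [max_eq_right h4] at h3; linarith
  · rw [max_eq_left h4] at h3; linarith

theorem Eqv.smul (ρ : G →* (X ≃ᵢ X)) (g : G) {x : X} {y z : ℕ → X} (h : Eqv x y z) :
    Eqv x (fun m => ρ g (y m)) (fun m => ρ g (z m)) := by
  unfold Eqv at *
  rw [tendsto_atTop] at *
  intro b
  filter_upwards [h (b + 2 * dist x (ρ g x))] with m h1
  unfold gp at *
  rw [(ρ g).dist_eq]
  have h2 := dist_triangle (ρ g x) x (ρ g (y m))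
  have h3 := dist_triangle (ρ g x) x (ρ g (z m))
  rw [(ρ g).dist_eq, dist_comm (ρ g x) x] at h2 h3
  linarith

theorem Eqv.of_bdd {x : X} {y z : ℕ → X} (hy : Tendsto (fun m => dist x (y m)) atTop atTop)
    (C : ℝ) (h : ∀ m, dist (y m) (z m) ≤ C) : Eqv x y z := by
  unfold Eqv
  rw [tendsto_atTop] at *
  intro b
  filter_upwards [hy (b + C)] with m h1
  unfold gp
  have h2 := dist_triangle x (z m) (y m)
  rw [dist_comm (z m)] at h2
  have := h m
  have := dist_nonneg (x := y m) (y := z m)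
  have := dist_nonneg (x := x) (y := z m)
  linarith

theorem Eqv.tendsto_left {x : X} {y z : ℕ → X} (h : Eqv x y z) :
    Tendsto (fun m => dist x (y m)) atTop atTop := by
  unfold Eqv at h
  rw [tendsto_atTop] at *
  intro b
  filter_upwards [h (2 * b)] with m h1
  unfold gp at h1
  have h2 := dist_triangle x (y m) (z m)
  linarith

theorem Eqv.refl_of {x : X} {y : ℕ → X} (h : Tendsto (fun m => dist x (y m)) atTop atTop) :
    Eqv x y y := Eqv.of_bdd h 0 (fun m => by simp)

/-- The coarse stabilizer of the point at infinity given by a sequence. -/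
def stab {δ : ℝ} (hX : Hyp X δ) (ρ : G →* (X ≃ᵢ X)) (x : X) (y : ℕ → X)
    (hy : Tendsto (fun m => dist x (y m)) atTop atTop) : Subgroup G where
  carrier := {g | Eqv x (fun m => ρ g (y m)) y}
  one_mem' := by simpa using Eqv.refl_of hy
  mul_mem' := by
    intro a b ha hb
    have := (Eqv.smul ρ a hb).trans hX ha
    simpa [map_mul] using this
  inv_mem' := by
    intro a ha
    have := (Eqv.smul ρ a⁻¹ ha).symm
    simpa [← IsometryEquiv.mul_apply, ← map_mul] using this

theorem mem_stab {δ : ℝ} (hX : Hyp X δ) (ρ : G →* (X ≃ᵢ X)) (x : X) (y : ℕ → X)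
    (hy : Tendsto (fun m => dist x (y m)) atTop atTop) (g : G) :
    g ∈ stab hX ρ x y hy ↔ Eqv x (fun m => ρ g (y m)) y := Iff.rfl

theorem mem_stab_of_eqv {δ : ℝ} (hX : Hyp X δ) (ρ : G →* (X ≃ᵢ X)) (x : X) (y z : ℕ → X)
    (hy : Tendsto (fun m => dist x (y m)) atTop atTop) (g : G) (hyz : Eqv x y z)
    (C : ℝ) (h : ∀ m, dist (z m) (ρ g (z m)) ≤ C) : g ∈ stab hX ρ x y hy := by
  rw [mem_stab]
  have h1 := Eqv.of_bdd hyz.symm.tendsto_left C h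
  exact ((Eqv.smul ρ g hyz).trans hX h1.symm).trans hX hyz.symm

theorem exists_qm {δ : ℝ} (hX : Hyp X δ) (ρ : G →* (X ≃ᵢ X)) (x : X) (y : ℕ → X)
    (hy : Tendsto (fun m => dist x (y m)) atTop atTop) :
    ∃ β : G → ℝ, (∀ g, ∀ h ∈ stab hX ρ x y hy, |β (g * h) - β g - β h| ≤ 2 * δ) ∧
      ∀ B : ℝ, ∀ h : G, |β h⁻¹| ≤ B → |β (h * h)⁻¹| ≤ B →
        dist x (ρ (h * h) x) ≤ dist x (ρ h x) + 2 * B + 2 * δ := by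
  let F : Ultrafilter ℕ := Ultrafilter.of atTop
  have hF : (F : Filter ℕ) ≤ atTop := Ultrafilter.of_le atTop
  let φ : G → ℕ → ℝ := fun g m => dist (ρ g⁻¹ x) (y m) - dist x (y m)
  have hφ : ∀ g, ∃ b, Tendsto (φ g) F (𝓝 b) := by
    intro g
    have hc : IsCompact (Set.Icc (-dist (ρ g⁻¹ x) x) (dist (ρ g⁻¹ x) x)) := isCompact_Icc
    have := hc.ultrafilter_le_nhds (F.map (φ g)) (by
      rw [le_principal_iff]
      refine Filter.mem_map.mpr (Filter.Eventually.of_forall (fun m => ?_))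
      have h1 := dist_triangle (ρ g⁻¹ x) x (y m)
      have h2 := dist_triangle x (ρ g⁻¹ x) (y m)
      rw [dist_comm x (ρ g⁻¹ x)] at h2
      constructor <;> simp only [φ] <;> linarith)
    obtain ⟨b, -, hb⟩ := this
    exact ⟨b, hb⟩
  choose β hβ using hφ
  refine ⟨β, ?_, ?_⟩
  · intro g h hh
    rw [mem_stab] at hh
    have hlim : Tendsto (fun m => |φ (g * h) m - φ g m - φ h m|) F
        (𝓝 |β (g * h) - β g - β h|) :=
      (((hβ (g * h)).sub (hβ g)).sub (hβ h)).abs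
    refine le_of_tendsto hlim ?_
    unfold Eqv at hh
    rw [tendsto_atTop] at hh
    refine hF ?_
    filter_upwards [hh (2 * dist x (ρ g⁻¹ x) + 2 * δ + 1)] with m hm
    unfold gp at hm
    have e1 : dist (ρ (g * h)⁻¹ x) (y m) = dist (ρ g⁻¹ x) (ρ h (y m)) := by
      rw [← (ρ h).dist_eq, mul_inv_rev, map_mul, IsometryEquiv.mul_apply,
        ← IsometryEquiv.mul_apply, ← map_mul]
      simp
    have e2 : dist (ρ h⁻¹ x) (y m) = dist x (ρ h (y m)) := by
      rw [← (ρ h).dist_eq, ← IsometryEquiv.mul_apply, ← map_mul]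
      simp
    simp only [φ, e1, e2]
    set p := ρ g⁻¹ x
    set q := ρ h (y m)
    have h1 := hX p q x (y m)
    have h2 := hX p (y m) x q
    have t1 := dist_triangle x p q
    have t2 := dist_triangle x p (y m)
    rw [dist_comm (y m) q] at h2
    rw [dist_comm q x] at h1
    rw [dist_comm (y m) x] at h2
    rw [dist_comm p x] at h1 h2
    have h1' : dist p (y m) + dist x q ≤ dist p q + dist x (y m) + 2 * δ := by
      rcases le_total (dist p q + dist x (y m)) (dist x p + dist q (y m)) with h4 | h4
      · rw [max_eq_right h4] at h1; linarith
      · rw [max_eq_left h4] at h1; linarith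
    have h2' : dist p q + dist x (y m) ≤ dist p (y m) + dist x q + 2 * δ := by
      rcases le_total (dist p (y m) + dist x q) (dist x p + dist q (y m)) with h4 | h4
      · rw [max_eq_right h4] at h2; linarith
      · rw [max_eq_left h4] at h2; linarith
    rw [abs_le]; constructor <;> linarith
  · intro B h h1 h2
    have hlim : Tendsto (fun m => dist x (ρ (h * h) x) + φ h⁻¹ m) F
        (𝓝 (dist x (ρ (h * h) x) + β h⁻¹)) := (hβ h⁻¹).const_add _
    have hlim2 : Tendsto (fun m => dist x (ρ h x) + max (φ (h * h)⁻¹ m) 0 + 2 * δ) F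
        (𝓝 (dist x (ρ h x) + max (β (h * h)⁻¹) 0 + 2 * δ)) :=
      (((hβ (h * h)⁻¹).max tendsto_const_nhds).const_add _).add_const _
    have := le_of_tendsto_of_tendsto' hlim hlim2 (fun m => ?_)
    · rw [abs_le] at h1 h2
      have : max (β (h * h)⁻¹) 0 ≤ B := max_le (by linarith) (by linarith)
      linarith
    · simp only [φ, inv_inv]
      have h4 := hX x (ρ h x) (y m) (ρ (h * h) x)
      have e : dist (ρ h x) (ρ (h * h) x) = dist x (ρ h x) := by
        rw [map_mul, IsometryEquiv.mul_apply, (ρ h).dist_eq]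
      rw [e, dist_comm (y m) (ρ (h * h) x)] at h4
      have k1 := le_max_left (dist (ρ (h * h) x) (y m) - dist x (y m)) 0
      have k2 := le_max_right (dist (ρ (h * h) x) (y m) - dist x (y m)) 0
      rcases le_total (dist x (ρ h x) + dist (ρ (h * h) x) (y m))
        (dist x (y m) + dist x (ρ h x)) with h5 | h5
      · rw [max_eq_right h5] at h4; linarith
      · rw [max_eq_left h5] at h4; linarith

/-- Displacement. -/
def len (ρ : G →* (X ≃ᵢ X)) (x : X) (g : G) : ℝ := dist x (ρ g x)

theorem len_mul (ρ : G →* (X ≃ᵢ X)) (x : X) (g h : G) :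
    len ρ x (g * h) ≤ len ρ x g + len ρ x h := by
  unfold len
  have := dist_triangle x (ρ g x) (ρ g (ρ h x))
  rw [(ρ g).dist_eq] at this
  simpa [map_mul] using this

theorem len_inv (ρ : G →* (X ≃ᵢ X)) (x : X) (g : G) : len ρ x g⁻¹ = len ρ x g := by
  unfold len
  rw [← (ρ g).dist_eq, ← IsometryEquiv.mul_apply, ← map_mul, dist_comm]
  simp

theorem len_one (ρ : G →* (X ≃ᵢ X)) (x : X) : len ρ x 1 = 0 := by
  simp [len]

theorem len_nonneg (ρ : G →* (X ≃ᵢ X)) (x : X) (g : G) : 0 ≤ len ρ x g := dist_nonneg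

theorem dist_smul (ρ : G →* (X ≃ᵢ X)) (x : X) (g h : G) :
    dist (ρ g x) (ρ h x) = len ρ x (g⁻¹ * h) := by
  unfold len
  rw [← (ρ g).dist_eq x, ← IsometryEquiv.mul_apply, ← map_mul]
  simp

/-- An element with sublinear doubling displacement is not loxodromic. -/
theorem not_qi (ρ : G →* (X ≃ᵢ X)) (x : X) (g : G) (N : ℕ) (hN : 0 < N) (C : ℝ)
    (h : ∀ j : ℕ, len ρ x (g ^ (N * j) * g ^ (N * j)) ≤ len ρ x (g ^ (N * j)) + C) :
    ¬ ∃ Kq Cq : ℝ, 1 ≤ Kq ∧ 0 ≤ Cq ∧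
      ∀ k l : ℤ, dist k l / Kq - Cq ≤ dist (ρ (g ^ k) x) (ρ (g ^ l) x) ∧
        dist (ρ (g ^ k) x) (ρ (g ^ l) x) ≤ Kq * dist k l + Cq := by
  rintro ⟨Kq, Cq, hK, hC, hq⟩
  have hK0 : 0 < Kq := by linarith
  have h1 : ∀ j : ℕ, len ρ x (g ^ (N * 2 ^ j)) ≤ len ρ x (g ^ N) + j * C := by
    intro j
    induction j with
    | zero => simp
    | succ j ih =>
      have := h (2 ^ j)
      rw [← pow_add] at this
      rw [show N * 2 ^ (j + 1) = N * 2 ^ j + N * 2 ^ j by ring]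
      push_cast
      linarith
  have h2 : ∀ j : ℕ, ((2 : ℝ) ^ j) / Kq - Cq ≤ len ρ x (g ^ (N * 2 ^ j)) := by
    intro j
    have := (hq 0 ((N * 2 ^ j : ℕ) : ℤ)).1
    rw [zpow_zero, zpow_natCast] at this
    simp only [map_one, IsometryEquiv.coe_one, id_eq] at this
    refine le_trans ?_ this
    have hd : dist (0 : ℤ) ((N * 2 ^ j : ℕ) : ℤ) = (N : ℝ) * 2 ^ j := by
      rw [Int.dist_eq]
      push_cast
      rw [zero_sub, abs_neg, abs_of_nonneg (by positivity)]
    rw [hd]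
    have : (1 : ℝ) ≤ N := by exact_mod_cast hN
    gcongr
    have : (0 : ℝ) < 2 ^ j := by positivity
    nlinarith
  have h3 : ∀ j : ℕ, (2 : ℝ) ^ j ≤ Kq * (len ρ x (g ^ N) + Cq) + j * (Kq * C) := by
    intro j
    have := (h2 j).trans (h1 j)
    have h4 : (2 : ℝ) ^ j / Kq ≤ len ρ x (g ^ N) + j * C + Cq := by linarith
    rw [div_le_iff₀ hK0] at h4
    linarith
  have t1 : Tendsto (fun j : ℕ => (j : ℝ) ^ 1 / (2 : ℝ) ^ j) atTop (𝓝 0) :=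
    tendsto_pow_const_div_const_pow_of_one_lt 1 (by norm_num)
  have t0 : Tendsto (fun j : ℕ => (j : ℝ) ^ 0 / (2 : ℝ) ^ j) atTop (𝓝 0) :=
    tendsto_pow_const_div_const_pow_of_one_lt 0 (by norm_num)
  have t2 := (t0.const_mul (Kq * (len ρ x (g ^ N) + Cq))).add (t1.const_mul (Kq * C))
  have := ge_of_tendsto' (b := 1) t2 (fun j => by
    have hp : (0 : ℝ) < 2 ^ j := by positivity
    have := h3 j
    rw [← mul_div_assoc, ← mul_div_assoc, ← add_div, le_div_iff₀ hp]
    simp only [pow_zero, pow_one]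
    linarith)
  norm_num at this

end Metric
end HypRig

namespace HypRig

open Filter Topology
open Pointwise

section Alg

set_option linter.unusedSectionVars false
set_option linter.unusedSimpArgs false

open Matrix

variable {α β γ : Type*} [Fintype α] [DecidableEq α] [Fintype β] [DecidableEq β]
  [Fintype γ] [DecidableEq γ] {R : Type*} [CommRing R]

/-- Elementary matrix. -/
abbrev el {i j : α} (h : i ≠ j) (t : R) : SpecialLinearGroup α R :=
  SpecialLinearGroup.transvection h t

theorem val_mul (A B : SpecialLinearGroup α R) : (A * B).1 = A.1 * B.1 := rfl

theorem val_el {i j : α} (h : i ≠ j) (t : R) : (el h t).1 = Matrix.transvection i j t := rfl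

/-- Inclusion matrix. -/
def inc (R : Type*) [CommRing R] (f : α ↪ β) : Matrix β α R :=
  Matrix.of fun b a => if b = f a then 1 else 0

theorem inc_tr_mul (f : α ↪ β) : (inc R f)ᵀ * inc R f = 1 := by
  ext i j
  simp [inc, Matrix.mul_apply, Matrix.one_apply, f.injective.eq_iff, eq_comm]

/-- Block embedding of matrices. -/
def embM (f : α ↪ β) (A : Matrix α α R) : Matrix β β R :=
  1 + inc R f * (A - 1) * (inc R f)ᵀ

theorem embM_apply (f : α ↪ β) (A : Matrix α α R) (i j : α) : embM f A (f i) (f j) = A i j := by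
  simp [embM, inc, Matrix.mul_apply, Matrix.one_apply, f.injective.eq_iff]

theorem embM_apply_left (f : α ↪ β) (A : Matrix α α R) (i j : β) (hi : ∀ a, i ≠ f a) :
    embM f A i j = (1 : Matrix β β R) i j := by
  simp [embM, inc, Matrix.mul_apply, hi]

theorem embM_apply_right (f : α ↪ β) (A : Matrix α α R) (i j : β) (hj : ∀ a, j ≠ f a) :
    embM f A i j = (1 : Matrix β β R) i j := by
  simp [embM, inc, Matrix.mul_apply, hj]

theorem embM_mul (f : α ↪ β) (A B : Matrix α α R) :
    embM f (A * B) = embM f A * embM f B := by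
  unfold embM
  have h := inc_tr_mul (R := R) f
  have h2 : inc R f * (A - 1) * (inc R f)ᵀ * (inc R f * (B - 1) * (inc R f)ᵀ)
      = inc R f * ((A - 1) * (B - 1)) * (inc R f)ᵀ := by
    calc _ = inc R f * (A - 1) * ((inc R f)ᵀ * inc R f) * (B - 1) * (inc R f)ᵀ := by
          simp only [Matrix.mul_assoc]
      _ = _ := by rw [h]; simp only [Matrix.mul_assoc, Matrix.one_mul, Matrix.mul_one]
  rw [mul_add, add_mul, add_mul, h2, mul_one, one_mul, mul_one]
  have h3 : A * B - 1 = (A - 1) + (B - 1) + (A - 1) * (B - 1) := by noncomm_ring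
  rw [h3, Matrix.mul_add, Matrix.mul_add, Matrix.add_mul, Matrix.add_mul]
  abel

theorem embM_det (f : α ↪ β) (A : Matrix α α R) : (embM f A).det = A.det := by
  unfold embM
  rw [Matrix.mul_assoc, Matrix.det_one_add_mul_comm, Matrix.mul_assoc, inc_tr_mul]
  simp

/-- Block embedding of special linear groups. -/
def emb (f : α ↪ β) : SpecialLinearGroup α R →* SpecialLinearGroup β R where
  toFun A := ⟨embM f A.1, by rw [embM_det]; exact A.2⟩
  map_one' := by ext i j; simp [embM]
  map_mul' A B := by
    apply Subtype.ext
    exact embM_mul f A.1 B.1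

theorem emb_coe (f : α ↪ β) (A : SpecialLinearGroup α R) : (emb f A).1 = embM f A.1 := rfl

theorem inc_trans (f : α ↪ β) (g : β ↪ γ) : inc R (f.trans g) = inc R g * inc R f := by
  ext i j
  simp [inc, Matrix.mul_apply]

theorem emb_emb (f : α ↪ β) (g : β ↪ γ) (A : SpecialLinearGroup α R) :
    emb g (emb f A) = emb (f.trans g) A := by
  apply Subtype.ext
  simp only [emb_coe, embM, inc_trans, Matrix.transpose_mul]
  simp [Matrix.mul_assoc]

theorem emb_el (f : α ↪ β) {i j : α} (h : i ≠ j) (t : R) :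
    emb f (el h t) = el (f.injective.ne h) t := by
  apply Subtype.ext
  rw [emb_coe, val_el, val_el]
  simp only [embM, Matrix.transvection]
  ext a b
  simp only [inc, add_sub_cancel_left, Matrix.add_apply, Matrix.mul_apply, Matrix.single_apply,
    Matrix.of_apply, Matrix.transpose_apply]
  congr 1
  rw [Finset.sum_eq_single j, Finset.sum_eq_single i]
  · by_cases h1 : a = f i <;> by_cases h2 : b = f j <;> simp [h1, h2, eq_comm]
  · intro k _ hk; simp [hk.symm]
  · simp
  · intro k _ hk; 
    have : ∀ x, ¬ (i = x ∧ j = k) := fun x hx => hk hx.2.symm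
    simp [this]
  · simp

/-- Elementary matrices. -/
def El (α R : Type*) [Fintype α] [DecidableEq α] [CommRing R] : Set (SpecialLinearGroup α R) :=
  {g | g = 1 ∨ ∃ (i j : α) (h : i ≠ j) (t : R), g = el h t}

theorem one_mem_El : (1 : SpecialLinearGroup α R) ∈ El α R := Or.inl rfl

theorem el_mem_El {i j : α} (h : i ≠ j) (t : R) : el h t ∈ El α R := Or.inr ⟨i, j, h, t, rfl⟩

theorem El_mono {m n : ℕ} (h : m ≤ n) {g : SpecialLinearGroup α R} (hg : g ∈ El α R ^ m) :
    g ∈ El α R ^ n := Set.pow_subset_pow_right one_mem_El h hg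

theorem El_mul {m n : ℕ} {g h : SpecialLinearGroup α R} (hg : g ∈ El α R ^ m)
    (hh : h ∈ El α R ^ n) : g * h ∈ El α R ^ (m + n) := by
  rw [pow_add]; exact Set.mul_mem_mul hg hh

theorem el_mem {i j : α} (h : i ≠ j) (t : R) : el h t ∈ El α R ^ 1 := by
  rw [pow_one]; exact el_mem_El h t

theorem El_inv_mem {g : SpecialLinearGroup α R} (hg : g ∈ El α R) : g⁻¹ ∈ El α R := by
  rcases hg with rfl | ⟨i, j, h, t, rfl⟩
  · simpa using one_mem_El
  · rw [SpecialLinearGroup.transvection_inv]; exact el_mem_El h _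

theorem El_inv {m : ℕ} {g : SpecialLinearGroup α R} (hg : g ∈ El α R ^ m) :
    g⁻¹ ∈ El α R ^ m := by
  induction m generalizing g with
  | zero => simp at hg ⊢; exact hg
  | succ m ih =>
    rw [pow_succ] at hg
    obtain ⟨a, ha, b, hb, rfl⟩ := hg
    rw [_root_.mul_inv_rev, pow_succ']
    exact Set.mul_mem_mul (El_inv_mem hb) (ih ha)

theorem El_emb (f : α ↪ β) {m : ℕ} {g : SpecialLinearGroup α R} (hg : g ∈ El α R ^ m) :
    emb f g ∈ El β R ^ m := by
  induction m generalizing g with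
  | zero => simp at hg ⊢; simp [hg]
  | succ m ih =>
    rw [pow_succ] at hg ⊢
    obtain ⟨a, ha, b, hb, rfl⟩ := hg
    rw [map_mul]
    refine Set.mul_mem_mul (ih ha) ?_
    rcases hb with rfl | ⟨i, j, h, t, rfl⟩
    · simpa using one_mem_El
    · rw [emb_el]; exact el_mem_El _ _

/-- The elementary subgroup. -/
def EG (α R : Type*) [Fintype α] [DecidableEq α] [CommRing R] :
    Subgroup (SpecialLinearGroup α R) := Subgroup.closure (El α R)

theorem El_pow_sub {m : ℕ} {g : SpecialLinearGroup α R} (hg : g ∈ El α R ^ m) : g ∈ EG α R := by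
  induction m generalizing g with
  | zero => simp at hg; rw [hg]; exact one_mem _
  | succ m ih =>
    rw [pow_succ] at hg
    obtain ⟨a, ha, b, hb, rfl⟩ := hg
    exact mul_mem (ih ha) (Subgroup.subset_closure hb)

/-! Column and row operations. -/

theorem opC {k : ℕ} (v : Fin k → R) (s : Finset (Fin k)) :
    ∃ u ∈ El (Fin (k + 1)) R ^ s.card, ∀ A : Matrix (Fin (k + 1)) (Fin (k + 1)) R,
      (∀ i, (A * u.1) i (Fin.last k) = A i (Fin.last k) + ∑ j ∈ s, A i j.castSucc * v j) ∧
      ∀ i (j : Fin k), (A * u.1) i j.castSucc = A i j.castSucc := by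
  classical
  induction s using Finset.induction_on with
  | empty => exact ⟨1, by simp, fun A => by simp⟩
  | insert a s ha ih =>
    obtain ⟨u, hu, h⟩ := ih
    have hne : a.castSucc ≠ Fin.last k := Fin.castSucc_ne_last a
    refine ⟨u * el hne (v a), ?_, fun A => ⟨fun i => ?_, fun i j => ?_⟩⟩
    · rw [Finset.card_insert_of_notMem ha]; exact El_mul hu (el_mem _ _)
    · have e : A * (u * el hne (v a)).1 = (A * u.1) * Matrix.transvection a.castSucc (Fin.last k) (v a) := by
        rw [Matrix.mul_assoc]; rfl
      rw [e, Matrix.mul_transvection_apply_same, (h A).1, (h A).2, Finset.sum_insert ha]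
      ring
    · have e : A * (u * el hne (v a)).1 = (A * u.1) * Matrix.transvection a.castSucc (Fin.last k) (v a) := by
        rw [Matrix.mul_assoc]; rfl
      rw [e, Matrix.mul_transvection_apply_of_ne _ _ _ _ (Fin.castSucc_ne_last j), (h A).2]

theorem opR {k : ℕ} (v : Fin k → R) (s : Finset (Fin k)) :
    ∃ u ∈ El (Fin (k + 1)) R ^ s.card, ∀ A : Matrix (Fin (k + 1)) (Fin (k + 1)) R,
      (∀ i, (A * u.1) i (Fin.last k) = A i (Fin.last k)) ∧
      ∀ i (j : Fin k), (A * u.1) i j.castSucc = A i j.castSucc +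
        if j ∈ s then A i (Fin.last k) * v j else 0 := by
  classical
  induction s using Finset.induction_on with
  | empty => exact ⟨1, by simp, fun A => by simp⟩
  | insert a s ha ih =>
    obtain ⟨u, hu, h⟩ := ih
    have hne : Fin.last k ≠ a.castSucc := (Fin.castSucc_ne_last a).symm
    have e : ∀ A : Matrix (Fin (k + 1)) (Fin (k + 1)) R, A * (u * el hne (v a)).1 = (A * u.1) * Matrix.transvection (Fin.last k) a.castSucc (v a) := by
        intro A; rw [Matrix.mul_assoc]; rfl
    refine ⟨u * el hne (v a), ?_, fun A => ⟨fun i => ?_, fun i j => ?_⟩⟩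
    · rw [Finset.card_insert_of_notMem ha]; exact El_mul hu (el_mem _ _)
    · rw [e, Matrix.mul_transvection_apply_of_ne _ _ _ _ hne, (h A).1]
    · by_cases hj : j = a
      · subst hj
        rw [e, Matrix.mul_transvection_apply_same, (h A).1, (h A).2]
        simp [ha, mul_comm]
      · rw [e, Matrix.mul_transvection_apply_of_ne _ _ _ _ (by simpa using hj), (h A).2]
        simp [hj]

theorem opL {k : ℕ} (v : Fin k → R) (s : Finset (Fin k)) :
    ∃ u ∈ El (Fin (k + 1)) R ^ s.card, ∀ A : Matrix (Fin (k + 1)) (Fin (k + 1)) R,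
      (∀ i, (u.1 * A) (Fin.last k) i = A (Fin.last k) i) ∧
      ∀ i (j : Fin k), (u.1 * A) j.castSucc i = A j.castSucc i +
        if j ∈ s then v j * A (Fin.last k) i else 0 := by
  classical
  induction s using Finset.induction_on with
  | empty => exact ⟨1, by simp, fun A => by simp⟩
  | insert a s ha ih =>
    obtain ⟨u, hu, h⟩ := ih
    have hne : a.castSucc ≠ Fin.last k := (Fin.castSucc_ne_last a)
    have e : ∀ A : Matrix (Fin (k + 1)) (Fin (k + 1)) R, (el hne (v a) * u).1 * A = Matrix.transvection a.castSucc (Fin.last k) (v a) * (u.1 * A) := by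
        intro A; rw [← Matrix.mul_assoc]; rfl
    refine ⟨el hne (v a) * u, ?_, fun A => ⟨fun i => ?_, fun i j => ?_⟩⟩
    · rw [Finset.card_insert_of_notMem ha, add_comm s.card]; exact El_mul (el_mem _ _) hu
    · rw [e, Matrix.transvection_mul_apply_of_ne _ _ _ _ hne.symm, (h A).1]
    · by_cases hj : j = a
      · subst hj
        rw [e, Matrix.transvection_mul_apply_same, (h A).1, (h A).2]
        simp [ha]
      · rw [e, Matrix.transvection_mul_apply_of_ne _ _ _ _ (by simpa using hj), (h A).2]
        simp [hj]

theorem stable_range [IsDomain R] (hfin : ∀ a : R, a ≠ 0 → Finite (R ⧸ Ideal.span {a}))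
    {k : ℕ} (hk : 2 ≤ k) (a : Fin k → R) (c : R) (r : Fin k → R) (r0 : R)
    (h : ∑ j, r j * a j + r0 * c = 1) :
    ∃ v r' : Fin k → R, ∑ j, r' j * (a j + c * v j) = 1 := by
  classical
  by_cases hc : c = 0
  · exact ⟨0, r, by simpa [hc] using h⟩
  let i0 : Fin k := ⟨0, by omega⟩
  let i1 : Fin k := ⟨1, by omega⟩
  have h01 : i0 ≠ i1 := by simp [i0, i1]
  obtain ⟨v0, hv0⟩ : ∃ v0 : R, a i0 + c * v0 ≠ 0 := by
    by_cases h0 : a i0 = 0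
    · exact ⟨1, by simpa [h0] using hc⟩
    · exact ⟨0, by simpa using h0⟩
  have := hfin _ hv0
  obtain ⟨m, p, hp, hmp⟩ : ∃ m p : ℕ, 0 < p ∧ (a i0 + c * v0) ∣ a i1 ^ m * (1 - a i1 ^ p) := by
    obtain ⟨m, n, hmn, he⟩ := Finite.exists_ne_map_eq_of_infinite
      (fun m : ℕ => (Ideal.Quotient.mk (Ideal.span {a i0 + c * v0}) (a i1)) ^ m)
    wlog hlt : m < n generalizing m n
    · exact this n m hmn.symm he.symm (by omega)
    refine ⟨m, n - m, by omega, ?_⟩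
    rw [← Ideal.mem_span_singleton, ← Ideal.Quotient.eq_zero_iff_mem]
    simp only [map_mul, map_sub, map_pow, map_one] at he ⊢
    rw [mul_sub, mul_one, ← pow_add, Nat.add_sub_cancel' hlt.le, he, sub_self]
  let v : Fin k → R := fun j => if j = i0 then v0 else if j = i1 then 1 - a i1 ^ p else 0
  have e0 : v i0 = v0 := by simp [v]
  have e1 : v i1 = 1 - a i1 ^ p := by simp [v, h01.symm]
  have hI : Ideal.span (Set.range fun j => a j + c * v j) = ⊤ := by
    by_contra hne
    obtain ⟨P, hP, hle⟩ := Ideal.exists_le_maximal _ hne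
    have hPp := hP.isPrime
    have hmem : ∀ j, a j + c * v j ∈ P := fun j => hle (Ideal.subset_span ⟨j, rfl⟩)
    have hcP : c ∉ P := by
      intro hcP
      have ha : ∀ j, a j ∈ P := fun j => by
        have := P.sub_mem (hmem j) (P.mul_mem_right (v j) hcP)
        simpa using this
      apply hPp.ne_top
      rw [Ideal.eq_top_iff_one, ← h]
      exact P.add_mem (P.sum_mem fun j _ => P.mul_mem_left _ (ha j)) (P.mul_mem_left _ hcP)
    have h1 := hmem i1
    rw [e1] at h1
    by_cases ha1 : a i1 ∈ P
    · have h2 := P.sub_mem h1 ha1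
      have h3 : c * a i1 ^ p ∈ P := P.mul_mem_left _ (P.pow_mem_of_mem ha1 p hp)
      have h4 := P.add_mem h2 h3
      apply hcP
      convert h4 using 1
      ring
    · have h2 := hmem i0
      rw [e0] at h2
      have h3 : a i1 ^ m * (1 - a i1 ^ p) ∈ P := P.mem_of_dvd hmp h2
      rcases hPp.mem_or_mem h3 with h4 | h4
      · exact ha1 (hPp.mem_of_pow_mem _ h4)
      · have h5 := P.sub_mem h1 (P.mul_mem_left c h4)
        apply ha1
        simpa using h5
  have h1 : (1 : R) ∈ Ideal.span (Set.range fun j => a j + c * v j) := by rw [hI]; trivial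
  rw [Ideal.mem_span_range_iff_exists_fun] at h1
  obtain ⟨r', hr'⟩ := h1
  exact ⟨v, r', hr'⟩

theorem exists_emb {k : ℕ} (A : SpecialLinearGroup (Fin (k + 1)) R)
    (h1 : ∀ j : Fin k, A.1 (Fin.last k) j.castSucc = 0)
    (h2 : ∀ j : Fin k, A.1 j.castSucc (Fin.last k) = 0)
    (h3 : A.1 (Fin.last k) (Fin.last k) = 1) :
    ∃ B : SpecialLinearGroup (Fin k) R, A = emb Fin.castSuccEmb B := by
  have key : A.1 = embM Fin.castSuccEmb (A.1.submatrix Fin.castSucc Fin.castSucc) := by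
    ext i j
    refine Fin.lastCases ?_ (fun i => ?_) i
    · rw [embM_apply_left _ _ _ _ (fun a => (Fin.castSucc_ne_last a).symm)]
      refine Fin.lastCases ?_ (fun j => ?_) j
      · simp [h3]
      · simp [h1, Matrix.one_apply, (Fin.castSucc_ne_last j).symm]
    · refine Fin.lastCases ?_ (fun j => ?_) j
      · rw [embM_apply_right _ _ _ _ (fun a => (Fin.castSucc_ne_last a).symm)]
        simp [h2, Matrix.one_apply, (Fin.castSucc_ne_last i)]
      · have := embM_apply Fin.castSuccEmb (A.1.submatrix Fin.castSucc Fin.castSucc) i j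
        simp only [Fin.coe_castSuccEmb] at this
        rw [this]; rfl
  refine ⟨⟨A.1.submatrix Fin.castSucc Fin.castSucc, ?_⟩, Subtype.ext key⟩
  rw [← embM_det Fin.castSuccEmb, ← key]; exact A.2

theorem red_step [IsDomain R] (hfin : ∀ a : R, a ≠ 0 → Finite (R ⧸ Ideal.span {a}))
    {k : ℕ} (hk : 2 ≤ k) (g : SpecialLinearGroup (Fin (k + 1)) R) :
    ∃ e ∈ El (Fin (k + 1)) R ^ (3 * k), ∃ e' ∈ El (Fin (k + 1)) R ^ (3 * k),
      ∃ B : SpecialLinearGroup (Fin k) R, g = e * emb Fin.castSuccEmb B * e' := by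
  have hcard : (Finset.univ : Finset (Fin k)).card = k := by simp
  have huni : ∑ j : Fin k, (g⁻¹).1 j.castSucc (Fin.last k) * g.1 (Fin.last k) j.castSucc
      + (g⁻¹).1 (Fin.last k) (Fin.last k) * g.1 (Fin.last k) (Fin.last k) = 1 := by
    have h : (g * g⁻¹).1 (Fin.last k) (Fin.last k) = 1 := by
      rw [mul_inv_cancel]; simp
    rw [val_mul, Matrix.mul_apply, Fin.sum_univ_castSucc] at h
    simp only [mul_comm] at h ⊢
    exact h
  obtain ⟨v, r, hr⟩ := stable_range hfin hk _ _ _ _ huni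
  obtain ⟨u1, hu1, h1⟩ := opR v Finset.univ
  set c := g.1 (Fin.last k) (Fin.last k)
  obtain ⟨u2, hu2, h2⟩ := opC (fun j => r j * (1 - c)) Finset.univ
  obtain ⟨u3, hu3, h3⟩ := opR (fun j => - (g.1 (Fin.last k) j.castSucc + c * v j)) Finset.univ
  rw [hcard] at hu1 hu2 hu3
  have a1 : ∀ j : Fin k, (g * u1 * u2 * u3).1 (Fin.last k) j.castSucc = 0 ∧
      (g * u1 * u2 * u3).1 (Fin.last k) (Fin.last k) = 1 := by
    have b1 : (g * u1 * u2).1 (Fin.last k) (Fin.last k) = 1 := by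
      rw [val_mul, (h2 _).1, val_mul, (h1 _).1]
      simp only [(h1 _).2, Finset.mem_univ, if_true]
      have : ∑ j, (g.1 (Fin.last k) j.castSucc + g.1 (Fin.last k) (Fin.last k) * v j) *
          (r j * (1 - c)) = 1 - c := by
        have := congrArg (· * (1 - c)) hr
        simp only [Finset.sum_mul, one_mul] at this
        refine Eq.trans (Finset.sum_congr rfl fun j _ => ?_) this
        simp only [c]; ring
      rw [this]; ring
    intro j
    constructor
    · rw [val_mul, (h3 _).2, b1, val_mul, (h2 _).2,
        val_mul, (h1 _).2]
      simp [c]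
    · rw [val_mul, (h3 _).1, b1]
  set A := g * u1 * u2 * u3 with hA
  have a2 : A.1 (Fin.last k) (Fin.last k) = 1 := (a1 ⟨0, by omega⟩).2
  obtain ⟨u4, hu4, h4⟩ := opL (fun j => - A.1 j.castSucc (Fin.last k)) Finset.univ
  rw [hcard] at hu4
  obtain ⟨B, hB⟩ := exists_emb (u4 * A)
    (fun j => by rw [val_mul, (h4 _).1]; exact (a1 j).1)
    (fun j => by rw [val_mul, (h4 _).2, a2]; simp)
    (by rw [val_mul, (h4 _).1]; exact a2)
  refine ⟨u4⁻¹, El_mono (by omega) (El_inv hu4), (u1 * u2 * u3)⁻¹,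
    El_mono (by omega) (El_inv (El_mul (El_mul hu1 hu2) hu3)), B, ?_⟩
  rw [← hB, hA]; group

theorem red [IsDomain R] (hfin : ∀ a : R, a ≠ 0 → Finite (R ⧸ Ideal.span {a}))
    (n : ℕ) (hn : 2 ≤ n) :
    ∃ N : ℕ, ∀ g : SpecialLinearGroup (Fin n) R, ∃ e ∈ El (Fin n) R ^ N,
      ∃ e' ∈ El (Fin n) R ^ N, ∃ M : SpecialLinearGroup (Fin 2) R,
        g = e * emb (Fin.castLEEmb hn) M * e' := by
  induction n, hn using Nat.le_induction with
  | base =>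
    refine ⟨0, fun g => ⟨1, by simp, 1, by simp, g, ?_⟩⟩
    apply Subtype.ext
    rw [one_mul, mul_one, emb_coe]
    ext i j
    exact (embM_apply (Fin.castLEEmb le_rfl) g.1 i j).symm
  | succ k hk ih =>
    obtain ⟨N, hN⟩ := ih
    refine ⟨3 * k + N, fun g => ?_⟩
    obtain ⟨e, he, e', he', B, hB⟩ := red_step hfin hk g
    obtain ⟨e1, he1, e1', he1', M, hM⟩ := hN B
    refine ⟨e * emb Fin.castSuccEmb e1, El_mul he (El_emb _ he1),
      emb Fin.castSuccEmb e1' * e', ?_, M, ?_⟩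
    · rw [add_comm (3 * k)]; exact El_mul (El_emb _ he1') he'
    · rw [hB, hM, map_mul, map_mul, emb_emb]
      simp only [mul_assoc]
      rfl

end Alg
end HypRig

namespace HypRig

open Filter Topology
open Pointwise

section Alg3

set_option linter.unusedSectionVars false
set_option linter.unusedSimpArgs false

open Matrix

variable {α β γ : Type*} [Fintype α] [DecidableEq α] [Fintype β] [DecidableEq β]
  [Fintype γ] [DecidableEq γ] {R : Type*} [CommRing R]

theorem n01 : (0 : Fin 3) ≠ 1 := by decide
theorem n02 : (0 : Fin 3) ≠ 2 := by decide
theorem n10 : (1 : Fin 3) ≠ 0 := by decide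
theorem n12 : (1 : Fin 3) ≠ 2 := by decide
theorem n20 : (2 : Fin 3) ≠ 0 := by decide
theorem n21 : (2 : Fin 3) ≠ 1 := by decide
theorem m01 : (0 : Fin 2) ≠ 1 := by decide
theorem m10 : (1 : Fin 2) ≠ 0 := by decide

theorem v01 (t : R) : (el n01 t).1 = !![1, t, 0; 0, 1, 0; 0, 0, 1] := by
  rw [val_el]; ext i j; fin_cases i <;> fin_cases j <;>
    simp [Matrix.transvection, Matrix.single_apply]
theorem v02 (t : R) : (el n02 t).1 = !![1, 0, t; 0, 1, 0; 0, 0, 1] := by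
  rw [val_el]; ext i j; fin_cases i <;> fin_cases j <;>
    simp [Matrix.transvection, Matrix.single_apply]
theorem v10 (t : R) : (el n10 t).1 = !![1, 0, 0; t, 1, 0; 0, 0, 1] := by
  rw [val_el]; ext i j; fin_cases i <;> fin_cases j <;>
    simp [Matrix.transvection, Matrix.single_apply]
theorem v12 (t : R) : (el n12 t).1 = !![1, 0, 0; 0, 1, t; 0, 0, 1] := by
  rw [val_el]; ext i j; fin_cases i <;> fin_cases j <;>
    simp [Matrix.transvection, Matrix.single_apply]
theorem v20 (t : R) : (el n20 t).1 = !![1, 0, 0; 0, 1, 0; t, 0, 1] := by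
  rw [val_el]; ext i j; fin_cases i <;> fin_cases j <;>
    simp [Matrix.transvection, Matrix.single_apply]
theorem v21 (t : R) : (el n21 t).1 = !![1, 0, 0; 0, 1, 0; 0, t, 1] := by
  rw [val_el]; ext i j; fin_cases i <;> fin_cases j <;>
    simp [Matrix.transvection, Matrix.single_apply]
theorem w01 (t : R) : (el m01 t).1 = !![1, t; 0, 1] := by
  rw [val_el]; ext i j; fin_cases i <;> fin_cases j <;>
    simp [Matrix.transvection, Matrix.single_apply]
theorem w10 (t : R) : (el m10 t).1 = !![1, 0; t, 1] := by
  rw [val_el]; ext i j; fin_cases i <;> fin_cases j <;>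
    simp [Matrix.transvection, Matrix.single_apply]

/-- The embedding into rows 0,1. -/
abbrev t01 (M : SpecialLinearGroup (Fin 2) R) : SpecialLinearGroup (Fin 3) R :=
  emb Fin.castSuccEmb M
/-- The embedding into rows 1,2. -/
abbrev t12 (M : SpecialLinearGroup (Fin 2) R) : SpecialLinearGroup (Fin 3) R :=
  emb (Fin.succEmb 2) M

theorem vt01 (M : SpecialLinearGroup (Fin 2) R) :
    (t01 M).1 = !![M.1 0 0, M.1 0 1, 0; M.1 1 0, M.1 1 1, 0; 0, 0, 1] := by
  rw [emb_coe]
  ext i j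
  fin_cases i <;> fin_cases j <;>
    simp [embM, inc, Matrix.mul_apply, Matrix.one_apply, Fin.sum_univ_two, Fin.ext_iff]

theorem vt12 (M : SpecialLinearGroup (Fin 2) R) :
    (t12 M).1 = !![1, 0, 0; 0, M.1 0 0, M.1 0 1; 0, M.1 1 0, M.1 1 1] := by
  rw [emb_coe]
  have h0 : ∀ a, (0 : Fin 3) ≠ Fin.succEmb 2 a := fun a => (Fin.succ_ne_zero a).symm
  ext i j
  fin_cases i <;> fin_cases j
  · exact (embM_apply_left _ _ _ _ h0).trans (Matrix.one_apply_eq _)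
  · exact (embM_apply_left _ _ _ _ h0).trans (by simp)
  · exact (embM_apply_left _ _ _ _ h0).trans (by simp)
  · exact (embM_apply_right _ _ _ _ h0).trans (by simp)
  · exact embM_apply (Fin.succEmb 2) M.1 0 0
  · exact embM_apply (Fin.succEmb 2) M.1 0 1
  · exact (embM_apply_right _ _ _ _ h0).trans (by simp)
  · exact embM_apply (Fin.succEmb 2) M.1 1 0
  · exact embM_apply (Fin.succEmb 2) M.1 1 1

theorem det2 (M : SpecialLinearGroup (Fin 2) R) :
    M.1 0 0 * M.1 1 1 - M.1 0 1 * M.1 1 0 = 1 := by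
  rw [← Matrix.det_fin_two]; exact M.2

/-- Build an element of SL2. -/
def mk2 (a b c d : R) (h : a * d - b * c = 1) : SpecialLinearGroup (Fin 2) R :=
  ⟨!![a, b; c, d], by rw [Matrix.det_fin_two]; simpa using h⟩

theorem vmk2 (a b c d : R) (h : a * d - b * c = 1) : (mk2 a b c d h).1 = !![a, b; c, d] := rfl

theorem J12_eq : (el n12 (-1) * el n21 1 * el n12 (-1) : SpecialLinearGroup (Fin 3) R).1
    = !![1, 0, 0; 0, 0, -1; 0, 1, 0] := by
  rw [val_mul, val_mul, v12, v21]
  ext i j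
  fin_cases i <;> fin_cases j <;> simp [Matrix.mul_apply, Fin.sum_univ_three]

theorem J01_eq : (el n01 (-1) * el n10 1 * el n01 (-1) : SpecialLinearGroup (Fin 3) R).1
    = !![0, -1, 0; 1, 0, 0; 0, 0, 1] := by
  rw [val_mul, val_mul, v01, v10]
  ext i j
  fin_cases i <;> fin_cases j <;> simp [Matrix.mul_apply, Fin.sum_univ_three]

theorem mennicke3 (M1 M2 : SpecialLinearGroup (Fin 2) R) (h : M1.1 0 0 = M2.1 0 0) :
    ∃ e ∈ El (Fin 3) R ^ 6, ∃ e' ∈ El (Fin 3) R ^ 6, ∃ M : SpecialLinearGroup (Fin 2) R,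
      M.1 0 0 = M1.1 0 0 ∧ M.1 0 1 = M1.1 0 1 * M2.1 0 1 ∧
      t01 M1 * t12 M2 = e * t01 M * e' := by
  have d1 := det2 M1
  have d2 := det2 M2
  let J : SpecialLinearGroup (Fin 3) R := el n12 (-1) * el n21 1 * el n12 (-1)
  have hJ : J ∈ El (Fin 3) R ^ 3 := El_mul (El_mul (el_mem _ _) (el_mem _ _)) (el_mem _ _)
  refine ⟨el n21 (M2.1 1 0) * J, El_mono (by norm_num) (El_mul (el_mem _ _) hJ),
    el n21 (- (M1.1 1 1 * M2.1 0 1)) * el n20 (- M1.1 1 0) * el n02 (- M1.1 0 1) * J⁻¹,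
    El_mul (El_mul (El_mul (el_mem _ _) (el_mem _ _)) (el_mem _ _)) (El_inv hJ),
    mk2 (M1.1 0 0) (M1.1 0 1 * M2.1 0 1) (- (M1.1 1 0 * M2.1 1 0))
      (M2.1 1 1 - M2.1 1 0 * M1.1 1 1 * M2.1 0 1) ?_, rfl, rfl, ?_⟩
  · linear_combination d2 - M2.1 0 1 * M2.1 1 0 * d1 + M2.1 1 1 * h
  · rw [← mul_assoc, eq_mul_inv_iff_mul_eq]
    apply Subtype.ext
    simp only [val_mul, J, v12, v21, v20, v02, vt01, vt12, vmk2]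
    rw [← h] at d2
    generalize M1.1 0 0 = a at *
    generalize M1.1 0 1 = b1 at *
    generalize M1.1 1 0 = c1 at *
    generalize M1.1 1 1 = e1 at *
    rw [← h]
    generalize M2.1 0 1 = b2 at *
    generalize M2.1 1 0 = c2 at *
    generalize M2.1 1 1 = e2 at *
    ext i j
    fin_cases i <;> fin_cases j <;> simp [Matrix.mul_apply, Fin.sum_univ_three]
    all_goals grind

theorem t12_conj (M : SpecialLinearGroup (Fin 2) R) :
    ∃ e ∈ El (Fin 3) R ^ 6, ∃ e' ∈ El (Fin 3) R ^ 6, t01 M = e * t12 M * e' := by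
  let J : SpecialLinearGroup (Fin 3) R := el n12 (-1) * el n21 1 * el n12 (-1)
  have hJ : J ∈ El (Fin 3) R ^ 3 := El_mul (El_mul (el_mem _ _) (el_mem _ _)) (el_mem _ _)
  let J' : SpecialLinearGroup (Fin 3) R := el n01 (-1) * el n10 1 * el n01 (-1)
  have hJ' : J' ∈ El (Fin 3) R ^ 3 := El_mul (El_mul (el_mem _ _) (el_mem _ _)) (el_mem _ _)
  refine ⟨(J' * J)⁻¹, El_inv (El_mul hJ' hJ), J' * J, El_mul hJ' hJ, ?_⟩
  rw [mul_assoc, eq_inv_mul_iff_mul_eq]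
  apply Subtype.ext
  simp only [val_mul, J, J', v12, v21, v01, v10, vt01, vt12]
  ext i j
  fin_cases i <;> fin_cases j <;> simp [Matrix.mul_apply, Fin.sum_univ_three]

theorem elem_unit (M : SpecialLinearGroup (Fin 2) R) (u c : R)
    (h : (M.1 0 1 + M.1 0 0 * c) * u = 1) : M ∈ El (Fin 2) R ^ 4 := by
  have d1 := det2 M
  have key : M = el m10 (M.1 1 0 + u * (1 - M.1 0 0) * (M.1 1 1 + M.1 1 0 * c)) *
      el m01 (M.1 0 1 + M.1 0 0 * c) * el m10 (- (u * (1 - M.1 0 0))) * el m01 (-c) := by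
    apply Subtype.ext
    simp only [val_mul, w01, w10]
    rw [Matrix.eta_fin_two M.1]
    generalize M.1 0 0 = a at *
    generalize M.1 0 1 = b at *
    generalize M.1 1 0 = d at *
    generalize M.1 1 1 = e at *
    simp only [Matrix.mul_fin_two]
    ext i j
    fin_cases i <;> fin_cases j <;> simp
    all_goals grind
  rw [key]
  exact El_mul (El_mul (El_mul (el_mem _ _) (el_mem _ _)) (el_mem _ _)) (el_mem _ _)

theorem same_b (M M' : SpecialLinearGroup (Fin 2) R) (c : R) (h : M'.1 0 0 = M.1 0 0)
    (h' : M'.1 0 1 = M.1 0 1 + M.1 0 0 * c) :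
    ∃ t : R, M' = el m10 t * M * el m01 c := by
  have d1 := det2 M
  have d2 := det2 M'
  refine ⟨M'.1 1 0 * M.1 1 1 - M'.1 1 1 * M.1 1 0 + M'.1 1 0 * M.1 1 0 * c, ?_⟩
  apply Subtype.ext
  simp only [val_mul, w01, w10]
  rw [Matrix.eta_fin_two M.1, Matrix.eta_fin_two M'.1, h, h']
  rw [h, h'] at d2
  generalize M.1 0 0 = a at *
  generalize M.1 0 1 = b at *
  generalize M.1 1 0 = d at *
  generalize M.1 1 1 = e at *
  generalize M'.1 1 0 = d' at *
  generalize M'.1 1 1 = e' at *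
  simp only [Matrix.mul_fin_two]
  ext i j
  fin_cases i <;> fin_cases j <;> simp
  all_goals grind

/-- Embedding from three distinct indices. -/
def tri {i j k : α} (hij : i ≠ j) (hik : i ≠ k) (hjk : j ≠ k) : Fin 3 ↪ α :=
  ⟨![i, j, k], by
    intro a b h
    fin_cases a <;> fin_cases b <;> simp_all⟩

theorem t01_conj_02 (M : SpecialLinearGroup (Fin 2) R) (t : R) :
    t01 M * el n02 t = el n02 (M.1 0 0 * t) * el n12 (M.1 1 0 * t) * t01 M := by
  apply Subtype.ext
  simp only [val_mul, v02, v12, vt01]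
  ext i j
  fin_cases i <;> fin_cases j <;> simp [Matrix.mul_apply, Fin.sum_univ_three]

theorem t01_conj_12 (M : SpecialLinearGroup (Fin 2) R) (t : R) :
    t01 M * el n12 t = el n02 (M.1 0 1 * t) * el n12 (M.1 1 1 * t) * t01 M := by
  apply Subtype.ext
  simp only [val_mul, v02, v12, vt01]
  ext i j
  fin_cases i <;> fin_cases j <;> simp [Matrix.mul_apply, Fin.sum_univ_three]

theorem t01_conj_20 (M : SpecialLinearGroup (Fin 2) R) (t : R) :
    t01 M * el n20 t = el n20 (t * M.1 1 1) * el n21 (-(t * M.1 0 1)) * t01 M := by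
  apply Subtype.ext
  simp only [val_mul, v20, v21, vt01]
  have := det2 M
  ext i j
  fin_cases i <;> fin_cases j <;> simp [Matrix.mul_apply, Fin.sum_univ_three]
  all_goals grind

theorem t01_conj_21 (M : SpecialLinearGroup (Fin 2) R) (t : R) :
    t01 M * el n21 t = el n20 (-(t * M.1 1 0)) * el n21 (t * M.1 0 0) * t01 M := by
  apply Subtype.ext
  simp only [val_mul, v20, v21, vt01]
  have := det2 M
  ext i j
  fin_cases i <;> fin_cases j <;> simp [Matrix.mul_apply, Fin.sum_univ_three]
  all_goals grind

theorem conj_aux (f : Fin 3 ↪ α) (M : SpecialLinearGroup (Fin 2) R)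
    (e e1 e2 : SpecialLinearGroup (Fin 3) R) (h1 : e1 ∈ El (Fin 3) R ^ 1)
    (h2 : e2 ∈ El (Fin 3) R ^ 1) (h : t01 M * e = e1 * e2 * t01 M) :
    emb (Fin.castSuccEmb.trans f) M * emb f e * (emb (Fin.castSuccEmb.trans f) M)⁻¹
      ∈ El α R ^ 2 := by
  have := congrArg (emb f) h
  rw [map_mul, map_mul _ (e1 * e2), emb_emb] at this
  rw [this, mul_inv_cancel_right]
  exact El_emb f (El_mul h1 h2)

theorem conjP (p : Fin 2 ↪ α) (M : SpecialLinearGroup (Fin 2) R) {k l : α} (h : k ≠ l) (t : R)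
    (hkl : ((∃ a, k = p a) ∧ ∀ a, l ≠ p a) ∨ ((∃ a, l = p a) ∧ ∀ a, k ≠ p a)) :
    emb p M * el h t * (emb p M)⁻¹ ∈ El α R ^ 2 := by
  have hp : p 0 ≠ p 1 := p.injective.ne m01
  rcases hkl with ⟨⟨a, rfl⟩, hl⟩ | ⟨⟨a, rfl⟩, hl⟩
  · let f := tri hp (hl 0).symm (hl 1).symm
    have hf : Fin.castSuccEmb.trans f = p := by
      ext a; fin_cases a <;> rfl
    fin_cases a
    · have := conj_aux f M _ _ _ (el_mem _ _) (el_mem _ _) (t01_conj_02 M t)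
      rw [hf, emb_el] at this; exact this
    · have := conj_aux f M _ _ _ (el_mem _ _) (el_mem _ _) (t01_conj_12 M t)
      rw [hf, emb_el] at this; exact this
  · let f := tri hp (hl 0).symm (hl 1).symm
    have hf : Fin.castSuccEmb.trans f = p := by
      ext a; fin_cases a <;> rfl
    fin_cases a
    · have := conj_aux f M _ _ _ (el_mem _ _) (el_mem _ _) (t01_conj_20 M t)
      rw [hf, emb_el] at this; exact this
    · have := conj_aux f M _ _ _ (el_mem _ _) (el_mem _ _) (t01_conj_21 M t)
      rw [hf, emb_el] at this; exact this

theorem comm3 (s t : R) : el n01 s * el n12 t = el n02 (s * t) * el n12 t * el n01 s := by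
  apply Subtype.ext
  simp only [val_mul, v02, v12, v01]
  ext i j
  fin_cases i <;> fin_cases j <;> simp [Matrix.mul_apply, Fin.sum_univ_three]

theorem comm_el {i j k : α} (hij : i ≠ j) (hik : i ≠ k) (hjk : j ≠ k) (s t : R) :
    el hij s * el hjk t = el hik (s * t) * el hjk t * el hij s := by
  have := congrArg (emb (tri hij hik hjk)) (comm3 s t)
  simp only [map_mul, emb_el] at this
  exact this

theorem idA1 {i j k : α} (hij : i ≠ j) (hik : i ≠ k) (hjk : j ≠ k) (t : R) :
    el hij t * el hik t = el hjk (-1) * el hij t * el hjk 1 := by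
  have h3 : el n01 t * el n02 t = el n12 (-1) * el n01 t * el n12 1 := by
    apply Subtype.ext
    simp only [val_mul, v02, v12, v01]
    ext i j
    fin_cases i <;> fin_cases j <;> simp [Matrix.mul_apply, Fin.sum_univ_three]
  have := congrArg (emb (tri hij hik hjk)) h3
  simp only [map_mul, emb_el] at this
  exact this

theorem idA2 {i j k : α} (hij : i ≠ j) (hik : i ≠ k) (hjk : j ≠ k) (t : R) :
    el hik t = el hjk.symm 1 * (el hij t * el hik t) * el hjk.symm (-1) := by
  have h3 : el n02 t = el n21 1 * (el n01 t * el n02 t) * el n21 (-1) := by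
    apply Subtype.ext
    simp only [val_mul, v02, v21, v01]
    ext i j
    fin_cases i <;> fin_cases j <;> simp [Matrix.mul_apply, Fin.sum_univ_three]
  have := congrArg (emb (tri hij hik hjk)) h3
  simp only [map_mul, emb_el] at this
  exact this

theorem idA3 {i j k : α} (hij : i ≠ j) (hik : i ≠ k) (hjk : j ≠ k) (t : R) :
    el hij t * el hjk.symm t = el hik.symm 1 * el hij t * el hik.symm (-1) := by
  have h3 : el n01 t * el n21 t = el n20 1 * el n01 t * el n20 (-1) := by
    apply Subtype.ext
    simp only [val_mul, v20, v21, v01]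
    ext i j
    fin_cases i <;> fin_cases j <;> simp [Matrix.mul_apply, Fin.sum_univ_three]
  have := congrArg (emb (tri hij hik hjk)) h3
  simp only [map_mul, emb_el] at this
  exact this

theorem idA4 {i j k : α} (hij : i ≠ j) (hik : i ≠ k) (hjk : j ≠ k) (t : R) :
    el hjk.symm t = el hik (-1) * (el hij t * el hjk.symm t) * el hik 1 := by
  have h3 : el n21 t = el n02 (-1) * (el n01 t * el n21 t) * el n02 1 := by
    apply Subtype.ext
    simp only [val_mul, v02, v21, v01]
    ext i j
    fin_cases i <;> fin_cases j <;> simp [Matrix.mul_apply, Fin.sum_univ_three]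
  have := congrArg (emb (tri hij hik hjk)) h3
  simp only [map_mul, emb_el] at this
  exact this

theorem el_add {i j : α} (h : i ≠ j) (s t : R) : el h s * el h t = el h (s + t) := by
  apply Subtype.ext
  rw [val_mul, val_el, val_el, val_el, Matrix.transvection_mul_transvection_same _ _ h]

theorem el_inv {i j : α} (h : i ≠ j) (t : R) : (el h t)⁻¹ = el h (-t) :=
  SpecialLinearGroup.transvection_inv h t

end Alg3
end HypRig

namespace HypRig

open Filter Topology
open Pointwise

section Alg4

set_option linter.unusedSectionVars false
set_option linter.unusedSimpArgs false

open Matrix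

variable {n : ℕ} (hn : 3 ≤ n) {R : Type*} [CommRing R]

/-- SL2 in the indices 0,1. -/
def th (M : SpecialLinearGroup (Fin 2) R) : SpecialLinearGroup (Fin n) R :=
  emb (Fin.castLEEmb (le_trans (by norm_num) hn)) M

/-- SL2 in the indices 1,2. -/
def th' (M : SpecialLinearGroup (Fin 2) R) : SpecialLinearGroup (Fin n) R :=
  emb (Fin.castLEEmb hn) (t12 M)

theorem th_eq (M : SpecialLinearGroup (Fin 2) R) :
    emb (Fin.castLEEmb hn) (t01 M) = th hn M := by
  rw [emb_emb]; rfl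

theorem mennicke_n (M1 M2 : SpecialLinearGroup (Fin 2) R) (h : M1.1 0 0 = M2.1 0 0) :
    ∃ e ∈ El (Fin n) R ^ 6, ∃ e' ∈ El (Fin n) R ^ 6, ∃ M : SpecialLinearGroup (Fin 2) R,
      M.1 0 0 = M1.1 0 0 ∧ M.1 0 1 = M1.1 0 1 * M2.1 0 1 ∧
      th hn M1 * th' hn M2 = e * th hn M * e' := by
  obtain ⟨e, he, e', he', M, h1, h2, h3⟩ := mennicke3 M1 M2 h
  refine ⟨_, El_emb (Fin.castLEEmb hn) he, _, El_emb (Fin.castLEEmb hn) he', M, h1, h2, ?_⟩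
  rw [← th_eq, ← th_eq, th', ← map_mul, h3, map_mul, map_mul]

theorem th'_eq (M : SpecialLinearGroup (Fin 2) R) :
    ∃ e ∈ El (Fin n) R ^ 6, ∃ e' ∈ El (Fin n) R ^ 6, th' hn M = e * th hn M * e' := by
  obtain ⟨e, he, e', he', h⟩ := t12_conj M
  refine ⟨_, El_inv (El_emb (Fin.castLEEmb hn) he), _, El_inv (El_emb (Fin.castLEEmb hn) he'), ?_⟩
  rw [← th_eq, h, map_mul, map_mul, th']
  group

theorem El_th {m : ℕ} {M : SpecialLinearGroup (Fin 2) R} (h : M ∈ El (Fin 2) R ^ m) :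
    th hn M ∈ El (Fin n) R ^ m := El_emb _ h

theorem th_conj (M : SpecialLinearGroup (Fin 2) R) {k l : Fin n} (h : k ≠ l) (t : R)
    (hkl : (k.1 < 2 ∧ 2 ≤ l.1) ∨ (l.1 < 2 ∧ 2 ≤ k.1)) :
    th hn M * el h t * (th hn M)⁻¹ ∈ El (Fin n) R ^ 2 := by
  apply conjP
  have key : ∀ k : Fin n, k.1 < 2 → ∃ a : Fin 2, k = Fin.castLEEmb (le_trans (by norm_num) hn) a :=
    fun k hk => ⟨⟨k.1, hk⟩, rfl⟩
  have key' : ∀ k : Fin n, 2 ≤ k.1 → ∀ a : Fin 2, k ≠ Fin.castLEEmb (le_trans (by norm_num) hn) a :=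
    fun k hk a ha => by
      have := congrArg Fin.val ha
      simp at this
      omega
  rcases hkl with ⟨h1, h2⟩ | ⟨h1, h2⟩
  · exact Or.inl ⟨key _ h1, key' _ h2⟩
  · exact Or.inr ⟨key _ h1, key' _ h2⟩

theorem el_mem_of {α : Type*} [Fintype α] [DecidableEq α] (H : Subgroup (SpecialLinearGroup α R))
    {i j k : α} (hij : i ≠ j) (hik : i ≠ k) (hjk : j ≠ k) (t : R)
    (h1 : ∀ t : R, el hij t ∈ H) (h2 : ∀ t : R, el hjk t ∈ H) : el hik t ∈ H := by
  have h := comm_el hij hik hjk t 1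
  rw [mul_one, mul_assoc] at h
  have : el hik t = el hij t * el hjk 1 * (el hjk 1 * el hij t)⁻¹ := by
    rw [h]; group
  rw [this]
  exact H.mul_mem (H.mul_mem (h1 _) (h2 _)) (H.inv_mem (H.mul_mem (h2 _) (h1 _)))

theorem EG_le {α : Type*} [Fintype α] [DecidableEq α] (H : Subgroup (SpecialLinearGroup α R))
    (h : ∀ (i j : α) (hij : i ≠ j) (t : R), el hij t ∈ H) : EG α R ≤ H := by
  unfold EG
  rw [Subgroup.closure_le]
  rintro g (rfl | ⟨i, j, hij, t, rfl⟩)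
  · exact one_mem _
  · exact h _ _ _ _

theorem EG_le_of_mixed (hn : 3 ≤ n) (H : Subgroup (SpecialLinearGroup (Fin n) R))
    (h : ∀ (k l : Fin n) (hkl : k ≠ l) (t : R),
      (k.1 < 2 ∧ 2 ≤ l.1) ∨ (l.1 < 2 ∧ 2 ≤ k.1) → el hkl t ∈ H) : EG (Fin n) R ≤ H := by
  apply EG_le
  intro k l hkl t
  by_cases hk : k.1 < 2 <;> by_cases hl : l.1 < 2
  · have h1 : k ≠ ⟨2, by omega⟩ := by intro e; rw [e] at hk; simp at hk
    have h2 : (⟨2, by omega⟩ : Fin n) ≠ l := by intro e; rw [← e] at hl; simp at hl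
    refine el_mem_of H h1 hkl h2 t (fun t => h _ _ _ _ ?_) (fun t => h _ _ _ _ ?_)
    · simp [hk]
    · simp [hl]
  · exact h _ _ _ _ (by omega)
  · exact h _ _ _ _ (by omega)
  · have h1 : k ≠ ⟨0, by omega⟩ := by intro e; rw [e] at hk; simp at hk
    have h2 : (⟨0, by omega⟩ : Fin n) ≠ l := by intro e; rw [← e] at hl; simp at hl
    refine el_mem_of H h1 hkl h2 t (fun t => h _ _ _ _ ?_) (fun t => h _ _ _ _ ?_)
    · right; simp; omega
    · left; simp; omega

theorem th_norm (M : SpecialLinearGroup (Fin 2) R) (e : SpecialLinearGroup (Fin n) R)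
    (he : e ∈ EG (Fin n) R) : th hn M * e * (th hn M)⁻¹ ∈ EG (Fin n) R := by
  have : EG (Fin n) R ≤ (EG (Fin n) R).comap (MulAut.conj (th hn M)).toMonoidHom := by
    apply EG_le_of_mixed hn
    intro k l hkl t h
    exact El_pow_sub (th_conj hn M hkl t h)
  exact this he

theorem EG_normal [IsDomain R] (hn : 3 ≤ n)
    (hfin : ∀ a : R, a ≠ 0 → Finite (R ⧸ Ideal.span {a})) :
    (EG (Fin n) R).Normal := by
  obtain ⟨N, hN⟩ := red hfin n (le_trans (by norm_num) hn)
  constructor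
  intro e he g
  obtain ⟨w, hw, w', hw', M, rfl⟩ := hN g
  have h1 := (EG (Fin n) R).mul_mem (El_pow_sub hw')
    ((EG (Fin n) R).mul_mem he ((EG (Fin n) R).inv_mem (El_pow_sub hw')))
  have h2 := th_norm hn M _ h1
  have h3 := (EG (Fin n) R).mul_mem (El_pow_sub hw)
    ((EG (Fin n) R).mul_mem h2 ((EG (Fin n) R).inv_mem (El_pow_sub hw)))
  convert h3 using 1
  simp only [th]
  group

theorem menn_seq [IsDomain R] (hfin : ∀ a : R, a ≠ 0 → Finite (R ⧸ Ideal.span {a}))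
    (M : SpecialLinearGroup (Fin 2) R) :
    ∃ (k : ℕ) (s : ℕ → SpecialLinearGroup (Fin 2) R), 0 < k ∧ s 0 ∈ El (Fin 2) R ^ 4 ∧
      s k ∈ El (Fin 2) R ^ 4 ∧ ∀ j, ∃ e ∈ El (Fin n) R ^ 12, ∃ w ∈ El (Fin n) R ^ 12,
      ∃ e' ∈ El (Fin n) R ^ 12,
        th hn (s (j + 1)) = e * th hn (s j) * w * th hn M * e' := by
  have hd := det2 M
  obtain ⟨k, hk, hk'⟩ : ∃ k : ℕ, 0 < k ∧ ∃ c u, (M.1 0 1 ^ k + M.1 0 0 * c) * u = 1 := by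
    by_cases ha : M.1 0 0 = 0
    · refine ⟨1, one_pos, 0, - M.1 1 0, ?_⟩
      rw [ha] at hd ⊢
      linear_combination hd
    · have := hfin _ ha
      let π := Ideal.Quotient.mk (Ideal.span {M.1 0 0})
      have hu : IsUnit (π (M.1 0 1)) := by
        rw [isUnit_iff_exists_inv]
        refine ⟨π (- M.1 1 0), ?_⟩
        rw [← map_mul, ← map_one π, Ideal.Quotient.mk_eq_mk_iff_sub_mem, Ideal.mem_span_singleton]
        exact ⟨- M.1 1 1, by linear_combination hd⟩
      obtain ⟨v, hv⟩ := hu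
      obtain ⟨k, hk, hk'⟩ := isOfFinOrder_iff_pow_eq_one.1 (isOfFinOrder_of_finite v)
      have h1 : π (M.1 0 1 ^ k) = π 1 := by
        rw [map_pow, ← hv, ← Units.val_pow_eq_pow_val, hk', map_one]; rfl
      rw [Ideal.Quotient.mk_eq_mk_iff_sub_mem, Ideal.mem_span_singleton] at h1
      obtain ⟨c, hc⟩ := h1
      exact ⟨k, hk, -c, 1, by linear_combination hc⟩
  have hstep : ∀ M1 : {M1 : SpecialLinearGroup (Fin 2) R // M1.1 0 0 = M.1 0 0},
      ∃ M2 : {M2 : SpecialLinearGroup (Fin 2) R // M2.1 0 0 = M.1 0 0},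
        M2.1.1 0 1 = M1.1.1 0 1 * M.1 0 1 ∧ ∃ e ∈ El (Fin n) R ^ 12, ∃ w ∈ El (Fin n) R ^ 12,
      ∃ e' ∈ El (Fin n) R ^ 12,
        th hn M2.1 = e * th hn M1.1 * w * th hn M * e' := by
    rintro ⟨M1, h1⟩
    obtain ⟨e, he, e', he', M2, h2, h3, h4⟩ := mennicke_n hn M1 M h1
    obtain ⟨f, hf, f', hf', h5⟩ := th'_eq hn M
    refine ⟨⟨M2, h2.trans h1⟩, h3, e⁻¹, El_mono (by norm_num) (El_inv he), f,
      El_mono (by norm_num) hf, f' * e'⁻¹, El_mul hf' (El_inv he'), ?_⟩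
    rw [h5] at h4
    have : th hn M2 = e⁻¹ * (e * th hn M2 * e') * e'⁻¹ := by group
    rw [this, ← h4]; group
  choose F hF1 hF2 using hstep
  let s : ℕ → {M1 : SpecialLinearGroup (Fin 2) R // M1.1 0 0 = M.1 0 0} := fun j =>
    Nat.rec ⟨mk2 (M.1 0 0) 1 (-1) 0 (by ring), rfl⟩ (fun _ S => F S) j
  have hs : ∀ j, (s j).1.1 0 1 = M.1 0 1 ^ j := by
    intro j
    induction j with
    | zero => rw [pow_zero]; rfl
    | succ j ih => rw [pow_succ, ← ih]; exact hF1 (s j)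
  refine ⟨k, fun j => (s j).1, hk, ?_, ?_, fun j => hF2 (s j)⟩
  · apply elem_unit _ 1 0
    rw [hs]; simp
  · obtain ⟨c, u, hc⟩ := hk'
    apply elem_unit _ u c
    rw [hs, (s k).2]; exact hc

theorem pow_mem_EG [IsDomain R] (hfin : ∀ a : R, a ≠ 0 → Finite (R ⧸ Ideal.span {a}))
    (hn : 3 ≤ n) (g : SpecialLinearGroup (Fin n) R) : ∃ k : ℕ, 0 < k ∧ g ^ k ∈ EG (Fin n) R := by
  obtain ⟨N, hN⟩ := red hfin n (le_trans (by norm_num) hn)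
  have := EG_normal hn hfin
  obtain ⟨w, hw, w', hw', M, rfl⟩ := hN g
  obtain ⟨k, s, hk, h0, h1, h2⟩ := menn_seq hn hfin M
  refine ⟨k, hk, ?_⟩
  let π := QuotientGroup.mk' (EG (Fin n) R)
  have hπ : ∀ {m : ℕ} {e}, e ∈ El (Fin n) R ^ m → π e = 1 := fun he =>
    (QuotientGroup.eq_one_iff _).2 (El_pow_sub he)
  have h3 : ∀ j, π (th hn (s j)) = π (th hn M) ^ j := by
    intro j
    induction j with
    | zero => rw [pow_zero]; exact hπ (El_th hn h0)
    | succ j ih =>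
      obtain ⟨e, he, v, hv, e', he', h⟩ := h2 j
      rw [h]
      simp only [map_mul, hπ he, hπ hv, hπ he', ih]
      rw [one_mul, mul_one, mul_one, pow_succ]
  have h4 := h3 k
  rw [hπ (El_th hn h1)] at h4
  rw [← QuotientGroup.eq_one_iff]
  change π _ = 1
  simp only [map_pow, map_mul, hπ hw, hπ hw']
  rw [one_mul, mul_one]
  exact h4.symm

end Alg4
end HypRig

namespace HypRig

open Filter Topology
open Pointwise

section Fin

set_option linter.unusedSectionVars false
set_option linter.unusedSimpArgs false

open Matrix

variable {n : ℕ} {R : Type*} [CommRing R] {X : Type*} [MetricSpace X]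

theorem eqv_step {G : Type*} [Group G] (ρ : G →* (X ≃ᵢ X)) (x : X) (p q : ℕ → G) (C : ℝ)
    (hp : Tendsto (fun m => dist x (ρ (p m) x)) atTop atTop)
    (h : ∀ m, len ρ x ((p m)⁻¹ * q m) ≤ len ρ x (q m) + C) :
    Eqv x (fun m => ρ (p m) x) (fun m => ρ (q m) x) := by
  unfold Eqv gp
  refine tendsto_atTop_mono (fun m => ?_) (tendsto_atTop_add_const_right _ (-C) hp)
  rw [dist_smul]
  have := h m
  unfold len at *
  linarith

theorem len_El_le {α : Type*} [Fintype α] [DecidableEq α]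
    (ρ : SpecialLinearGroup α R →* (X ≃ᵢ X)) (x : X) (D : ℝ)
    (hD : ∀ (i j : α) (h : i ≠ j) (t : R), len ρ x (el h t) ≤ D) (hD0 : 0 ≤ D) {m : ℕ}
    {w : SpecialLinearGroup α R} (hw : w ∈ El α R ^ m) : len ρ x w ≤ m * D := by
  induction m generalizing w with
  | zero => simp at hw; rw [hw, len_one]; simp
  | succ m ih =>
    rw [pow_succ] at hw
    obtain ⟨a, ha, b, hb, rfl⟩ := hw
    have h1 := ih ha
    have h2 : len ρ x b ≤ D := by
      rcases hb with rfl | ⟨i, j, h, t, rfl⟩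
      · rw [len_one]; exact hD0
      · exact hD _ _ _ _
    have := len_mul ρ x a b
    push_cast
    linarith

/-- The final step, once the elementary group fixes a point at infinity. -/
theorem final [IsDomain R] (hfin : ∀ a : R, a ≠ 0 → Finite (R ⧸ Ideal.span {a}))
    (hn : 3 ≤ n) {δ : ℝ} (hδ : 0 ≤ δ) (hX : Hyp X δ)
    (ρ : SpecialLinearGroup (Fin n) R →* (X ≃ᵢ X)) (x : X) (y : ℕ → X)
    (hy : Tendsto (fun m => dist x (y m)) atTop atTop)
    (hE : EG (Fin n) R ≤ stab hX ρ x y hy) (g : SpecialLinearGroup (Fin n) R) :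
    ∃ N : ℕ, 0 < N ∧ ∃ C : ℝ, ∀ j : ℕ,
      len ρ x (g ^ (N * j) * g ^ (N * j)) ≤ len ρ x (g ^ (N * j)) + C := by
  obtain ⟨β, hβ, hβ'⟩ := exists_qm hX ρ x y hy
  set c := 2 * δ with hc
  have hc0 : 0 ≤ c := by positivity
  have q : ∀ g, ∀ h ∈ EG (Fin n) R, |β (g * h) - β g - β h| ≤ c := fun g h hh => hβ g h (hE hh)
  have hel : ∀ (i j : Fin n) (h : i ≠ j) (t : R), |β (el h t)| ≤ 3 * c := by
    intro i k hik t
    obtain ⟨j, hj⟩ : ∃ j, j ∉ ({i, k} : Finset (Fin n)) := by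
      by_contra hcon
      push Not at hcon
      have h1 : (Finset.univ : Finset (Fin n)) ⊆ {i, k} := fun j _ => hcon j
      have h2 := Finset.card_le_card h1
      have h3 := Finset.card_le_two (a := i) (b := k)
      simp at h2
      omega
    simp only [Finset.mem_insert, Finset.mem_singleton, not_or] at hj
    have hij : i ≠ j := Ne.symm hj.1
    have hjk : j ≠ k := hj.2
    have h := comm_el hij hik hjk t 1
    rw [mul_one] at h
    have h1 := q (el hij t) (el hjk 1) (El_pow_sub (el_mem _ _))
    have h2 := q (el hik t * el hjk 1) (el hij t) (El_pow_sub (el_mem _ _))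
    have h3 := q (el hik t) (el hjk 1) (El_pow_sub (el_mem _ _))
    rw [h] at h1
    rw [abs_le] at *
    constructor <;> linarith [h1.1, h1.2, h2.1, h2.2, h3.1, h3.2]
  have hone : |β 1| ≤ c := by
    have := q 1 1 (one_mem _)
    rw [mul_one, sub_self, zero_sub, abs_neg] at this
    exact this
  have hEl : ∀ (m : ℕ) (w : SpecialLinearGroup (Fin n) R), w ∈ El (Fin n) R ^ m →
      |β w| ≤ 4 * c * (m + 1) := by
    intro m
    induction m with
    | zero => intro w hw; simp at hw; rw [hw]; simp; linarith
    | succ m ih =>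
      intro w hw
      rw [pow_succ] at hw
      obtain ⟨a, ha, b, hb, rfl⟩ := hw
      have h1 := ih a ha
      have h2 : |β b| ≤ 3 * c := by
        rcases hb with rfl | ⟨i, j, h, t, rfl⟩
        · linarith
        · exact hel _ _ _ _
      have h3 := q a b (Subgroup.subset_closure hb)
      push_cast
      rw [abs_le] at *
      constructor <;> linarith [h1.1, h1.2, h2.1, h2.2, h3.1, h3.2]
  -- SL2 elements in the elementary group
  have hth : ∀ M : SpecialLinearGroup (Fin 2) R, th hn M ∈ EG (Fin n) R →
      |β (th hn M)| ≤ 1000 * c := by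
    intro M hM
    obtain ⟨k, s, hk, h0, h1, h2⟩ := menn_seq hn hfin M
    have hs : ∀ j, th hn (s j) ∈ EG (Fin n) R := by
      intro j
      induction j with
      | zero => exact El_pow_sub (El_th hn h0)
      | succ j ih =>
        obtain ⟨e, he, v, hv, e', he', h⟩ := h2 j
        rw [h]
        exact mul_mem (mul_mem (mul_mem (mul_mem (El_pow_sub he) ih) (El_pow_sub hv)) hM)
          (El_pow_sub he')
    have hstep : ∀ j, |β (th hn (s (j + 1))) - β (th hn (s j)) - β (th hn M)| ≤ 200 * c := by
      intro j
      obtain ⟨e, he, v, hv, e', he', h⟩ := h2 j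
      have a1 := hEl _ _ he
      have a2 := hEl _ _ hv
      have a3 := hEl _ _ he'
      have b1 := q e (th hn (s j)) (hs j)
      have b2 := q (e * th hn (s j)) v (El_pow_sub hv)
      have b3 := q (e * th hn (s j) * v) (th hn M) hM
      have b4 := q (e * th hn (s j) * v * th hn M) e' (El_pow_sub he')
      rw [← h] at b4
      push_cast at a1 a2 a3
      rw [abs_le] at *
      constructor <;> linarith [a1.1, a1.2, a2.1, a2.2, a3.1, a3.2, b1.1, b1.2, b2.1, b2.2,
        b3.1, b3.2, b4.1, b4.2]
    have hsum : ∀ j : ℕ, |β (th hn (s j)) - β (th hn (s 0)) - j * β (th hn M)| ≤ j * (200 * c) := by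
      intro j
      induction j with
      | zero => simp
      | succ j ih =>
        have := hstep j
        push_cast
        rw [abs_le] at *
        constructor <;> linarith [ih.1, ih.2, this.1, this.2]
    have e1 := hsum k
    have e2 := hEl _ _ (El_th hn h0)
    have e3 := hEl _ _ (El_th hn h1)
    have hk1 : (1 : ℝ) ≤ k := by exact_mod_cast hk
    have hk0 : (0 : ℝ) < k := by linarith
    have e4 : k * |β (th hn M)| ≤ k * (1000 * c) := by
      rw [← abs_of_pos hk0, ← abs_mul, abs_of_pos hk0]
      have hkc : 1 * c ≤ k * c := mul_le_mul_of_nonneg_right hk1 hc0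
      push_cast at e2 e3
      rw [abs_le] at *
      constructor <;> linarith [e1.1, e1.2, e2.1, e2.2, e3.1, e3.2]
    exact le_of_mul_le_mul_left e4 hk0
  obtain ⟨N, hN⟩ := red hfin n (le_trans (by norm_num) hn)
  obtain ⟨k, hk, hgk⟩ := pow_mem_EG hfin hn g
  have hB : ∀ h ∈ EG (Fin n) R, |β h| ≤ 2 * (4 * c * (N + 1)) + 1000 * c + 2 * c := by
    intro h hh
    obtain ⟨e, he, e', he', M, rfl⟩ := hN h
    have hM : th hn M ∈ EG (Fin n) R := by
      have := mul_mem (mul_mem (inv_mem (El_pow_sub he)) hh) (inv_mem (El_pow_sub he'))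
      convert this using 1
      simp only [th]
      group
    have a1 := hEl _ _ he
    have a2 := hEl _ _ he'
    have a3 := hth M hM
    have b1 := q e (th hn M) hM
    have b2 := q (e * th hn M) e' (El_pow_sub he')
    change |β (e * th hn M * e')| ≤ _
    rw [abs_le] at *
    constructor <;> linarith [a1.1, a1.2, a2.1, a2.2, a3.1, a3.2, b1.1, b1.2, b2.1, b2.2]
  set B := 2 * (4 * c * (N + 1)) + 1000 * c + 2 * c
  refine ⟨k, hk, 2 * B + c, fun j => ?_⟩
  have hm : g ^ (k * j) ∈ EG (Fin n) R := by
    rw [pow_mul]; exact pow_mem hgk j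
  have := hβ' B (g ^ (k * j)) (hB _ (inv_mem hm)) (hB _ (inv_mem (mul_mem hm hm)))
  unfold len
  linarith

theorem caseA {α : Type*} [Fintype α] [DecidableEq α] (h3 : ∀ i j : α, ∃ k, k ≠ i ∧ k ≠ j)
    {δ : ℝ} (hX : Hyp X δ)
    (ρ : SpecialLinearGroup α R →* (X ≃ᵢ X)) (x : X) {i j : α} (hij : i ≠ j)
    (hU : ∀ D : ℝ, ∃ t : R, D ≤ len ρ x (el hij t)) :
    ∃ (y : ℕ → X) (hy : Tendsto (fun m => dist x (y m)) atTop atTop),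
      EG α R ≤ stab hX ρ x y hy := by
  choose τ hτ using fun m : ℕ => hU m
  have hy : Tendsto (fun m => dist x (ρ (el hij (τ m)) x)) atTop atTop :=
    tendsto_atTop_mono hτ tendsto_natCast_atTop_atTop
  refine ⟨fun m => ρ (el hij (τ m)) x, hy, ?_⟩
  set y : ℕ → X := fun m => ρ (el hij (τ m)) x with hydef
  let Good : ∀ k l : α, Prop := fun k l => ∃ (hkl : k ≠ l) (σ : ℕ → R),
    Eqv x (fun m => ρ (el hkl (σ m)) x) y
  have g0 : Good i j := ⟨hij, τ, Eqv.refl_of hy⟩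
  have gR : ∀ k l m, Good k l → m ≠ k → Good k m := by
    rintro k l m ⟨hkl, σ, hσ⟩ hm
    by_cases hlm : l = m
    · subst hlm; exact ⟨hkl, σ, hσ⟩
    refine ⟨hm.symm, fun r => - σ r, ?_⟩
    refine Eqv.trans hX (Eqv.symm (eqv_step ρ x (fun r => el hkl (σ r)) _
      (len ρ x (el (Ne.symm hlm) (1 : R)) + len ρ x (el (Ne.symm hlm) (-1 : R))) hσ.tendsto_left
      fun r => ?_)) hσ
    have h := idA2 hkl hm.symm hlm (- σ r)
    have e : (el hkl (σ r))⁻¹ * el hm.symm (- σ r) =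
        el (Ne.symm hlm) (-1 : R) * el hm.symm (- σ r) * el (Ne.symm hlm) (1 : R) := by
      rw [el_inv]
      conv_rhs => rw [h]
      have h1 : el (Ne.symm hlm) (-1 : R) = (el (Ne.symm hlm) (1 : R))⁻¹ := (el_inv _ _).symm
      rw [h1]; group
    rw [e]
    have a1 := len_mul ρ x (el (Ne.symm hlm) (-1 : R) * el hm.symm (- σ r)) (el (Ne.symm hlm) (1 : R))
    have a2 := len_mul ρ x (el (Ne.symm hlm) (-1 : R)) (el hm.symm (- σ r))
    linarith
  have gL : ∀ k l m, Good k l → m ≠ l → Good m l := by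
    rintro k l m ⟨hkl, σ, hσ⟩ hm
    by_cases hkm : k = m
    · subst hkm; exact ⟨hkl, σ, hσ⟩
    refine ⟨hm, fun r => - σ r, ?_⟩
    refine Eqv.trans hX (Eqv.symm (eqv_step ρ x (fun r => el hkl (σ r)) _
      (len ρ x (el hkm (1 : R)) + len ρ x (el hkm (-1 : R))) hσ.tendsto_left
      fun r => ?_)) hσ
    have h := idA4 hkl hkm hm.symm (- σ r)
    have e : (el hkl (σ r))⁻¹ * el hm (- σ r) =
        el hkm (1 : R) * el hm (- σ r) * el hkm (-1 : R) := by
      rw [el_inv]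
      conv_rhs => rw [h]
      have h1 : el hkm (-1 : R) = (el hkm (1 : R))⁻¹ := (el_inv _ _).symm
      rw [h1]; group
    rw [e]
    have a1 := len_mul ρ x (el hkm (1 : R) * el hm (- σ r)) (el hkm (-1 : R))
    have a2 := len_mul ρ x (el hkm (1 : R)) (el hm (- σ r))
    linarith
  apply EG_le
  intro k l hkl t
  obtain ⟨m, hmj, hml⟩ := h3 j l
  obtain ⟨hkl', σ, hσ⟩ := gL _ _ k (gR _ _ l (gL _ _ m g0 hmj) hml.symm) hkl
  refine mem_stab_of_eqv hX ρ x y _ hy _ hσ.symm (len ρ x (el hkl t)) fun r => le_of_eq ?_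
  have : ρ (el hkl t) (ρ (el hkl' (σ r)) x) = ρ (el hkl t * el hkl' (σ r)) x := by
    rw [map_mul]; rfl
  rw [this, dist_smul]
  congr 1
  rw [el_inv, el_add, el_add]
  congr 1; ring

theorem caseB (hn : 3 ≤ n) {δ : ℝ} (hX : Hyp X δ)
    (ρ : SpecialLinearGroup (Fin n) R →* (X ≃ᵢ X)) (x : X) (D : ℝ) (hD0 : 0 ≤ D)
    (hD : ∀ (i j : Fin n) (h : i ≠ j) (t : R), len ρ x (el h t) ≤ D)
    (hU : ∀ C : ℝ, ∃ M : SpecialLinearGroup (Fin 2) R, C ≤ len ρ x (th hn M)) :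
    ∃ (y : ℕ → X) (hy : Tendsto (fun m => dist x (y m)) atTop atTop),
      EG (Fin n) R ≤ stab hX ρ x y hy := by
  choose M hM using fun m : ℕ => hU m
  have hy : Tendsto (fun m => dist x (ρ (th hn (M m))⁻¹ x)) atTop atTop := by
    refine tendsto_atTop_mono (fun m => ?_) tendsto_natCast_atTop_atTop
    have := hM m
    rw [← len_inv] at this
    exact this
  refine ⟨fun m => ρ (th hn (M m))⁻¹ x, hy, ?_⟩
  apply EG_le_of_mixed hn
  intro k l hkl t hmix
  refine mem_stab_of_eqv hX ρ x _ _ hy _ (Eqv.refl_of hy) (2 * D) fun m => ?_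
  have : ρ (el hkl t) (ρ (th hn (M m))⁻¹ x) = ρ (el hkl t * (th hn (M m))⁻¹) x := by
    rw [map_mul]; rfl
  rw [this, dist_smul, inv_inv, ← mul_assoc]
  exact_mod_cast len_El_le ρ x D hD hD0 (th_conj hn (M m) hkl t hmix)

theorem main [IsDomain R] (hfin : ∀ a : R, a ≠ 0 → Finite (R ⧸ Ideal.span {a}))
    (hn : 3 ≤ n) {δ : ℝ} (hδ : 0 ≤ δ) (hX : Hyp X δ)
    (ρ : SpecialLinearGroup (Fin n) R →* (X ≃ᵢ X)) (x : X)
    (g : SpecialLinearGroup (Fin n) R) :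
    ∃ N : ℕ, 0 < N ∧ ∃ C : ℝ, ∀ j : ℕ,
      len ρ x (g ^ (N * j) * g ^ (N * j)) ≤ len ρ x (g ^ (N * j)) + C := by
  by_cases hA : ∃ (i j : Fin n) (h : i ≠ j), ∀ D : ℝ, ∃ t : R, D ≤ len ρ x (el h t)
  · obtain ⟨i, j, hij, hU⟩ := hA
    have h3 : ∀ i k : Fin n, ∃ j, j ≠ i ∧ j ≠ k := by
      intro i k
      by_contra hcon
      push Not at hcon
      have h1 : (Finset.univ : Finset (Fin n)) ⊆ {i, k} := fun j _ => by
        simp only [Finset.mem_insert, Finset.mem_singleton]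
        by_cases h : j = i
        · exact Or.inl h
        · exact Or.inr (hcon j h)
      have h2 := Finset.card_le_card h1
      have h3 := Finset.card_le_two (a := i) (b := k)
      simp at h2
      omega
    obtain ⟨y, hy, hE⟩ := caseA h3 hX ρ x hij hU
    exact final hfin hn hδ hX ρ x y hy hE g
  · push Not at hA
    choose D hD using hA
    obtain ⟨D', hD'⟩ := Set.Finite.bddAbove
      (Set.finite_range fun p : {p : Fin n × Fin n // p.1 ≠ p.2} => D p.1.1 p.1.2 p.2)
    have hD2 : ∀ (i j : Fin n) (h : i ≠ j) (t : R), len ρ x (el h t) ≤ max D' 0 := by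
      intro i j h t
      exact ((hD i j h t).le.trans (hD' ⟨⟨(i, j), h⟩, rfl⟩)).trans (le_max_left _ _)
    by_cases hU : ∀ C : ℝ, ∃ M : SpecialLinearGroup (Fin 2) R, C ≤ len ρ x (th hn M)
    · obtain ⟨y, hy, hE⟩ := caseB hn hX ρ x _ (le_max_right _ _) hD2 hU
      exact final hfin hn hδ hX ρ x y hy hE g
    · push Not at hU
      obtain ⟨C, hC⟩ := hU
      obtain ⟨N, hN⟩ := red hfin n (le_trans (by norm_num) hn)
      have hb : ∀ h, len ρ x h ≤ N * max D' 0 + C + N * max D' 0 := by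
        intro h
        obtain ⟨e, he, e', he', M, rfl⟩ := hN h
        have a1 := len_El_le ρ x _ hD2 (le_max_right _ _) he
        have a2 := len_El_le ρ x _ hD2 (le_max_right _ _) he'
        have a3 := (hC M).le
        have b1 := len_mul ρ x (e * th hn M) e'
        have b2 := len_mul ρ x e (th hn M)
        change len ρ x (e * th hn M * e') ≤ _
        linarith
      refine ⟨1, one_pos, N * max D' 0 + C + N * max D' 0, fun j => ?_⟩
      have := hb (g ^ (1 * j) * g ^ (1 * j))
      have h0 := len_nonneg ρ x (g ^ (1 * j))
      linarith

end Fin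
end HypRig


theorem sln_no_hyperbolic_elements
    (K : Type*) [Field K] [NumberField K]
    (n : ℕ) (hn : 3 ≤ n)
    (X : Type*) [MetricSpace X]
    -- `X` is geodesic
    (hgeo : ∀ x y : X, ∃ f : ℝ → X, f 0 = x ∧ f (dist x y) = y ∧
      ∀ s ∈ Set.Icc (0 : ℝ) (dist x y), ∀ t ∈ Set.Icc (0 : ℝ) (dist x y),
        dist (f s) (f t) = |s - t|)
    -- `X` is δ-hyperbolic (four-point condition)
    (δ : ℝ) (hδ : 0 ≤ δ)
    (hhyp : ∀ p₁ p₂ p₃ p₄ : X,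
      dist p₁ p₄ + dist p₂ p₃ ≤
        max (dist p₁ p₂ + dist p₃ p₄) (dist p₁ p₃ + dist p₂ p₄) + 2 * δ)
    -- an action of `SL(n, 𝓞 K)` on `X` by isometries
    (ρ : Matrix.SpecialLinearGroup (Fin n) (𝓞 K) →* (X ≃ᵢ X))
    (g : Matrix.SpecialLinearGroup (Fin n) (𝓞 K)) (x : X) :
    ¬ ∃ Kq Cq : ℝ, 1 ≤ Kq ∧ 0 ≤ Cq ∧
      ∀ k l : ℤ, dist k l / Kq - Cq ≤ dist (ρ (g ^ k) x) (ρ (g ^ l) x) ∧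
        dist (ρ (g ^ k) x) (ρ (g ^ l) x) ≤ Kq * dist k l + Cq := by
  have hX : HypRig.Hyp X δ := hhyp
  have hfin : ∀ a : 𝓞 K, a ≠ 0 → Finite (𝓞 K ⧸ Ideal.span {a}) := fun a ha =>
    Ideal.finiteQuotientOfFreeOfNeBot _ (by simpa using ha)
  obtain ⟨N, hN, C, hC⟩ := HypRig.main hfin hn hδ hX ρ x g
  exact HypRig.not_qi ρ x g N hN C hC
end
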